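/- Let G be a metabelian group with a finite presentation ⟨X | R⟩, and let k be the minimum, over all abelian normal subgroups A of G whose quotient G/A is abelian (such A exist, e.g. A = [G,G]), of the torsion-free rank of the finitely generated abelian group G/A. Then the Dehn function δ of this presentation satisfies: δ(n) ≼ n² if k = 0, and δ(n) ≼ 2^{n^{2k}} if k > 0. -/

import Mathlib

open Function

/-- The length of the reduced word representing an element of a free group. -/
noncomputable def freeNorm {X : Type*} (w : FreeGroup X) : ℕ :=
  letI := Classical.decEq X
  w.toWord.length

/-- `w` equals a product of exactly `N` conjugates of elements of `R ∪ R⁻¹`. -/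
def AreaIs {G : Type*} [Group G] (R : Set G) (w : G) (N : ℕ) : Prop :=
  ∃ r f : Fin N → G, (∀ i, r i ∈ R ∨ (r i)⁻¹ ∈ R) ∧
    w = (List.ofFn fun i => (f i)⁻¹ * r i * f i).prod

/-- The area of `w` with respect to the relators `R` is at most `N`. -/
def AreaLe {G : Type*} [Group G] (R : Set G) (w : G) (N : ℕ) : Prop :=
  ∃ N' ≤ N, AreaIs R w N'

/-- `f ≼ g` : there is `C > 0` with `f n ≤ C * g (C * n) + C * n + C` for all `n`. -/
def Dominates (f g : ℕ → ℕ) : Prop :=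
  ∃ C : ℕ, 0 < C ∧ ∀ n, f n ≤ C * g (C * n) + C * n + C

/-- `f ≈ g` : mutual domination. -/
def DehnEquiv (f g : ℕ → ℕ) : Prop := Dominates f g ∧ Dominates g f

/-- `δ` is the Dehn function of the presentation with relator set `R`. -/
def IsDehnFunctionOf {X : Type*} (R : Set (FreeGroup X)) (δ : ℕ → ℕ) : Prop :=
  ∀ n, IsLeast {N | ∀ w ∈ Subgroup.normalClosure R, freeNorm w ≤ n → AreaLe R w N} (δ n)

/-- A group is metabelian if its derived subgroup is abelian. -/
def IsMetabelian (G : Type*) [Group G] : Prop :=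
  ∀ a b : G, a ∈ commutator G → b ∈ commutator G → a * b = b * a

instance derivedSeriesNormalInst {G : Type*} [Group G] (n : ℕ) : (derivedSeries G n).Normal :=
  derivedSeries_normal G n

/-- The free metabelian group on `X`: the free group modulo its second derived subgroup. -/
abbrev FreeMetabelian (X : Type*) := FreeGroup X ⧸ derivedSeries (FreeGroup X) 2

/-- The word length of `w` in the free metabelian group is at most `n`. -/
def mNormLe {X : Type*} (w : FreeMetabelian X) (n : ℕ) : Prop :=
  ∃ v : FreeGroup X, QuotientGroup.mk' (derivedSeries (FreeGroup X) 2) v = w ∧ freeNorm v ≤ n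

/-- `δ` is the relative Dehn function (in the variety of metabelian groups) of the
relative presentation with relator set `R`. -/
def IsRelDehnFunctionOf {X : Type*} (R : Set (FreeMetabelian X)) (δ : ℕ → ℕ) : Prop :=
  ∀ n, IsLeast {N | ∀ w ∈ Subgroup.normalClosure R, mNormLe w n → AreaLe R w N} (δ n)

/-- The paper's commutator convention: `[x, y] = x⁻¹ * y⁻¹ * x * y`. -/
def pcomm {G : Type*} [Group G] (x y : G) : G := x⁻¹ * y⁻¹ * x * y

/-- A group has torsion-free rank `k` if it has a finite-index subgroup isomorphic to `ℤ^k`. -/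
def HasTFRank (Q : Type*) [Group Q] (k : ℕ) : Prop :=
  ∃ H : Subgroup Q, H.index ≠ 0 ∧ Nonempty (H ≃* Multiplicative (Fin k → ℤ))

/-- `G ⧸ A` is abelian and has torsion-free rank `j`. -/
def QuotientRankProp {G : Type*} [Group G] (A : Subgroup G) [A.Normal] (j : ℕ) : Prop :=
  (∀ x y : G ⧸ A, x * y = y * x) ∧ HasTFRank (G ⧸ A) j

/-- The set of torsion-free ranks of quotients `G ⧸ A` by abelian normal subgroups `A`
with `G ⧸ A` abelian. -/
def abelianRankSet (G : Type*) [Group G] : Set ℕ :=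
  {j | ∃ A : Subgroup G, ∃ h : A.Normal, (∀ x y : G, x ∈ A → y ∈ A → x * y = y * x) ∧
    @QuotientRankProp G _ A h j}

/-!
Write `π : F → Q` for the projection of the free group onto `Q = G/A`. The kernel of `π` is the
normal closure of a finite set `S`, and its elements commute modulo the relators. As `G` is
finitely presented, the module `A` is tame (Bieri–Strebel): for each direction `v` of `ℝ^X`, in
one of the directions `v` and `-v` every `s ∈ S` is, up to bounded area, a product of conjugates
of elements of `S` that have advanced along it. By compactness of the sphere the step is uniform,
so that commutators `[s, s'^f]` with `|f|` slightly greater than `r` reduce to boundedly many with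
`|f| ≤ r`, and by induction `[s, s'^f]` has area at most `C ^ (|f| + 1) ^ 2`.

A word of length `n` in `ker π` is a product of `O(n (d + 1))` conjugates of elements of a finite
set by monomials of degree at most `d` in `2k` letters, where `d = O(n)`, or `d = 0` if `k = 0`.
Words that represent the identity have exponents in a submodule of a free module over the integer
polynomials in `2k` variables, and reduction by a Gröbner basis expresses a relation of degree `d`
by the basis with coefficients of size `K ^ O((d + 1) ^ 2k)`. What remains are words with vanishing
exponents, trivial by commutation alone.
-/

/-! ### Products of bounded length and area -/

/-- `w` is a product of at most `n` factors from `Z ∪ Z⁻¹`: the word length of `w` with respect to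
`Z` is at most `n`. -/
def ProdLE {G : Type*} [Group G] (Z : Set G) (w : G) (n : ℕ) : Prop :=
  ∃ l : List G, l.length ≤ n ∧ (∀ a ∈ l, a ∈ Z ∨ a⁻¹ ∈ Z) ∧ l.prod = w

namespace ProdLE

variable {G H : Type*} [Group G] [Group H] {Z Z' : Set G} {v w : G} {m n : ℕ}

lemma one : ProdLE Z (1 : G) n := ⟨[], by simp⟩

lemma of_mem (h : w ∈ Z) : ProdLE Z w 1 := ⟨[w], by simp [h]⟩

lemma mono (h : ProdLE Z w m) (hmn : m ≤ n) : ProdLE Z w n := by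
  obtain ⟨l, hl, hZ, hw⟩ := h
  exact ⟨l, hl.trans hmn, hZ, hw⟩

lemma mul (hv : ProdLE Z v m) (hw : ProdLE Z w n) : ProdLE Z (v * w) (m + n) := by
  obtain ⟨k, hk, hkZ, rfl⟩ := hv
  obtain ⟨l, hl, hlZ, rfl⟩ := hw
  refine ⟨k ++ l, by simpa using Nat.add_le_add hk hl, fun a ha => ?_, List.prod_append⟩
  exact (List.mem_append.1 ha).elim (hkZ a) (hlZ a)

lemma inv (h : ProdLE Z w n) : ProdLE Z w⁻¹ n := by
  obtain ⟨l, hl, hZ, rfl⟩ := h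
  refine ⟨(l.map (·⁻¹)).reverse, by simpa using hl, fun a ha => ?_, (List.prod_inv_reverse l).symm⟩
  obtain ⟨b, hb, rfl⟩ := List.mem_map.1 (List.mem_reverse.1 ha)
  simpa using (hZ b hb).symm

lemma pow (h : w ∈ Z) (k : ℕ) : ProdLE Z (w ^ k) k :=
  ⟨List.replicate k w, by simp, fun a ha => by simp_all, by simp⟩

lemma zpow (h : w ∈ Z) (a : ℤ) : ProdLE Z (w ^ a) a.natAbs := by
  obtain ⟨k, rfl | rfl⟩ := a.eq_nat_or_neg
  · simpa using pow h k
  · simpa using (pow h k).inv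

lemma induction {p : G → ℕ → Prop} (h : ProdLE Z w n) (one : ∀ n, p 1 n)
    (mul : ∀ a w n, (a ∈ Z ∨ a⁻¹ ∈ Z) → p w n → p (a * w) (n + 1)) : p w n := by
  obtain ⟨l, hl, hZ, rfl⟩ := h
  induction l generalizing n with
  | nil => exact one n
  | cons a l ih =>
    obtain ⟨n, rfl⟩ := Nat.exists_eq_add_of_le' ((Nat.le_add_left 1 _).trans hl)
    rw [List.prod_cons]
    exact mul a _ n (hZ a (by simp)) <| ih (Nat.le_of_succ_le_succ hl) fun b hb =>
      hZ b (by simp [hb])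

lemma map_of_forall {Z' : Set H} (h : ProdLE Z w n) (φ : G →* H)
    (hφ : ∀ z ∈ Z, ProdLE Z' (φ z) m) : ProdLE Z' (φ w) (n * m) := by
  refine h.induction (p := fun w n => ProdLE Z' (φ w) (n * m)) (fun n => by simpa using one)
    fun a w n ha hw => ?_
  have ha' : ProdLE Z' (φ a) m :=
    ha.elim (hφ a) fun h => by simpa using (hφ _ h).inv
  rw [map_mul, Nat.succ_mul, add_comm]
  exact ha'.mul hw

lemma map {Z' : Set H} (h : ProdLE Z w n) (φ : G →* H) (hφ : ∀ z ∈ Z, φ z ∈ Z') :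
    ProdLE Z' (φ w) n := by
  simpa using h.map_of_forall φ fun z hz => of_mem (hφ z hz)

lemma mono_set (h : ProdLE Z w n) (hZ : Z ⊆ Z') : ProdLE Z' w n :=
  h.map (MonoidHom.id G) hZ

lemma mem_subgroup (h : ProdLE Z w n) {H : Subgroup G} (hZ : Z ⊆ H) : w ∈ H :=
  h.induction (p := fun w _ => w ∈ H) (fun _ => H.one_mem) fun _ _ _ ha hw =>
    H.mul_mem (ha.elim (fun h => hZ h) fun h => H.inv_mem_iff.1 (hZ h)) hw

lemma exists_of_mem_closure (h : w ∈ Subgroup.closure Z) : ∃ n, ProdLE Z w n := by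
  induction h using Subgroup.closure_induction with
  | mem x hx => exact ⟨1, of_mem hx⟩
  | one => exact ⟨0, one⟩
  | mul x y _ _ hx hy => exact ⟨_, hx.choose_spec.mul hy.choose_spec⟩
  | inv x _ hx => exact ⟨_, hx.choose_spec.inv⟩

end ProdLE

section Area

open scoped commutatorElement

variable {G : Type*} [Group G] {R : Set G} {a b c v w : G} {m n : ℕ}

lemma areaLe_iff_prodLE : AreaLe R w n ↔ ProdLE (Group.conjugatesOfSet R) w n := by
  simp only [AreaLe, AreaIs, ProdLE, Group.mem_conjugatesOfSet_iff, isConj_iff]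
  constructor
  · rintro ⟨N, hN, r, f, hr, rfl⟩
    refine ⟨_, (List.length_ofFn).trans_le hN, fun a ha => ?_, rfl⟩
    obtain ⟨i, rfl⟩ := List.mem_ofFn.1 ha
    exact (hr i).imp (fun h => ⟨r i, h, (f i)⁻¹, by group⟩) fun h => ⟨_, h, (f i)⁻¹, by group⟩
  · rintro ⟨l, hl, hR, rfl⟩
    have : ∀ i : Fin l.length, ∃ r f, (r ∈ R ∨ r⁻¹ ∈ R) ∧ l.get i = f⁻¹ * r * f := fun i => by
      rcases hR (l.get i) (l.get_mem i) with ⟨r, hr, f, hf⟩ | ⟨r, hr, f, hf⟩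
      · exact ⟨r, f⁻¹, .inl hr, by rw [← hf]; group⟩
      · exact ⟨r⁻¹, f⁻¹, .inr (by simpa using hr), by rw [← inv_inv (l.get i), ← hf]; group⟩
    choose r f hr hf using this
    exact ⟨l.length, hl, r, f, hr, by simp_rw [← hf, List.ofFn_get]⟩

namespace AreaLe

lemma one : AreaLe R (1 : G) n := areaLe_iff_prodLE.2 .one

lemma mono (h : AreaLe R w m) (hmn : m ≤ n) : AreaLe R w n :=
  areaLe_iff_prodLE.2 ((areaLe_iff_prodLE.1 h).mono hmn)

lemma mul (hv : AreaLe R v m) (hw : AreaLe R w n) : AreaLe R (v * w) (m + n) :=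
  areaLe_iff_prodLE.2 ((areaLe_iff_prodLE.1 hv).mul (areaLe_iff_prodLE.1 hw))

lemma inv (h : AreaLe R w n) : AreaLe R w⁻¹ n :=
  areaLe_iff_prodLE.2 (areaLe_iff_prodLE.1 h).inv

lemma conj (h : AreaLe R w n) (f : G) : AreaLe R (MulAut.conj f w) n :=
  areaLe_iff_prodLE.2 <| (areaLe_iff_prodLE.1 h).map (MulAut.conj f).toMonoidHom
    fun _ hz => Group.conj_mem_conjugatesOfSet hz

lemma of_prodLE {H : Type*} [Group H] {Z : Set H} {u : H} (h : ProdLE Z u n) (φ : H →* G)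
    (hφ : ∀ z ∈ Z, AreaLe R (φ z) m) : AreaLe R (φ u) (n * m) :=
  areaLe_iff_prodLE.2 (h.map_of_forall φ fun z hz => areaLe_iff_prodLE.1 (hφ z hz))

lemma mem_normalClosure (h : AreaLe R w n) : w ∈ Subgroup.normalClosure R :=
  (areaLe_iff_prodLE.1 h).mem_subgroup Subgroup.conjugatesOfSet_subset_normalClosure

end AreaLe

lemma exists_areaLe (h : w ∈ Subgroup.normalClosure R) : ∃ n, AreaLe R w n := by
  simp_rw [areaLe_iff_prodLE]
  exact ProdLE.exists_of_mem_closure h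

lemma exists_forall_areaLe {ι : Type*} [Finite ι] {f : ι → G}
    (h : ∀ i, f i ∈ Subgroup.normalClosure R) : ∃ n, ∀ i, AreaLe R (f i) n := by
  choose g hg using fun i => exists_areaLe (h i)
  obtain ⟨n, hn⟩ := Finite.exists_le g
  exact ⟨n, fun i => (hg i).mono (hn i)⟩

/-- `a = b` modulo the relators `R`, at the cost of at most `n` applications of relators. -/
def EqArea (R : Set G) (a b : G) (n : ℕ) : Prop := AreaLe R (a * b⁻¹) n

namespace EqArea

lemma refl : EqArea R a a n := by simpa [EqArea] using AreaLe.one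

lemma mono (h : EqArea R a b m) (hmn : m ≤ n) : EqArea R a b n := AreaLe.mono h hmn

lemma symm (h : EqArea R a b n) : EqArea R b a n := by
  simpa [EqArea] using AreaLe.inv h

lemma trans (hab : EqArea R a b m) (hbc : EqArea R b c n) : EqArea R a c (m + n) := by
  simpa [EqArea, mul_assoc] using AreaLe.mul hab hbc

lemma mul {a' b' : G} (h : EqArea R a b m) (h' : EqArea R a' b' n) :
    EqArea R (a * a') (b * b') (m + n) := by
  have := (AreaLe.conj h' a).mul h
  rw [add_comm]
  simpa [EqArea, mul_assoc] using this

lemma inv (h : EqArea R a b n) : EqArea R a⁻¹ b⁻¹ n := by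
  have := (AreaLe.inv h).conj a⁻¹
  simpa [EqArea, mul_assoc] using this

lemma conj (h : EqArea R a b n) (f : G) : EqArea R (MulAut.conj f a) (MulAut.conj f b) n := by
  simpa only [EqArea, ← map_inv, ← map_mul] using AreaLe.conj h f

lemma areaLe (h : EqArea R a b m) (hb : AreaLe R b n) : AreaLe R a (m + n) := by
  simpa [mul_assoc] using AreaLe.mul h hb

lemma of_prodLE {H : Type*} [Group H] {Z : Set H} {u : H} (h : ProdLE Z u n) {φ ψ : H →* G}
    (hZ : ∀ z ∈ Z, EqArea R (φ z) (ψ z) m) : EqArea R (φ u) (ψ u) (n * m) := by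
  refine h.induction (p := fun u n => EqArea R (φ u) (ψ u) (n * m))
    (fun n => by simpa using refl) fun a u n ha hu => ?_
  have ha' : EqArea R (φ a) (ψ a) m := ha.elim (hZ a) fun h => by simpa using (hZ _ h).inv
  rw [map_mul, map_mul, Nat.succ_mul, add_comm]
  exact ha'.mul hu

end EqArea

/-- `a` and `b` commute modulo the relators `R`, at the cost of at most `n` applications of
relators. -/
def CommArea (R : Set G) (a b : G) (n : ℕ) : Prop := AreaLe R ⁅a, b⁆ n

lemma commArea_iff_eqArea : CommArea R a b n ↔ EqArea R (MulAut.conj a b) b n := Iff.rfl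

namespace CommArea

lemma mono (h : CommArea R a b m) (hmn : m ≤ n) : CommArea R a b n := AreaLe.mono h hmn

lemma symm (h : CommArea R a b n) : CommArea R b a n := by
  simpa only [CommArea, commutatorElement_inv] using AreaLe.inv h

lemma one_left : CommArea R 1 a n := by simpa [CommArea] using AreaLe.one

lemma mul_right (hb : CommArea R a b m) (hc : CommArea R a c n) :
    CommArea R a (b * c) (m + n) := by
  simpa only [commArea_iff_eqArea, map_mul] using
    (commArea_iff_eqArea.1 hb).mul (commArea_iff_eqArea.1 hc)

lemma inv_right (h : CommArea R a b n) : CommArea R a b⁻¹ n := by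
  simpa only [commArea_iff_eqArea, map_inv] using (commArea_iff_eqArea.1 h).inv

lemma mul_left (ha : CommArea R a c m) (hb : CommArea R b c n) : CommArea R (a * b) c (m + n) :=
  (ha.symm.mul_right hb.symm).symm

lemma inv_left (h : CommArea R a b n) : CommArea R a⁻¹ b n := h.symm.inv_right.symm

lemma conj_iff (f : G) : CommArea R (MulAut.conj f a) (MulAut.conj f b) n ↔ CommArea R a b n := by
  have hconj : ∀ (f a b : G), CommArea R a b n →
      CommArea R (MulAut.conj f a) (MulAut.conj f b) n := fun f a b h => by
    simpa only [CommArea, map_commutatorElement] using AreaLe.conj h f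
  refine ⟨fun h => ?_, hconj f a b⟩
  simpa [← MulAut.mul_apply, ← map_mul, mul_assoc] using hconj f⁻¹ _ _ h

lemma congr_right (hbc : EqArea R b c m) (h : CommArea R a c n) : CommArea R a b (n + 2 * m) :=
  (((hbc.conj a).trans h).trans hbc.symm).mono (by omega)

lemma congr_left (hbc : EqArea R b c m) (h : CommArea R c a n) : CommArea R b a (n + 2 * m) :=
  (h.symm.congr_right hbc).symm

lemma of_prodLE_left {H : Type*} [Group H] {Z : Set H} {u : H} (h : ProdLE Z u n) (φ : H →* G)
    (hZ : ∀ z ∈ Z, CommArea R (φ z) b m) : CommArea R (φ u) b (n * m) := by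
  refine h.induction (p := fun u n => CommArea R (φ u) b (n * m))
    (fun n => by simpa using one_left) fun a u n ha hu => ?_
  have ha' : CommArea R (φ a) b m := ha.elim (hZ a) fun h => by simpa using (hZ _ h).inv_left
  rw [map_mul, Nat.succ_mul, add_comm]
  exact ha'.mul_left hu

end CommArea

end Area

/-! ### Words and their exponent vectors -/

/-- The exponent `±1` of a letter `(j, b)` of a word, in the convention of `FreeGroup.mk`. -/
def letterSign (b : Bool) : ℤ := cond b 1 (-1)

/-- The value of the letter `p` at `g`: it is `g p.1` or its inverse. -/
def letter {J G : Type*} [Group G] (g : J → G) (p : J × Bool) : G :=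
  FreeGroup.lift g (FreeGroup.mk [p])

lemma letterSign_not (b : Bool) : letterSign (!b) = -letterSign b := by cases b <;> rfl

lemma letterSign_mul_self (b : Bool) : letterSign b * letterSign b = 1 := by cases b <;> rfl

section Letter

variable {J G : Type*} [Group G] (g : J → G)

lemma letter_eq_zpow (p : J × Bool) : letter g p = g p.1 ^ letterSign p.2 := by
  obtain ⟨j, b⟩ := p
  cases b <;> simp [letter, letterSign]

lemma letter_not (j : J) (b : Bool) : letter g (j, !b) = (letter g (j, b))⁻¹ := by
  rw [letter_eq_zpow, letter_eq_zpow, letterSign_not, zpow_neg]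

end Letter

section Words

variable {J : Type*}

lemma freeGroup_mk_cons (p : J × Bool) (L : List (J × Bool)) :
    FreeGroup.mk (p :: L) = letter FreeGroup.of p * FreeGroup.mk L := by
  rw [letter, FreeGroup.lift_of_apply, FreeGroup.mul_mk, List.singleton_append]

/-- The exponent vector of a word: the image of `u` in the free abelian group on `J`. -/
noncomputable def expVec (u : FreeGroup J) : J →₀ ℤ :=
  (FreeGroup.lift (fun j => Multiplicative.ofAdd (Finsupp.single j (1 : ℤ))) u).toAdd

@[simp] lemma expVec_one : expVec (1 : FreeGroup J) = 0 := by simp [expVec]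

@[simp] lemma expVec_of (j : J) : expVec (FreeGroup.of j) = Finsupp.single j 1 := by simp [expVec]

@[simp] lemma expVec_mul (u v : FreeGroup J) : expVec (u * v) = expVec u + expVec v := by
  simp [expVec]

@[simp] lemma expVec_inv (u : FreeGroup J) : expVec u⁻¹ = -expVec u := by simp [expVec]

@[simp] lemma expVec_zpow (u : FreeGroup J) (a : ℤ) : expVec (u ^ a) = a • expVec u := by
  simp [expVec]

lemma expVec_lift {I : Type*} (W : I → FreeGroup J) (v : FreeGroup I) :
    expVec (FreeGroup.lift W v) =
      Finsupp.linearCombination ℤ (fun i => expVec (W i)) (expVec v) := by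
  induction v using FreeGroup.induction_on with
  | C1 => simp
  | of i => simp
  | inv_of i _ => simp
  | mul u v hu hv => simp only [map_mul, expVec_mul, map_add, hu, hv]

lemma expVec_map {I : Type*} (f : I → J) (v : FreeGroup I) :
    expVec (FreeGroup.map f v) = Finsupp.mapDomain f (expVec v) := by
  rw [FreeGroup.map_eq_lift, expVec_lift]
  simp [Finsupp.mapDomain, Finsupp.linearCombination_apply]

lemma letterSign_mul_expVec_nonneg {L : List (J × Bool)} {j : J} {b : Bool} (h : (j, !b) ∉ L) :
    0 ≤ letterSign b * expVec (FreeGroup.mk L) j := by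
  classical
  induction L with
  | nil => simp [← FreeGroup.one_eq_mk]
  | cons p L ih =>
    obtain ⟨hp, hL⟩ := not_or.1 (List.mem_cons.not.1 h)
    have hletter : 0 ≤ letterSign b * Finsupp.single p.1 (letterSign p.2) j := by
      obtain ⟨i, c⟩ := p
      rcases eq_or_ne i j with rfl | hij
      · obtain rfl : c = b := by cases b <;> cases c <;> simp_all
        simp [letterSign_mul_self]
      · simp [Finsupp.single_eq_of_ne hij.symm]
    rw [freeGroup_mk_cons, letter_eq_zpow]
    simpa [mul_add] using add_nonneg hletter (ih hL)

lemma exists_mem_inverse_letter {L : List (J × Bool)} {j : J} {b : Bool}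
    (h : expVec (FreeGroup.mk ((j, b) :: L)) = 0) : (j, !b) ∈ L := by
  by_contra hmem
  have hnonneg := letterSign_mul_expVec_nonneg hmem
  have hzero : letterSign b + expVec (FreeGroup.mk L) j = 0 := by
    have := DFunLike.congr_fun h j
    simpa [freeGroup_mk_cons, letter_eq_zpow] using this
  rw [eq_neg_of_add_eq_zero_right hzero, mul_neg, letterSign_mul_self] at hnonneg
  omega

lemma ProdLE.exists_list {D : Set J} {u : FreeGroup J} {n : ℕ}
    (h : ProdLE (FreeGroup.of '' D) u n) :
    ∃ L : List (J × Bool), L.length ≤ n ∧ (∀ p ∈ L, p.1 ∈ D) ∧ FreeGroup.mk L = u := by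
  refine h.induction (p := fun u n => ∃ L : List (J × Bool), L.length ≤ n ∧ (∀ p ∈ L, p.1 ∈ D) ∧
    FreeGroup.mk L = u) (fun n => ⟨[], by simp [FreeGroup.one_eq_mk]⟩) ?_
  rintro a _ n ha ⟨L, hn, hD, rfl⟩
  obtain ⟨p, hpD, rfl⟩ : ∃ p : J × Bool, p.1 ∈ D ∧ letter FreeGroup.of p = a := by
    rcases ha with ⟨j, hj, rfl⟩ | ⟨j, hj, hja⟩
    · exact ⟨(j, true), hj, by simp [letter]⟩
    · exact ⟨(j, false), hj, by simp [letter, hja]⟩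
  exact ⟨p :: L, by simpa using hn, by simpa [hpD] using hD, freeGroup_mk_cons p L⟩

lemma prodLE_mk {D : Set J} {L : List (J × Bool)} (h : ∀ p ∈ L, p.1 ∈ D) :
    ProdLE (FreeGroup.of '' D) (FreeGroup.mk L) L.length := by
  induction L with
  | nil => exact .one
  | cons p L ih =>
    have hp : ProdLE (FreeGroup.of '' D) (letter FreeGroup.of p) 1 := by
      have := ProdLE.of_mem (Set.mem_image_of_mem FreeGroup.of (h p (by simp)))
      obtain ⟨j, _ | _⟩ := p
      · simpa [letter] using this.inv
      · simpa [letter] using this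
    rw [freeGroup_mk_cons, List.length_cons, add_comm]
    exact hp.mul (ih fun q hq => h q (by simp [hq]))

end Words

section Sorting

open scoped commutatorElement

variable {G J : Type*} [Group G] {R : Set G} {D : Set J} {g : J → G} {B n : ℕ}

lemma CommArea.lift_of_prodLE {u v : FreeGroup J} {m : ℕ}
    (hu : ProdLE (FreeGroup.of '' D) u m) (hv : ProdLE (FreeGroup.of '' D) v n)
    (hcomm : ∀ i ∈ D, ∀ j ∈ D, CommArea R (g i) (g j) B) :
    CommArea R (FreeGroup.lift g u) (FreeGroup.lift g v) (m * (n * B)) := by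
  refine .of_prodLE_left hu _ ?_
  rintro _ ⟨i, hi, rfl⟩
  refine (CommArea.of_prodLE_left hv _ ?_).symm
  rintro _ ⟨j, hj, rfl⟩
  simpa using hcomm j hj i hi

/- The first letter is cancelled against an occurrence of its inverse, at the cost of commuting it
past the letters in between. -/
lemma areaLe_lift_mk_of_expVec_eq_zero (hcomm : ∀ i ∈ D, ∀ j ∈ D, CommArea R (g i) (g j) B)
    (L : List (J × Bool)) (hD : ∀ p ∈ L, p.1 ∈ D) (hL : expVec (FreeGroup.mk L) = 0) :
    AreaLe R (FreeGroup.lift g (FreeGroup.mk L)) (L.length * L.length * B) := by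
  induction hn : L.length using Nat.strong_induction_on generalizing L with
  | _ n ih =>
  rcases L with _ | ⟨⟨j, b⟩, L⟩
  · simpa [← FreeGroup.one_eq_mk] using AreaLe.one
  obtain ⟨L₁, L₂, rfl⟩ := List.append_of_mem (exists_mem_inverse_letter hL)
  set x := letter FreeGroup.of (j, b) with hx
  have hsplit : FreeGroup.mk ((j, b) :: (L₁ ++ (j, !b) :: L₂)) =
      ⁅x, FreeGroup.mk L₁⁆ * FreeGroup.mk (L₁ ++ L₂) := by
    rw [freeGroup_mk_cons, ← FreeGroup.mul_mk, freeGroup_mk_cons, letter_not, ← FreeGroup.mul_mk,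
      commutatorElement_def, hx]
    simp only [mul_assoc, inv_mul_cancel_left]
  have hrest : AreaLe R (FreeGroup.lift g (FreeGroup.mk (L₁ ++ L₂)))
      ((L₁ ++ L₂).length * (L₁ ++ L₂).length * B) := by
    refine ih _ (by simp [← hn]) _ (fun p hp => hD p ?_) ?_ rfl
    · rw [List.mem_append] at hp
      simp only [List.mem_cons, List.mem_append]
      tauto
    · simpa only [hsplit, commutatorElement_def, expVec_mul, expVec_inv, add_neg_cancel_comm,
        add_neg_cancel, zero_add] using hL
  have hcomm₁ : CommArea R (FreeGroup.lift g x) (FreeGroup.lift g (FreeGroup.mk L₁))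
      (1 * (L₁.length * B)) := by
    refine .lift_of_prodLE ?_ (prodLE_mk fun p hp => hD p (by simp [hp])) hcomm
    simpa [freeGroup_mk_cons, ← FreeGroup.one_eq_mk] using
      prodLE_mk (L := [(j, b)]) fun p hp => hD p (by simp_all)
  rw [hsplit, map_mul, map_commutatorElement]
  refine (AreaLe.mul hcomm₁ hrest).mono ?_
  subst hn
  simp only [List.length_append, List.length_cons, ← add_mul, one_mul]
  exact Nat.mul_le_mul_right B (by nlinarith)

lemma areaLe_lift_of_expVec_eq_zero (hcomm : ∀ i ∈ D, ∀ j ∈ D, CommArea R (g i) (g j) B)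
    {u : FreeGroup J} (hu : ProdLE (FreeGroup.of '' D) u n) (h0 : expVec u = 0) :
    AreaLe R (FreeGroup.lift g u) (n * n * B) := by
  obtain ⟨L, hL, hD, rfl⟩ := hu.exists_list
  exact (areaLe_lift_mk_of_expVec_eq_zero hcomm L hD h0).mono (by gcongr)

lemma ProdLE.exists_lift_eq {w : G} (h : ProdLE (g '' D) w n) :
    ∃ u : FreeGroup J, ProdLE (FreeGroup.of '' D) u n ∧ FreeGroup.lift g u = w := by
  refine h.induction (p := fun w n => ∃ u, ProdLE (FreeGroup.of '' D) u n ∧ FreeGroup.lift g u = w)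
    (fun _ => ⟨1, .one, by simp⟩) ?_
  rintro a _ n (⟨j, hj, rfl⟩ | ⟨j, hj, hja⟩) ⟨u, hu, rfl⟩
  · exact ⟨FreeGroup.of j * u, n.add_comm 1 ▸ (ProdLE.of_mem (Set.mem_image_of_mem _ hj)).mul hu,
      by simp⟩
  · refine ⟨(FreeGroup.of j)⁻¹ * u, n.add_comm 1 ▸
      (ProdLE.of_mem (Set.mem_image_of_mem _ hj)).inv.mul hu, ?_⟩
    simp [hja]

end Sorting

section L1Norm

variable {J : Type*}

/-- The `ℓ¹`-norm of an integer vector, which is the least length of a word with this exponent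
vector. -/
def l1norm (m : J →₀ ℤ) : ℕ := m.sum fun _ a => a.natAbs

@[simp] lemma l1norm_zero : l1norm (0 : J →₀ ℤ) = 0 := Finsupp.sum_zero_index

@[simp] lemma l1norm_single (j : J) (a : ℤ) : l1norm (Finsupp.single j a) = a.natAbs :=
  Finsupp.sum_single_index rfl

lemma l1norm_eq_sum [Fintype J] (m : J →₀ ℤ) : l1norm m = ∑ j, (m j).natAbs :=
  Finsupp.sum_fintype _ _ fun _ => rfl

lemma l1norm_neg (m : J →₀ ℤ) : l1norm (-m) = l1norm m := by
  simp [l1norm, Finsupp.sum_neg_index]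

lemma natAbs_apply_le_l1norm (m : J →₀ ℤ) (j : J) : (m j).natAbs ≤ l1norm m := by
  by_cases hj : j ∈ m.support
  · exact Finset.single_le_sum (f := fun j => (m j).natAbs) (fun _ _ => Nat.zero_le _) hj
  · simp [Finsupp.notMem_support_iff.1 hj]

lemma l1norm_add_le (m m' : J →₀ ℤ) : l1norm (m + m') ≤ l1norm m + l1norm m' := by
  classical
  have l1norm_eq {m'' : J →₀ ℤ} (h : m''.support ⊆ m.support ∪ m'.support) :
      l1norm m'' = ∑ j ∈ m.support ∪ m'.support, (m'' j).natAbs :=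
    Finsupp.sum_of_support_subset _ h _ fun _ _ => rfl
  rw [l1norm_eq Finsupp.support_add, l1norm_eq Finset.subset_union_left,
    l1norm_eq Finset.subset_union_right, ← Finset.sum_add_distrib]
  exact Finset.sum_le_sum fun j _ => Int.natAbs_add_le _ _

lemma l1norm_smul_le (a : ℤ) (m : J →₀ ℤ) : l1norm (a • m) ≤ a.natAbs * l1norm m := by
  rw [l1norm, Finsupp.sum_of_support_subset _ Finsupp.support_smul _ fun _ _ => rfl, l1norm,
    Finsupp.sum, Finset.mul_sum]
  exact Finset.sum_le_sum fun j _ => (Int.natAbs_mul a (m j)).le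

lemma l1norm_mapDomain {I : Type*} {f : J → I} (hf : Function.Injective f) (m : J →₀ ℤ) :
    l1norm (m.mapDomain f) = l1norm m := by
  simp [l1norm, Finsupp.sum_mapDomain_index_inj hf]

lemma l1norm_expVec_le {D : Set J} {u : FreeGroup J} {n : ℕ} (h : ProdLE (FreeGroup.of '' D) u n) :
    l1norm (expVec u) ≤ n := by
  refine h.induction (p := fun u n => l1norm (expVec u) ≤ n) (by simp) ?_
  rintro a w n (⟨j, -, rfl⟩ | ⟨j, -, hj⟩) hw
  · rw [expVec_mul, add_comm n]
    exact (l1norm_add_le _ _).trans (by simp [hw])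
  · rw [expVec_mul, add_comm n, ← inv_inv a, ← hj, expVec_inv]
    exact (l1norm_add_le _ _).trans (by simp [l1norm_neg, hw])

lemma mem_of_mem_support_expVec {D : Set J} {u : FreeGroup J} {n : ℕ}
    (h : ProdLE (FreeGroup.of '' D) u n) {j : J} (hj : j ∈ (expVec u).support) : j ∈ D := by
  classical
  by_contra hjD
  refine Finsupp.mem_support_iff.1 hj
    (h.induction (p := fun u _ => expVec u j = 0) (by simp) fun a w _ ha hw => ?_)
  have ne {i : J} (hi : i ∈ D) : i ≠ j := fun e => hjD (e ▸ hi)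
  obtain ⟨i, hi, rfl⟩ | ⟨i, hi, hia⟩ := ha
  · simp [hw, ne hi]
  · simp [hw, ne hi, inv_eq_iff_eq_inv.1 hia.symm]

lemma exists_expVec_eq (c : J →₀ ℤ) :
    ∃ v : FreeGroup J, ProdLE (FreeGroup.of '' ↑c.support) v (l1norm c) ∧ expVec v = c := by
  classical
  induction c using Finsupp.induction with
  | zero => exact ⟨1, .one, by simp⟩
  | single_add j a c hj ha ih =>
    obtain ⟨v, hv, hvc⟩ := ih
    have disjoint : Disjoint (Finsupp.single j a).support c.support := by
      simpa [Finsupp.support_single, ha] using hj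
    have l1norm_eq : l1norm (Finsupp.single j a + c) = a.natAbs + l1norm c := by
      rw [l1norm, Finsupp.sum_add_index_of_disjoint disjoint]
      exact congrArg (· + _) (l1norm_single j a)
    refine ⟨FreeGroup.of j ^ a * v, l1norm_eq ▸ .mul ?_ ?_, by simp [hvc]⟩
    · exact .zpow (Set.mem_image_of_mem _ (by simpa [Finsupp.notMem_support_iff.1 hj] using ha)) a
    · refine hv.mono_set (Set.image_mono ?_)
      rw [Finsupp.support_add_eq disjoint]
      exact_mod_cast Finset.subset_union_right

end L1Norm

/-! ### Collecting letters into ordered words -/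

section Collection

open scoped commutatorElement

variable {F ι : Type*} [Group F] {R : Set F} {a b p s : F} {y : ι → F} {L : List ι} {N : ℕ}

/-- The normal form `∏ yᵢ ^ uᵢ` of a word, with the product taken in the order of the list `L`. -/
def orderedWord (y : ι → F) (L : List ι) (u : ι →₀ ℤ) : F := (L.map fun i => y i ^ u i).prod

@[simp] lemma orderedWord_nil (u : ι →₀ ℤ) : orderedWord y [] u = 1 := rfl

@[simp] lemma orderedWord_cons (i : ι) (u : ι →₀ ℤ) :
    orderedWord y (i :: L) u = y i ^ u i * orderedWord y L u := by simp [orderedWord]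

@[simp] lemma orderedWord_zero : orderedWord y L 0 = 1 := by simp [orderedWord]

lemma orderedWord_congr {u v : ι →₀ ℤ} (h : ∀ i ∈ L, u i = v i) :
    orderedWord y L u = orderedWord y L v :=
  congrArg List.prod (List.map_congr_left fun i hi => by rw [h i hi])

lemma inv_orderedWord (u : ι →₀ ℤ) : (orderedWord y L u)⁻¹ = orderedWord y L.reverse (-u) := by
  simp [orderedWord, List.prod_inv_reverse, Function.comp_def]

/-- The commutators of the letters `yᵢ^{±1}`, which measure how far the `yᵢ` are from commuting. -/
def letterCommutators (y : ι → F) : Set F :=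
  Set.range fun pq : (ι × Bool) × (ι × Bool) => ⁅letter y pq.1, letter y pq.2⁆

lemma EqArea.conj_swap (h : CommArea R ⁅a⁻¹, b⁻¹⁆ (MulAut.conj p s) N) :
    EqArea R (MulAut.conj (a * b * p) s) (MulAut.conj (b * a * p) s) N := by
  convert (commArea_iff_eqArea.1 h).conj (b * a) using 1 <;>
    simp [commutatorElement_def, mul_assoc]

lemma EqArea.conj_swap_pow {n : ℕ}
    (h : ∀ m < n, CommArea R ⁅a⁻¹, b⁻¹⁆ (MulAut.conj (b ^ m * p) s) N) :
    EqArea R (MulAut.conj (a * b ^ n * p) s) (MulAut.conj (b ^ n * a * p) s) (n * N) := by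
  induction n with
  | zero => simpa using EqArea.refl
  | succ n ih =>
    have swap_first := EqArea.conj_swap (h n n.lt_succ_self)
    have swap_rest := (ih fun m hm => h m (by lia)).conj b
    rw [pow_succ', add_mul, one_mul, add_comm]
    refine EqArea.trans (b := MulAut.conj (b * a * (b ^ n * p)) s) ?_ ?_
    · simpa only [mul_assoc] using swap_first
    · simpa only [map_mul, MulAut.mul_apply] using swap_rest

lemma letter_pow (p : ι × Bool) (n : ℕ) : letter y p ^ n = y p.1 ^ (letterSign p.2 * n) := by
  rw [letter_eq_zpow, zpow_mul, zpow_natCast]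

lemma abs_letterSign (b : Bool) : |letterSign b| = 1 := by cases b <;> rfl

lemma exists_letterSign_mul_natAbs (m : ℤ) : ∃ b, letterSign b * m.natAbs = m := by
  obtain h | h := m.natAbs_eq
  · exact ⟨true, by simpa [letterSign] using h.symm⟩
  · exact ⟨false, by simpa [letterSign] using h.symm⟩

lemma sum_natAbs_eq_l1norm (hL : L.Nodup) (hfull : ∀ i, i ∈ L) (u : ι →₀ ℤ) :
    (L.map fun i => (u i).natAbs).sum = l1norm u := by
  classical
  rw [← List.sum_toFinset _ hL, l1norm,
    Finsupp.sum_of_support_subset _ (fun i _ => List.mem_toFinset.2 (hfull i)) _ fun _ _ => rfl]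

lemma expVec_mk_apply [DecidableEq ι] (W : List (ι × Bool)) (i : ι) :
    expVec (FreeGroup.mk W) i = W.count (i, true) - W.count (i, false) := by
  induction W with
  | nil => simp [← FreeGroup.one_eq_mk]
  | cons q W ih =>
    obtain ⟨j, b⟩ := q
    rw [freeGroup_mk_cons, letter_eq_zpow]
    by_cases hij : j = i <;> cases b <;> simp [ih, hij, letterSign] <;> ring

lemma exists_letters_of_orderedWord [DecidableEq ι] (hL : L.Nodup) (u : ι →₀ ℤ) :
    ∃ W : List (ι × Bool), FreeGroup.lift y (FreeGroup.mk W) = orderedWord y L u ∧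
      W.length = (L.map fun i => (u i).natAbs).sum ∧
      ∀ i b, W.count (i, b) = if i ∈ L then (letterSign b * u i).toNat else 0 := by
  induction L with
  | nil => exact ⟨[], by simp [← FreeGroup.one_eq_mk]⟩
  | cons j L ih =>
    obtain ⟨hj, hL⟩ := List.nodup_cons.1 hL
    obtain ⟨W, hW, hlength, hcount⟩ := ih hL
    obtain ⟨b, hb⟩ := exists_letterSign_mul_natAbs (u j)
    refine ⟨List.replicate (u j).natAbs (j, b) ++ W, ?_, by simp [hlength], fun i b' => ?_⟩
    · have hpow : y j ^ u j = letter y (j, b) ^ (u j).natAbs := by rw [letter_pow, hb]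
      rw [← FreeGroup.mul_mk, map_mul, hW, orderedWord_cons, hpow]
      simp [letter, FreeGroup.lift_mk]
    · rw [List.count_append, List.count_replicate, hcount]
      obtain rfl | hij := eq_or_ne i j
      · rw [if_neg hj, if_pos List.mem_cons_self, add_zero]
        cases b <;> cases b' <;> grind [letterSign]
      · simp [hij, hij.symm]

/-- The letter crosses one power `yⱼ ^ uⱼ` after another, and each crossing conjugates by a
commutator of letters. -/
lemma EqArea.letter_mul_orderedWord (q : ι × Bool) (hL : L.Nodup) (hq : q.1 ∈ L) (u : ι →₀ ℤ)
    (hcomm : ∀ v : ι →₀ ℤ, (∀ i, |v i| ≤ |u i|) → ∀ c ∈ letterCommutators y,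
      CommArea R c (MulAut.conj (orderedWord y L v) s) N) :
    EqArea R (MulAut.conj (letter y q * orderedWord y L u) s)
      (MulAut.conj (orderedWord y L (u + Finsupp.single q.1 (letterSign q.2))) s)
      ((L.map fun i => (u i).natAbs).sum * N) := by
  classical
  induction L with
  | nil => simp at hq
  | cons j L ih =>
    obtain ⟨hj, hL⟩ := List.nodup_cons.1 hL
    have hne {i : ι} (hi : i ∈ L) : i ≠ j := fun h => hj (h ▸ hi)
    by_cases hqj : q.1 = j
    · have : orderedWord y L (u + Finsupp.single q.1 (letterSign q.2)) = orderedWord y L u :=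
        orderedWord_congr fun i hi => by simp [hqj, hne hi]
      rw [orderedWord_cons, orderedWord_cons, this, Finsupp.add_apply, hqj, Finsupp.single_eq_same,
        letter_eq_zpow, hqj, ← mul_assoc, ← zpow_add, add_comm]
      exact EqArea.refl
    have hcomm_update (v : ι →₀ ℤ) (m : ℤ) (hm : |m| ≤ |u j|) (hv : ∀ i, |v i| ≤ |u i|)
        (c : F) (hc : c ∈ letterCommutators y) :
        CommArea R c (MulAut.conj (y j ^ m * orderedWord y L v) s) N := by
      have := hcomm (v.update j m) (fun i => ?_) c hc
      · rw [orderedWord_cons, orderedWord_congr (v := v)] at this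
        · simpa using this
        · exact fun i hi => by simp [hne hi]
      · obtain rfl | hij := eq_or_ne i j <;> simp [*]
    obtain ⟨b, hb⟩ := exists_letterSign_mul_natAbs (u j)
    have hpow : y j ^ u j = letter y (j, b) ^ (u j).natAbs := by rw [letter_pow, hb]
    have cross_first : EqArea R (MulAut.conj (letter y q * y j ^ u j * orderedWord y L u) s)
        (MulAut.conj (y j ^ u j * letter y q * orderedWord y L u) s) ((u j).natAbs * N) := by
      rw [hpow]
      refine EqArea.conj_swap_pow fun m hm => ?_
      rw [← letter_not, ← letter_not, letter_pow]
      refine hcomm_update u _ ?_ (fun _ => le_rfl) _ ⟨((q.1, !q.2), (j, !b)), rfl⟩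
      rw [abs_mul, abs_letterSign, one_mul, Nat.abs_cast, Int.abs_eq_natAbs]
      exact_mod_cast hm.le
    have cross_rest := (ih hL ((List.mem_cons.1 hq).resolve_left hqj) fun v hv c hc => by
      simpa using hcomm_update v 0 (by simp) hv c hc).conj (y j ^ u j)
    rw [List.map_cons, List.sum_cons, add_mul]
    simp only [orderedWord_cons, Finsupp.add_apply, Finsupp.single_eq_of_ne' hqj, add_zero, map_mul,
      MulAut.mul_apply] at cross_first cross_rest ⊢
    exact cross_first.trans cross_rest

end Collection

/-! ### Commutation area along a tame set of directions -/

section SqNorm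

variable {ι : Type*} [Fintype ι]

/-- The squared Euclidean norm of an exponent vector. -/
def sqNorm (u : ι →₀ ℤ) : ℤ := ∑ i, u i ^ 2

lemma sqNorm_neg (u : ι →₀ ℤ) : sqNorm (-u) = sqNorm u := by simp [sqNorm]

lemma sqNorm_le_sqNorm {u v : ι →₀ ℤ} (h : ∀ i, |u i| ≤ |v i|) : sqNorm u ≤ sqNorm v :=
  Finset.sum_le_sum fun i _ => sq_le_sq.2 (h i)

lemma l1norm_le_sqNorm (u : ι →₀ ℤ) : (l1norm u : ℤ) ≤ sqNorm u := by
  rw [l1norm_eq_sum, Nat.cast_sum]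
  refine Finset.sum_le_sum fun i _ => ?_
  rw [← Int.natAbs_sq]
  exact_mod_cast Nat.le_self_pow two_ne_zero _

lemma sqNorm_add_le_of_mem_uIcc {p q u : ι →₀ ℤ} (h : ∀ i, p i ∈ Set.uIcc 0 (u i)) :
    sqNorm (q + p) ≤ sqNorm u + 2 * ∑ i, u i * q i + 2 * sqNorm q := by
  simp only [sqNorm, Finset.mul_sum, ← Finset.sum_add_distrib, Finsupp.add_apply]
  refine Finset.sum_le_sum fun i _ => ?_
  have : 0 ≤ p i * (u i - p i) := by
    obtain ⟨h₁, h₂⟩ | ⟨h₁, h₂⟩ := Set.mem_uIcc.1 (h i)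
    · exact mul_nonneg h₁ (by lia)
    · exact mul_nonneg_of_nonpos_of_nonpos h₂ (by lia)
  nlinarith [sq_nonneg (u i - p i + q i)]

lemma finite_setOf_sqNorm_le (ρ : ℝ) : {u : ι →₀ ℤ | (sqNorm u : ℝ) ≤ ρ}.Finite := by
  classical
  refine ((Set.finite_Icc (fun _ : ι => -⌈ρ⌉) fun _ => ⌈ρ⌉).preimage
    (DFunLike.coe_injective (F := ι →₀ ℤ)).injOn).subset fun u hu => ?_
  have sqNorm_le : sqNorm u ≤ ⌈ρ⌉ := by exact_mod_cast le_trans hu (Int.le_ceil ρ)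
  have abs_apply_le (i : ι) : |u i| ≤ ⌈ρ⌉ := by
    rw [Int.abs_eq_natAbs]
    exact (Nat.cast_le.2 (natAbs_apply_le_l1norm u i)).trans ((l1norm_le_sqNorm u).trans sqNorm_le)
  exact ⟨fun i => (abs_le.1 (abs_apply_le i)).1, fun i => (abs_le.1 (abs_apply_le i)).2⟩

lemma sqNorm_le_sq_l1norm (u : ι →₀ ℤ) : sqNorm u ≤ (l1norm u : ℤ) ^ 2 := by
  simpa [sqNorm, l1norm_eq_sum] using Finset.sum_sq_le_sq_sum_of_nonneg (s := Finset.univ)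
    (f := fun i => |u i|) fun _ _ => abs_nonneg _

end SqNorm

section CommutationBounds

variable {F ι : Type*} [Group F] [Fintype ι] {R S : Set F} {y : ι → F} {L L' : List ι}
  {ρ r ε : ℝ} {D K N : ℕ} {A : ℤ} {s s' : F} {u v : ι →₀ ℤ}

/-- Elements of `S` commute, at area at most `N`, with the conjugates of elements of `S` by ordered
words whose exponent vector lies in the ball of squared radius `ρ`. -/
def CommutesInBall (R : Set F) (y : ι → F) (L : List ι) (S : Set F) (ρ : ℝ) (N : ℕ) : Prop :=
  ∀ u : ι →₀ ℤ, (sqNorm u : ℝ) ≤ ρ → ∀ s ∈ S, ∀ s' ∈ S,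
    CommArea R s (MulAut.conj (orderedWord y L u) s') N

/-- The products of the form `z^g` with `z ∈ S` and `g` an ordered word of bounded exponent `q` that
advances by at least `ε` in the direction `v`. -/
def advancedConjugates (y : ι → F) (L : List ι) (S : Set F) (A : ℤ) (ε : ℝ) (v : ι → ℝ) : Set F :=
  {z | ∃ s ∈ S, ∃ q : ι →₀ ℤ, sqNorm q ≤ A ∧ ε ≤ ∑ i, v i * q i ∧
    z = MulAut.conj (orderedWord y L q) s}

/-- Quantitative tameness in the direction `v`: each element of `S` can be rewritten, at area at
most `K`, as a product of at most `K` conjugates that have advanced in the direction `v`. -/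
def Advances (R : Set F) (y : ι → F) (L : List ι) (S : Set F) (A : ℤ) (ε : ℝ) (K : ℕ)
    (v : ι → ℝ) : Prop :=
  ∀ s ∈ S, ∃ w, ProdLE (advancedConjugates y L S A ε v) w K ∧ EqArea R s w K

section Collect

variable (hc : CommutesInBall R y L S ρ N) (hy : letterCommutators y ⊆ S) (hL : L.Nodup)
  (hfull : ∀ i, i ∈ L) (hD : ρ ≤ D)

include hc hy hL hfull hD

lemma CommutesInBall.letter_mul (hs : s ∈ S) (q : ι × Bool) (hu : (sqNorm u : ℝ) ≤ ρ) :
    EqArea R (MulAut.conj (letter y q * orderedWord y L u) s)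
      (MulAut.conj (orderedWord y L (u + Finsupp.single q.1 (letterSign q.2))) s) (D * N) := by
  refine (EqArea.letter_mul_orderedWord (N := N) q hL (hfull q.1) u fun v hv c hcy => ?_).mono ?_
  · exact hc v (hu.trans' (by exact_mod_cast sqNorm_le_sqNorm hv)) c (hy hcy) s hs
  · rw [sum_natAbs_eq_l1norm hL hfull]
    have : (l1norm u : ℝ) ≤ sqNorm u := by exact_mod_cast l1norm_le_sqNorm u
    gcongr
    exact_mod_cast this.trans (hu.trans hD)

lemma CommutesInBall.lift_mk_mul (hs : s ∈ S) (v : ι →₀ ℤ) (W : List (ι × Bool))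
    (hW : ∀ W', W' <:+ W → (sqNorm (v + expVec (FreeGroup.mk W')) : ℝ) ≤ ρ) :
    EqArea R (MulAut.conj (FreeGroup.lift y (FreeGroup.mk W) * orderedWord y L v) s)
      (MulAut.conj (orderedWord y L (v + expVec (FreeGroup.mk W))) s) (W.length * (D * N)) := by
  induction W with
  | nil => simpa [← FreeGroup.one_eq_mk] using EqArea.refl
  | cons q W ih =>
    have move_rest := (ih fun W' hW' => hW W' (hW'.trans (List.suffix_cons q W))).conj (letter y q)
    have move_first := hc.letter_mul hy hL hfull hD hs q (hW W (List.suffix_cons q W))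
    have expVec_cons : v + expVec (FreeGroup.mk (q :: W)) =
        v + expVec (FreeGroup.mk W) + Finsupp.single q.1 (letterSign q.2) := by
      rw [freeGroup_mk_cons, letter_eq_zpow]
      simp [add_comm, add_left_comm]
    have lift_cons : FreeGroup.lift y (FreeGroup.mk (q :: W)) =
        letter y q * FreeGroup.lift y (FreeGroup.mk W) := by
      simp [freeGroup_mk_cons, letter_eq_zpow]
    rw [lift_cons, expVec_cons, List.length_cons, add_mul, one_mul, mul_assoc]
    simp only [map_mul, MulAut.mul_apply] at move_first move_rest ⊢
    exact move_rest.trans move_first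

lemma CommutesInBall.orderedWord_mul (hs : s ∈ S) (hL' : L'.Nodup) (hfull' : ∀ i, i ∈ L')
    (huv : ∀ p : ι →₀ ℤ, (∀ i, p i ∈ Set.uIcc 0 (u i)) → (sqNorm (v + p) : ℝ) ≤ ρ) :
    EqArea R (MulAut.conj (orderedWord y L' u * orderedWord y L v) s)
      (MulAut.conj (orderedWord y L (v + u)) s) (l1norm u * (D * N)) := by
  classical
  obtain ⟨W, hWu, hlength, hcount⟩ := exists_letters_of_orderedWord (y := y) hL' u
  rw [sum_natAbs_eq_l1norm hL' hfull'] at hlength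
  have expVec_eq : expVec (FreeGroup.mk W) = u := by
    ext i
    simp [expVec_mk_apply, hcount, hfull', letterSign]
  have := hc.lift_mk_mul hy hL hfull hD hs v W fun W' hW' => huv _ fun i => ?_
  · rwa [hWu, hlength, expVec_eq] at this
  · have count_le (b : Bool) := hcount i b ▸ hW'.sublist.count_le (i, b)
    have := count_le true
    have := count_le false
    simp only [hfull', if_true, letterSign, cond_true, cond_false, one_mul, neg_mul] at *
    rw [expVec_mk_apply, Set.mem_uIcc]
    lia

/-- Conjugating a factor that advances by `ε` against `u` of length `r` lands at distance about
`r - ε`, so the commutation of `s` with `s'^u` reduces to a smaller ball. -/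
lemma CommutesInBall.commArea_of_advances (hs : s ∈ S) (hs' : s' ∈ S) (hL' : L'.Nodup)
    (hfull' : ∀ i, i ∈ L') {w : ι → ℝ} (hw : Advances R y L S A ε K w) (hwu : ∀ i, w i * r = -u i)
    (hr : 0 ≤ r) (hu : (sqNorm u : ℝ) = r ^ 2) (hρ : r ^ 2 - 2 * ε * r + 2 * A ≤ ρ)
    (hrD : r ^ 2 ≤ D) :
    CommArea R s (MulAut.conj (orderedWord y L' u) s') (K * (N + 2 * (D * (D * N))) + 2 * K) := by
  obtain ⟨w', hw', hs'w'⟩ := hw s' hs'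
  refine (CommArea.of_prodLE_left hw' (MulAut.conj (orderedWord y L' u)).toMonoidHom ?_).symm
    |>.congr_right (hs'w'.conj _)
  rintro _ ⟨t, ht, q, hqA, hqε, rfl⟩
  have in_ball (p : ι →₀ ℤ) (hp : ∀ i, p i ∈ Set.uIcc 0 (u i)) : (sqNorm (q + p) : ℝ) ≤ ρ := by
    have inner_le : ∑ i, (u i * q i : ℝ) ≤ -(ε * r) := by
      have : ∑ i, (u i * q i : ℝ) = -((∑ i, w i * q i) * r) := by
        rw [Finset.sum_mul, ← Finset.sum_neg_distrib]
        exact Finset.sum_congr rfl fun i _ => by linear_combination (q i : ℝ) * hwu i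
      nlinarith
    have : (sqNorm (q + p) : ℝ) ≤ sqNorm u + 2 * ∑ i, (u i * q i : ℝ) + 2 * sqNorm q := by
      exact_mod_cast sqNorm_add_le_of_mem_uIcc hp
    have : (sqNorm q : ℝ) ≤ A := by exact_mod_cast hqA
    linarith
  have collect : EqArea R (MulAut.conj (orderedWord y L' u * orderedWord y L q) t)
      (MulAut.conj (orderedWord y L (q + u)) t) (D * (D * N)) := by
    refine (hc.orderedWord_mul hy hL hfull hD ht hL' hfull' in_ball).mono ?_
    have : (l1norm u : ℝ) ≤ sqNorm u := by exact_mod_cast l1norm_le_sqNorm u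
    gcongr
    exact_mod_cast this.trans (hu.trans_le hrD)
  rw [map_mul, MulAut.mul_apply] at collect
  exact (hc (q + u) (in_ball u fun i => Set.right_mem_uIcc) s hs t ht).symm.congr_left collect

lemma CommutesInBall.commArea_of_advances_or (hs : s ∈ S) (hs' : s' ∈ S) (hr : 0 < r)
    (hu : (sqNorm u : ℝ) = r ^ 2)
    (hadv : Advances R y L S A ε K (fun i => u i / r) ∨
      Advances R y L S A ε K (fun i => -(u i / r)))
    (hρ : r ^ 2 - 2 * ε * r + 2 * A ≤ ρ) (hrD : r ^ 2 ≤ D) :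
    CommArea R s (MulAut.conj (orderedWord y L u) s') (K * (N + 2 * (D * (D * N))) + 2 * K) := by
  obtain hadv | hadv := hadv
  · rw [← CommArea.conj_iff (orderedWord y L u)⁻¹]
    have := hc.commArea_of_advances hy hL hfull hD hs' hs (List.nodup_reverse.2 hL)
      (by simpa using hfull) hadv (u := -u) (fun i => by simp [hr.ne']) hr.le
      (by rwa [sqNorm_neg]) hρ hrD
    rw [← inv_orderedWord] at this
    simpa only [← MulAut.mul_apply, ← map_mul, inv_mul_cancel, map_one, MulAut.one_apply] using
      this.symm
  · exact hc.commArea_of_advances hy hL hfull hD hs hs' hL hfull hadv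
      (fun i => by field_simp) hr.le hu hρ hrD

end Collect

lemma CommutesInBall.enlarge (hc : CommutesInBall R y L S (r ^ 2) N)
    (hy : letterCommutators y ⊆ S) (hL : L.Nodup) (hfull : ∀ i, i ∈ L)
    (hadv : ∀ v : ι → ℝ, ∑ i, v i ^ 2 = 1 →
      Advances R y L S A ε K v ∨ Advances R y L S A ε K fun i => -v i)
    (hε : 0 < ε) (hr : ε ≤ r) (hA : 2 * A ≤ ε * r) (hD : (r + ε / 2) ^ 2 ≤ D) (hD1 : 1 ≤ D)
    (hN : 1 ≤ N) :
    CommutesInBall R y L S ((r + ε / 2) ^ 2) ((5 * K + 1) * D ^ 2 * N) := by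
  intro u hu s hs s' hs'
  have one_le : 1 ≤ D ^ 2 * N := Nat.mul_pos (by positivity) hN
  by_cases hur : (sqNorm u : ℝ) ≤ r ^ 2
  · refine (hc u hur s hs s' hs').mono ?_
    have : N ≤ D ^ 2 * N := Nat.le_mul_of_pos_left N (by positivity)
    nlinarith [Nat.zero_le (K * (D ^ 2 * N))]
  push Not at hur
  obtain ⟨t, ht, hut⟩ : ∃ t : ℝ, 0 < t ∧ (sqNorm u : ℝ) = t ^ 2 :=
    ⟨√(sqNorm u), Real.sqrt_pos.2 (hur.trans_le' (sq_nonneg r)),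
      (Real.sq_sqrt (hur.le.trans' (sq_nonneg r))).symm⟩
  rw [hut] at hu hur
  have hrt : r < t := lt_of_pow_lt_pow_left₀ 2 ht.le hur
  have htr : t ≤ r + ε / 2 := le_of_sq_le_sq hu (by linarith)
  have unit : ∑ i, (u i / t : ℝ) ^ 2 = 1 := by
    simp only [div_pow]
    rw [← Finset.sum_div, div_eq_one_iff_eq (by positivity), ← hut]
    simp [sqNorm]
  refine (hc.commArea_of_advances_or hy hL hfull (hD.trans' (by gcongr <;> linarith))
    hs hs' ht hut
    (hadv _ unit) ?_ (hu.trans hD)).mono ?_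
  · nlinarith [sq_nonneg (r - t + ε / 2)]
  · have : N ≤ D ^ 2 * N := Nat.le_mul_of_pos_left N (by positivity)
    calc K * (N + 2 * (D * (D * N))) + 2 * K
        ≤ K * (D ^ 2 * N + 2 * (D ^ 2 * N)) + 2 * K * (D ^ 2 * N) := by
          gcongr ?_ + ?_
          · gcongr K * (?_ + ?_)
            exact (by ring : 2 * (D * (D * N)) = 2 * (D ^ 2 * N)).le
          · exact Nat.le_mul_of_pos_right _ one_le
      _ ≤ (5 * K + 1) * D ^ 2 * N := by nlinarith

lemma exists_commutesInBall (hS : S.Finite)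
    (hcomm : ∀ s ∈ S, ∀ s' ∈ S, ∀ f, ∃ n, CommArea R s (MulAut.conj f s') n) (y : ι → F)
    (L : List ι) (ρ : ℝ) : ∃ N, CommutesInBall R y L S ρ N := by
  have := (finite_setOf_sqNorm_le (ι := ι) ρ).to_subtype
  have := hS.to_subtype
  choose area harea using fun x : {u : ι →₀ ℤ | (sqNorm u : ℝ) ≤ ρ} × S × S =>
    hcomm x.2.1 x.2.1.2 x.2.2 x.2.2.2 (orderedWord y L x.1.1)
  obtain ⟨N, hN⟩ := Finite.exists_le area
  exact ⟨N, fun u hu s hs s' hs' => (harea (⟨u, hu⟩, ⟨s, hs⟩, ⟨s', hs'⟩)).mono (hN _)⟩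

lemma mul_succ_pow_four_le (k j : ℕ) : k * (j + 1) ^ 4 ≤ (16 * k) ^ (j + 1) :=
  calc k * (j + 1) ^ 4 ≤ k ^ (j + 1) * (2 ^ (j + 1)) ^ 4 := by
        gcongr
        · exact Nat.le_self_pow j.succ_ne_zero k
        · exact Nat.lt_two_pow_self.le
    _ = (16 * k) ^ (j + 1) := by
        rw [← pow_mul, mul_comm _ 4, pow_mul, ← mul_pow, mul_comm k, (by rfl : 2 ^ 4 = 16)]

lemma sq_add_mul_le {a b : ℝ} {c : ℕ} (ha : 0 ≤ a) (hb : 0 ≤ b) (hc : (a + b) ^ 2 ≤ c) (n : ℕ) :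
    (a + n * b) ^ 2 ≤ ((c * (n + 1) ^ 2 : ℕ) : ℝ) := by
  have := mul_nonneg n.cast_nonneg ha
  calc (a + n * b) ^ 2 ≤ ((a + b) * (n + 1)) ^ 2 := by
        gcongr
        nlinarith
    _ = (a + b) ^ 2 * (n + 1) ^ 2 := by ring
    _ ≤ _ := by
        push_cast
        gcongr

lemma pow_add_two_mul_le {C c : ℕ} (hC : 1 ≤ C) (hc : 1 ≤ c) (D n : ℕ) :
    C ^ (c * n + 1) ^ 2 + 2 * (n * (D * (n + 1) ^ 2 * C ^ (c * n + 1) ^ 2)) ≤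
      (C ^ c ^ 2 * (16 * (1 + 2 * D))) ^ (n + 1) ^ 2 := by
  set N := C ^ (c * n + 1) ^ 2
  have hN : N ≤ (C ^ c ^ 2) ^ (n + 1) ^ 2 := by
    rw [← pow_mul, ← mul_pow]
    refine Nat.pow_le_pow_right hC ?_
    gcongr
    nlinarith
  calc N + 2 * (n * (D * (n + 1) ^ 2 * N))
      ≤ N * (n + 1) ^ 4 + 2 * ((n + 1) ^ 2 * (D * (n + 1) ^ 2 * N)) := by
        gcongr
        · exact Nat.le_mul_of_pos_right _ (by positivity)
        · nlinarith
    _ = N * ((1 + 2 * D) * (n + 1) ^ 4) := by ring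
    _ ≤ (C ^ c ^ 2) ^ (n + 1) ^ 2 * (16 * (1 + 2 * D)) ^ (n + 1) ^ 2 := by
        gcongr
        exact (mul_succ_pow_four_le _ n).trans
          (Nat.pow_le_pow_right (by lia) (Nat.le_self_pow two_ne_zero _))
    _ = _ := (mul_pow ..).symm

lemma exists_commutesInBall_pow (hS : S.Finite)
    (hcomm : ∀ s ∈ S, ∀ s' ∈ S, ∀ f, ∃ n, CommArea R s (MulAut.conj f s') n)
    (hy : letterCommutators y ⊆ S) (hL : L.Nodup) (hfull : ∀ i, i ∈ L)
    (hadv : ∀ v : ι → ℝ, ∑ i, v i ^ 2 = 1 →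
      Advances R y L S A ε K v ∨ Advances R y L S A ε K fun i => -v i) (hε : 0 < ε) :
    ∃ C : ℕ, 1 ≤ C ∧ ∃ r₀ : ℝ, 0 < r₀ ∧ ∀ j : ℕ,
      CommutesInBall R y L S ((r₀ + j * (ε / 2)) ^ 2) (C ^ ((j + 1) ^ 2)) := by
  obtain ⟨r₀, hr₀, hεr₀, hA⟩ : ∃ r₀ : ℝ, 1 ≤ r₀ ∧ ε ≤ r₀ ∧ 2 * (A : ℝ) / ε ≤ r₀ :=
    ⟨max 1 (max ε (2 * A / ε)), by simp, by simp, by simp⟩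
  obtain ⟨N₀, hN₀⟩ := exists_commutesInBall hS hcomm y L (r₀ ^ 2)
  obtain ⟨c, hc⟩ := exists_nat_ge ((r₀ + ε) ^ 2)
  have hc1 : 1 ≤ c := by
    have : (1 : ℝ) ≤ c := hc.trans' (one_le_pow₀ (by linarith))
    exact_mod_cast this
  set k := (5 * K + 1) * c ^ 2
  refine ⟨16 * k + N₀ + 1, by lia, r₀, by linarith, fun j => ?_⟩
  induction j with
  | zero =>
    intro u hu s hs s' hs'
    exact (hN₀ u (by simpa using hu) s hs s' hs').mono (by simp; lia)
  | succ j ih =>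
    have hj : (0 : ℝ) ≤ j * (ε / 2) := by positivity
    have next_radius : r₀ + (j + 1 : ℕ) * (ε / 2) = r₀ + j * (ε / 2) + ε / 2 := by push_cast; ring
    have radius_le : (r₀ + j * (ε / 2) + ε / 2) ^ 2 ≤ ((c * (j + 1) ^ 2 : ℕ) : ℝ) := by
      rw [add_right_comm]
      exact sq_add_mul_le (by positivity) (by positivity) (by rwa [add_assoc, add_halves]) j
    rw [next_radius]
    intro u hu s hs s' hs'
    refine (ih.enlarge hy hL hfull hadv hε (by linarith) ?_ radius_le
      (Nat.mul_pos hc1 (by positivity)) (Nat.one_le_pow _ _ (by lia)) u hu s hs s' hs').mono ?_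
    · rw [div_le_iff₀ hε] at hA
      nlinarith
    · set C := 16 * k + N₀ + 1
      calc (5 * K + 1) * (c * (j + 1) ^ 2) ^ 2 * C ^ (j + 1) ^ 2
          = k * (j + 1) ^ 4 * C ^ (j + 1) ^ 2 := by ring
        _ ≤ C ^ (j + 1) * C ^ (j + 1) ^ 2 := by
            gcongr
            exact (mul_succ_pow_four_le k j).trans (Nat.pow_le_pow_left (by lia) _)
        _ = C ^ (j + 1 + (j + 1) ^ 2) := (pow_add ..).symm
        _ ≤ C ^ (j + 1 + 1) ^ 2 := Nat.pow_le_pow_right (by lia) (by nlinarith)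

lemma CommutesInBall.commArea_conj (hc : CommutesInBall R y L S ρ N)
    (hy : letterCommutators y ⊆ S) (hL : L.Nodup) (hfull : ∀ i, i ∈ L) {n : ℕ}
    (hn : (n : ℝ) ^ 2 ≤ ρ) (hD : ρ ≤ D) {f : F} (hf : ProdLE (Set.range y) f n) (hs : s ∈ S)
    (hs' : s' ∈ S) : CommArea R s (MulAut.conj f s') (N + 2 * (n * (D * N))) := by
  rw [← Set.image_univ] at hf
  obtain ⟨u, hu, rfl⟩ := hf.exists_lift_eq
  obtain ⟨W, hW, -, rfl⟩ := hu.exists_list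
  have in_ball (W' : List (ι × Bool)) (hW' : W' <:+ W) :
      (sqNorm (0 + expVec (FreeGroup.mk W')) : ℝ) ≤ ρ := by
    have : (sqNorm (expVec (FreeGroup.mk W')) : ℝ) ≤ l1norm (expVec (FreeGroup.mk W')) ^ 2 := by
      exact_mod_cast sqNorm_le_sq_l1norm _
    rw [zero_add]
    refine this.trans (hn.trans' ?_)
    gcongr
    exact (l1norm_expVec_le (prodLE_mk fun _ _ => Set.mem_univ _)).trans (hW'.length_le.trans hW)
  have collect := hc.lift_mk_mul hy hL hfull hD hs' 0 W in_ball
  rw [orderedWord_zero, mul_one] at collect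
  refine ((hc _ (in_ball W List.suffix_rfl) s hs s' hs').congr_right collect).mono ?_
  gcongr

lemma exists_commArea_pow (hS : S.Finite)
    (hcomm : ∀ s ∈ S, ∀ s' ∈ S, ∀ f, ∃ n, CommArea R s (MulAut.conj f s') n)
    (hy : letterCommutators y ⊆ S) (hL : L.Nodup) (hfull : ∀ i, i ∈ L)
    (hadv : ∀ v : ι → ℝ, ∑ i, v i ^ 2 = 1 →
      Advances R y L S A ε K v ∨ Advances R y L S A ε K fun i => -v i) (hε : 0 < ε) :
    ∃ C : ℕ, ∀ n f, ProdLE (Set.range y) f n → ∀ s ∈ S, ∀ s' ∈ S,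
      CommArea R s (MulAut.conj f s') (C ^ (n + 1) ^ 2) := by
  obtain ⟨C, hC, r₀, hr₀, hball⟩ := exists_commutesInBall_pow hS hcomm hy hL hfull hadv hε
  obtain ⟨c, hc⟩ := exists_nat_ge (max 1 (2 / ε))
  obtain ⟨c', hc'⟩ := exists_nat_ge ((r₀ + c * (ε / 2)) ^ 2)
  obtain ⟨hc1, hcε⟩ := max_le_iff.1 hc
  rw [div_le_iff₀ hε] at hcε
  refine ⟨C ^ c ^ 2 * (16 * (1 + 2 * c')), fun n f hf s hs s' hs' => ?_⟩
  set ρ := (r₀ + (c * n : ℕ) * (ε / 2)) ^ 2 with hρ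
  have sq_le : (n : ℝ) ^ 2 ≤ ρ := by
    rw [hρ]
    gcongr
    push_cast
    nlinarith [mul_le_mul_of_nonneg_left hcε (Nat.cast_nonneg (α := ℝ) n)]
  have le_D : ρ ≤ ((c' * (n + 1) ^ 2 : ℕ) : ℝ) := by
    rw [hρ, Nat.cast_mul, mul_comm (c : ℝ), mul_assoc]
    exact sq_add_mul_le hr₀.le (by positivity) hc' n
  exact ((hball (c * n)).commArea_conj hy hL hfull sq_le le_D hf hs hs').mono
    (pow_add_two_mul_le hC (by exact_mod_cast hc1) c' n)

end CommutationBounds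

/-! ### Monomial words and heights -/

section MonomialWord

open scoped commutatorElement

variable {F ι : Type*} [Group F] {Y : ι → F} {L : List ι} {μ : ι →₀ ℕ} {Z : Set F} {i j : ι}
  {p w : F}

/-- The value at `Y` of the monomial with exponents `μ`, with factors in the order of `L`. -/
def monomialWord (Y : ι → F) (L : List ι) (μ : ι →₀ ℕ) : F := (L.map fun i => Y i ^ μ i).prod

@[simp] lemma monomialWord_nil : monomialWord Y [] μ = 1 := rfl

@[simp] lemma monomialWord_cons :
    monomialWord Y (i :: L) μ = Y i ^ μ i * monomialWord Y L μ := by simp [monomialWord]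

@[simp] lemma monomialWord_zero : monomialWord Y L 0 = 1 := by simp [monomialWord]

lemma monomialWord_congr {ν : ι →₀ ℕ} (h : ∀ i ∈ L, μ i = ν i) :
    monomialWord Y L μ = monomialWord Y L ν :=
  congrArg List.prod (List.map_congr_left fun i hi => by rw [h i hi])

lemma map_monomialWord {A : Type*} [CommGroup A] [Fintype ι] (φ : F →* A) (hL : L.Nodup)
    (hfull : ∀ i, i ∈ L) : φ (monomialWord Y L μ) = ∏ i, φ (Y i) ^ μ i := by
  classical
  rw [monomialWord, map_list_prod, List.map_map, ← List.prod_toFinset _ hL]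
  exact Finset.prod_congr (by ext; simp [hfull]) (by simp)

/-- The values of the prefixes of the word `∏ Yᵢ ^ μᵢ` written in the order of `L`. -/
inductive IsMonomialPrefix (Y : ι → F) (μ : ι →₀ ℕ) : List ι → F → Prop
  | one : IsMonomialPrefix Y μ [] 1
  | pow {j : ι} {L : List ι} {b : ℕ} (h : b ≤ μ j) : IsMonomialPrefix Y μ (j :: L) (Y j ^ b)
  | mul {j : ι} {L : List ι} {p : F} (h : IsMonomialPrefix Y μ L p) :
      IsMonomialPrefix Y μ (j :: L) (Y j ^ μ j * p)

lemma IsMonomialPrefix.exists_monomialWord (h : IsMonomialPrefix Y μ L p) (hL : L.Nodup) :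
    ∃ ν ≤ μ, p = monomialWord Y L ν := by
  classical
  induction h with
  | one => exact ⟨0, zero_le, rfl⟩
  | @pow j L b hb =>
    refine ⟨Finsupp.single j b, by simpa using hb, ?_⟩
    have : monomialWord Y L (Finsupp.single j b) = monomialWord Y L 0 :=
      monomialWord_congr fun i hi => by
        simp [Finsupp.single_eq_of_ne (ne_of_mem_of_not_mem hi (List.nodup_cons.1 hL).1)]
    simp [this]
  | @mul j L p _ ih =>
    obtain ⟨ν, hν, rfl⟩ := ih (List.nodup_cons.1 hL).2
    refine ⟨ν.update j (μ j), fun i => ?_, ?_⟩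
    · by_cases hij : i = j
      · simp [hij]
      · simpa [hij] using hν i
    · have : monomialWord Y L (ν.update j (μ j)) = monomialWord Y L ν :=
        monomialWord_congr fun i hi => by
          simp [ne_of_mem_of_not_mem hi (List.nodup_cons.1 hL).1]
      simp [this]

/-- The conjugates of the elements of `Z` by the prefixes of a monomial word. -/
def prefixConjugates (Y : ι → F) (L : List ι) (μ : ι →₀ ℕ) (Z : Set F) : Set F :=
  {a | ∃ ζ ∈ Z, ∃ p, IsMonomialPrefix Y μ L p ∧ a = MulAut.conj p ζ}

lemma ProdLE.conj_prefixConjugates {n : ℕ} (h : ProdLE (prefixConjugates Y L μ Z) w n) :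
    ProdLE (prefixConjugates Y (j :: L) μ Z) (MulAut.conj (Y j ^ μ j) w) n := by
  refine h.map (MulAut.conj (Y j ^ μ j)).toMonoidHom ?_
  rintro _ ⟨ζ, hζ, p, hp, rfl⟩
  exact ⟨ζ, hζ, _, hp.mul, by simp [mul_assoc]⟩

lemma prodLE_commutator_pow {Z' : Set F} {a z : F} (m : ℕ)
    (h : ∀ b ≤ m, MulAut.conj (a ^ b) ⁅a, z⁆ ∈ Z') : ProdLE Z' ⁅a ^ m, z⁆ m := by
  induction m with
  | zero => simpa using ProdLE.one
  | succ m ih =>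
    convert (ProdLE.of_mem (h m m.le_succ)).mul (ih fun b hb => h b (hb.trans m.le_succ)) using 1
    · simp [-map_pow, commutatorElement_def, pow_succ, mul_assoc]
    · rw [add_comm]

lemma prodLE_commutator_monomialWord {z : F} (h : ∀ j ∈ L, ⁅Y j, z⁆ ∈ Z) :
    ProdLE (prefixConjugates Y L μ Z) ⁅monomialWord Y L μ, z⁆ (L.map μ).sum := by
  induction L with
  | nil => simpa using ProdLE.one
  | cons j L ih =>
    have tail := (ih fun i hi => h i (List.mem_cons_of_mem j hi)).conj_prefixConjugates (j := j)
    have head : ProdLE (prefixConjugates Y (j :: L) μ Z) ⁅Y j ^ μ j, z⁆ (μ j) :=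
      prodLE_commutator_pow _ fun b hb => ⟨_, h j List.mem_cons_self, _, .pow hb, rfl⟩
    convert tail.mul head using 1
    · simp [-map_pow, commutatorElement_def, mul_assoc]
    · simp [add_comm]

/-- The letter `Y i` is moved to its place across the factors to its right in `L`, one commutator
per factor. -/
lemma prodLE_monomialWord_mul (hL : L.Nodup) (hi : i ∈ L) (h : ∀ j ∈ L, ⁅Y j, Y i⁆ ∈ Z) :
    ProdLE (prefixConjugates Y L μ Z)
      (monomialWord Y L μ * Y i * (monomialWord Y L (μ + Finsupp.single i 1))⁻¹)
      (L.map μ).sum := by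
  induction L with
  | nil => simp at hi
  | cons j L ih =>
    obtain ⟨hjL, hL⟩ := List.nodup_cons.1 hL
    have h_tail (l : ι) (hl : l ∈ L) := h l (List.mem_cons_of_mem j hl)
    have sum_le : (L.map μ).sum ≤ ((j :: L).map μ).sum := by simp
    by_cases hij : i = j
    · subst hij
      have tail_eq : monomialWord Y L (μ + Finsupp.single i 1) = monomialWord Y L μ :=
        monomialWord_congr fun l hl => by
          simp [Finsupp.single_eq_of_ne (ne_of_mem_of_not_mem hl hjL)]
      convert (prodLE_commutator_monomialWord h_tail).conj_prefixConjugates.mono sum_le using 1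
      simp [-map_pow, commutatorElement_def, mul_assoc, tail_eq, pow_succ]
    · have := ih hL ((List.mem_cons.1 hi).resolve_left hij) h_tail
      convert (this.conj_prefixConjugates (j := j)).mono sum_le using 1
      simp [-map_pow, mul_assoc, Finsupp.single_eq_of_ne (Ne.symm hij)]

end MonomialWord

section Height

variable {F ι : Type*} [Group F] {χ : F →* Multiplicative ℝ} {Y : ι → F} {L : List ι}
  {μ : ι →₀ ℕ} {p : F}

/-- The height function of a real character. -/
def height (χ : F →* Multiplicative ℝ) (f : F) : ℝ := (χ f).toAdd

@[simp] lemma height_one : height χ 1 = 0 := by simp [height]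

@[simp] lemma height_mul (f g : F) : height χ (f * g) = height χ f + height χ g := by
  simp [height]

@[simp] lemma height_inv (f : F) : height χ f⁻¹ = -height χ f := by simp [height]

@[simp] lemma height_pow (f : F) (n : ℕ) : height χ (f ^ n) = n * height χ f := by simp [height]

/-- An ordering `L` of the letters `Y` by increasing height. The heights of the prefixes of the
monomial words then first decrease and then increase, so they stay below those of the endpoints. -/
structure IsHeightOrder (χ : F →* Multiplicative ℝ) (Y : ι → F) (L : List ι) : Prop where
  nodup : L.Nodup
  mem (i : ι) : i ∈ L
  sorted : L.Pairwise fun i j => height χ (Y i) ≤ height χ (Y j)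

lemma exists_isHeightOrder [Finite ι] (χ : F →* Multiplicative ℝ) (Y : ι → F) :
    ∃ L, IsHeightOrder χ Y L := by
  have := Fintype.ofFinite ι
  let le (i j : ι) : Bool := height χ (Y i) ≤ height χ (Y j)
  refine ⟨Finset.univ.toList.mergeSort le, ?_, fun i => by simp, ?_⟩
  · exact (List.mergeSort_perm _ _).nodup_iff.2 (Finset.nodup_toList _)
  · refine (List.pairwise_mergeSort (le := le) ?_ ?_ _).imp fun h => by simpa [le] using h
    · intro a b c
      simpa [le] using le_trans
    · intro a b
      simpa [le] using le_total _ _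

lemma height_monomialWord_nonneg (h : ∀ j ∈ L, 0 ≤ height χ (Y j)) :
    0 ≤ height χ (monomialWord Y L μ) := by
  induction L with
  | nil => simp
  | cons j L ih =>
    rw [List.forall_mem_cons] at h
    simpa using add_nonneg (mul_nonneg (Nat.cast_nonneg _) h.1) (ih h.2)

lemma IsMonomialPrefix.height_le_of_nonneg (hp : IsMonomialPrefix Y μ L p)
    (h : ∀ j ∈ L, 0 ≤ height χ (Y j)) : height χ p ≤ height χ (monomialWord Y L μ) := by
  induction hp with
  | one => simp
  | pow hb =>
    rw [List.forall_mem_cons] at h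
    have := mul_le_mul_of_nonneg_right (Nat.cast_le (α := ℝ).2 hb) h.1
    simpa using this.trans (le_add_of_nonneg_right (height_monomialWord_nonneg h.2))
  | mul _ ih =>
    rw [List.forall_mem_cons] at h
    simpa using ih h.2

lemma IsMonomialPrefix.height_le (hp : IsMonomialPrefix Y μ L p)
    (h : L.Pairwise fun i j => height χ (Y i) ≤ height χ (Y j)) :
    height χ p ≤ max 0 (height χ (monomialWord Y L μ)) := by
  induction hp with
  | one => simp
  | @pow j L b hb =>
    obtain hj | hj := le_total (height χ (Y j)) 0
    · exact le_max_of_le_left (by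
        simpa using mul_nonpos_of_nonneg_of_nonpos (Nat.cast_nonneg b) hj)
    · exact le_max_of_le_right ((IsMonomialPrefix.pow hb).height_le_of_nonneg
        (List.forall_mem_cons.2 ⟨hj, fun i hi => hj.trans ((List.pairwise_cons.1 h).1 i hi)⟩))
  | @mul j L p hp ih =>
    obtain hj | hj := le_total (height χ (Y j)) 0
    · have := mul_nonpos_of_nonneg_of_nonpos (Nat.cast_nonneg (α := ℝ) (μ j)) hj
      rw [monomialWord_cons, height_mul, height_mul, height_pow]
      refine (add_le_add_right (ih (List.pairwise_cons.1 h).2) _).trans ?_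
      rw [← max_add_add_left]
      exact max_le_max_right _ (by simpa using this)
    · exact le_max_of_le_right (hp.mul.height_le_of_nonneg
        (List.forall_mem_cons.2 ⟨hj, fun i hi => hj.trans ((List.pairwise_cons.1 h).1 i hi)⟩))

end Height

/-! ### Normal forms modulo a kernel -/

section NormalWord

open scoped commutatorElement

variable {F ι : Type*} [Group F] {y : ι → F} {χ : F →* Multiplicative ℝ} {L : List (ι × Bool)}
  {Z Z' : Set F}

section SignedExponents

variable [Finite ι]

/-- The exponents of the letters `(i, ±)` in the shortest words with exponent vector `h`: the
positive and negative parts of `h`. -/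
noncomputable def signedExponents (h : ι →₀ ℤ) : ι × Bool →₀ ℕ :=
  Finsupp.equivFunOnFinite.symm fun p => (letterSign p.2 * h p.1).toNat

@[simp] lemma signedExponents_apply (h : ι →₀ ℤ) (p : ι × Bool) :
    signedExponents h p = (letterSign p.2 * h p.1).toNat := rfl

lemma degree_signedExponents (h : ι →₀ ℤ) : (signedExponents h).degree = l1norm h := by
  have := Fintype.ofFinite ι
  rw [Finsupp.degree_eq_sum, Fintype.sum_prod_type, l1norm_eq_sum]
  refine Finset.sum_congr rfl fun i _ => ?_
  simp only [signedExponents_apply, letterSign, Fintype.sum_bool, cond_true, cond_false]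
  lia

lemma signedExponents_add_single {h : ι →₀ ℤ} {i : ι} {b : Bool} (hb : 0 ≤ letterSign b * h i) :
    signedExponents (h + Finsupp.single i (letterSign b)) =
      signedExponents h + Finsupp.single (i, b) 1 := by
  ext ⟨j, b'⟩
  by_cases hij : j = i
  · subst hij
    cases b <;> cases b' <;> simp [letterSign] at hb ⊢ <;> lia
  · have : (j, b') ≠ (i, b) := fun e => hij (Prod.ext_iff.1 e).1
    simp [Finsupp.single_eq_of_ne hij, Finsupp.single_eq_of_ne this]

/-- The word `∏ yᵢ ^ hᵢ` written with positive powers of the letters `yᵢ^{±1}` in the order of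
`L`. -/
noncomputable def normalWord (y : ι → F) (L : List (ι × Bool)) (h : ι →₀ ℤ) : F :=
  monomialWord (letter y) L (signedExponents h)

end SignedExponents

lemma map_normalWord [Fintype ι] {A : Type*} [CommGroup A] (φ : F →* A) (hL : L.Nodup)
    (hfull : ∀ p, p ∈ L) (h : ι →₀ ℤ) : φ (normalWord y L h) = ∏ i, φ (y i) ^ h i := by
  rw [normalWord, map_monomialWord φ hL hfull, Fintype.prod_prod_type]
  refine Finset.prod_congr rfl fun i _ => ?_
  simp only [signedExponents_apply, letter_eq_zpow, letterSign, Fintype.prod_bool, cond_true,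
    cond_false, map_zpow, ← zpow_natCast, ← zpow_mul, ← zpow_add]
  congr 1
  lia

lemma map_lift_eq_prod_expVec [Fintype ι] {A : Type*} [CommGroup A] (φ : F →* A) (y : ι → F)
    (u : FreeGroup ι) : φ (FreeGroup.lift y u) = ∏ i, φ (y i) ^ expVec u i := by
  classical
  induction u using FreeGroup.induction_on with
  | C1 => simp
  | of i => simp [Finsupp.single_apply]
  | inv_of i _ => simp [Finsupp.single_apply]
  | mul u v hu hv => simp [hu, hv, zpow_add, Finset.prod_mul_distrib]

/-- The conjugates of elements of `Z` by monomial words of degree at most `d` and height at most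
`M`. -/
def lowConjugates (χ : F →* Multiplicative ℝ) (Y : ι → F) (L : List ι) (Z : Set F) (d : ℕ)
    (M : ℝ) : Set F :=
  {a | ∃ ζ ∈ Z, ∃ μ : ι →₀ ℕ, μ.degree ≤ d ∧ height χ (monomialWord Y L μ) ≤ M ∧
    a = MulAut.conj (monomialWord Y L μ) ζ}

lemma lowConjugates_mono {Y : ι → F} {L : List ι} {d d' : ℕ} {M M' : ℝ} (hZ : Z ⊆ Z')
    (hd : d ≤ d') (hM : M ≤ M') : lowConjugates χ Y L Z d M ⊆ lowConjugates χ Y L Z' d' M' := by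
  rintro _ ⟨ζ, hζ, μ, hμ, hμM, rfl⟩
  exact ⟨ζ, hZ hζ, μ, hμ.trans hd, hμM.trans hM, rfl⟩

/-- The conjugates of elements of `Z` by monomial words of degree at most `d`. -/
def monomialConjugates (Y : ι → F) (L : List ι) (Z : Set F) (d : ℕ) : Set F :=
  {a | ∃ ζ ∈ Z, ∃ μ : ι →₀ ℕ, μ.degree ≤ d ∧ a = MulAut.conj (monomialWord Y L μ) ζ}

lemma lowConjugates_subset_monomialConjugates {Y : ι → F} {L : List ι} {d d' : ℕ} {M : ℝ}
    (hd : IsEmpty ι ∨ d ≤ d') :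
    lowConjugates χ Y L Z d M ⊆ monomialConjugates Y L Z d' := by
  rintro _ ⟨ζ, hζ, μ, hμ, -, rfl⟩
  refine ⟨ζ, hζ, μ, ?_, rfl⟩
  obtain _ | hd := hd
  · simp [Subsingleton.elim μ 0]
  · exact hμ.trans hd

lemma prefixConjugates_subset_lowConjugates {Y : ι → F} {L : List ι} (hL : IsHeightOrder χ Y L)
    {μ : ι →₀ ℕ} : prefixConjugates Y L μ Z ⊆
      lowConjugates χ Y L Z μ.degree (max 0 (height χ (monomialWord Y L μ))) := by
  rintro _ ⟨ζ, hζ, p, hp, rfl⟩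
  obtain ⟨ν, hν, rfl⟩ := hp.exists_monomialWord hL.nodup
  exact ⟨ζ, hζ, ν, Finsupp.degree_mono hν, hp.height_le hL.sorted, rfl⟩

lemma l1norm_add_single_letterSign_le (h : ι →₀ ℤ) (i : ι) (b : Bool) :
    l1norm (h + Finsupp.single i (letterSign b)) ≤ l1norm h + 1 := by
  refine (l1norm_add_le _ _).trans (Nat.add_le_add_left ?_ _)
  rw [l1norm_single]
  cases b <;> rfl

section Step

variable [Finite ι] {c : ℝ}

lemma height_normalWord_add_single (hL : L.Nodup) (hfull : ∀ p, p ∈ L) (h : ι →₀ ℤ)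
    (p : ι × Bool) :
    height χ (normalWord y L (h + Finsupp.single p.1 (letterSign p.2))) =
      height χ (normalWord y L h) + height χ (letter y p) := by
  classical
  have := Fintype.ofFinite ι
  have map_eq : χ (normalWord y L (h + Finsupp.single p.1 (letterSign p.2))) =
      χ (normalWord y L h) * χ (letter y p) := by
    simp only [map_normalWord χ hL hfull, letter_eq_zpow, map_zpow, Finsupp.add_apply, zpow_add,
      Finset.prod_mul_distrib]
    congr 1
    simp [Finsupp.single_apply]
  simp [height, map_eq]

lemma prodLE_normalWord_mul_letter_of_nonneg (hL : IsHeightOrder χ (letter y) L) {h : ι →₀ ℤ}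
    {i : ι} {b : Bool} (hb : 0 ≤ letterSign b * h i) :
    ProdLE (lowConjugates χ (letter y) L (letterCommutators y) (l1norm h)
        (max 0 (height χ (normalWord y L h))))
      (normalWord y L h * letter y (i, b) *
        (normalWord y L (h + Finsupp.single i (letterSign b)))⁻¹) (l1norm h) := by
  classical
  have := Fintype.ofFinite ι
  have sum_eq : (L.map (signedExponents h)).sum = l1norm h := by
    rw [← List.sum_toFinset _ hL.nodup, ← degree_signedExponents, Finsupp.degree_eq_sum]
    exact Finset.sum_congr (by ext; simp [hL.mem]) fun _ _ => rfl
  have := prodLE_monomialWord_mul (μ := signedExponents h) hL.nodup (hL.mem (i, b))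
    (fun q _ => Set.mem_range_self (f := fun pq : (ι × Bool) × (ι × Bool) =>
      ⁅letter y pq.1, letter y pq.2⁆) (q, (i, b)))
  rw [← signedExponents_add_single hb, sum_eq] at this
  exact degree_signedExponents h ▸ this.mono_set (prefixConjugates_subset_lowConjugates hL)

lemma prodLE_normalWord_mul_letter (hL : IsHeightOrder χ (letter y) L)
    (hc : ∀ p, |height χ (letter y p)| ≤ c) (h : ι →₀ ℤ) (p : ι × Bool) :
    ProdLE (lowConjugates χ (letter y) L (letterCommutators y) (l1norm h + 1)
        (max 0 (height χ (normalWord y L h)) + c))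
      (normalWord y L h * letter y p *
        (normalWord y L (h + Finsupp.single p.1 (letterSign p.2)))⁻¹) (l1norm h + 1) := by
  obtain ⟨i, b⟩ := p
  set h' := h + Finsupp.single i (letterSign b) with h'_def
  have c_nonneg : 0 ≤ c := (abs_nonneg _).trans (hc (i, b))
  obtain hb | hb := le_or_gt 0 (letterSign b * h i)
  · exact ((prodLE_normalWord_mul_letter_of_nonneg hL hb).mono_set
      (lowConjugates_mono le_rfl (Nat.le_succ _) (by linarith))).mono (Nat.le_succ _)
  · have h_eq : h = h' + Finsupp.single i (letterSign !b) := by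
      simp [h'_def, letterSign_not, add_assoc]
    have hb' : 0 ≤ letterSign (!b) * h' i := by
      cases b <;> simp [h'_def, letterSign] at hb ⊢ <;> lia
    have norm_le : l1norm h' ≤ l1norm h + 1 := l1norm_add_single_letterSign_le h i b
    have height_le : height χ (normalWord y L h') ≤ height χ (normalWord y L h) + c := by
      rw [h'_def, height_normalWord_add_single hL.nodup hL.mem h (i, b)]
      linarith [(abs_le.1 (hc (i, b))).2]
    have back := (prodLE_normalWord_mul_letter_of_nonneg hL hb').inv
    rw [← h_eq] at back
    convert (back.mono_set (lowConjugates_mono le_rfl norm_le (max_le (by positivity)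
      (height_le.trans (add_le_add_left (le_max_right 0 _) c))))).mono norm_le using 1
    rw [letter_not]
    group

lemma prodLE_normalWord_mul_lift (hL : IsHeightOrder χ (letter y) L) (hc0 : 0 ≤ c)
    (hc : ∀ p, |height χ (letter y p)| ≤ c) (W : List (ι × Bool)) (h : ι →₀ ℤ) :
    ProdLE (lowConjugates χ (letter y) L (letterCommutators y) (l1norm h + W.length)
        (max 0 (height χ (normalWord y L h)) + W.length * c))
      (normalWord y L h * FreeGroup.lift y (FreeGroup.mk W) *
        (normalWord y L (h + expVec (FreeGroup.mk W)))⁻¹)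
      (W.length * (l1norm h + W.length)) := by
  induction W generalizing h with
  | nil => simpa [← FreeGroup.one_eq_mk] using ProdLE.one
  | cons p W ih =>
    set h' := h + Finsupp.single p.1 (letterSign p.2) with h'_def
    have norm_le : l1norm h' ≤ l1norm h + 1 := l1norm_add_single_letterSign_le h p.1 p.2
    have height_le : max 0 (height χ (normalWord y L h')) ≤
        max 0 (height χ (normalWord y L h)) + c := by
      rw [h'_def, height_normalWord_add_single hL.nodup hL.mem]
      refine max_le (by positivity) ?_
      linarith [(abs_le.1 (hc p)).2, le_max_right 0 (height χ (normalWord y L h))]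
    have Wc_nonneg : 0 ≤ W.length * c := by positivity
    have head := (prodLE_normalWord_mul_letter hL hc h p).mono_set
      (lowConjugates_mono le_rfl (d' := l1norm h + (p :: W).length) (by simp)
        (M' := max 0 (height χ (normalWord y L h)) + (p :: W).length * c) (by
          push_cast [List.length_cons]; linarith))
    have tail := (ih h').mono_set
      (lowConjugates_mono le_rfl (d' := l1norm h + (p :: W).length) (by simp; lia)
        (M' := max 0 (height χ (normalWord y L h)) + (p :: W).length * c) (by
          push_cast [List.length_cons]; linarith))
    refine ProdLE.mono (m := l1norm h + 1 + W.length * (l1norm h' + W.length)) ?_ ?_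
    · convert head.mul tail using 1
      simp [freeGroup_mk_cons, letter_eq_zpow, h'_def, add_assoc, mul_assoc]
    · rw [List.length_cons]
      nlinarith [Nat.mul_le_mul_left W.length norm_le]

end Step

end NormalWord

section VirtualBasis

open scoped commutatorElement

lemma letterCommutators_subset_ker {F Q ι : Type*} [Group F] [CommGroup Q] {y : ι → F}
    (π : F →* Q) : letterCommutators y ⊆ π.ker := by
  rintro _ ⟨pq, rfl⟩
  rw [SetLike.mem_coe, MonoidHom.mem_ker, map_commutatorElement,
    commutatorElement_eq_one_iff_mul_comm, mul_comm]

variable {F Q ι : Type*} [Group F] [CommGroup Q] [Fintype ι] {π : F →* Q}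

/-- Coordinates on the abelian group `Q`, as an extension of the free abelian group on the images
of `y` by finitely many representatives, with all the data lifted along `π : F →* Q`. -/
structure VirtualBasis (π : F →* Q) (ι : Type*) [Fintype ι] where
  y : ι → F
  injective : Injective fun h : ι →₀ ℤ => ∏ i, π (y i) ^ h i
  coord : Q → ι →₀ ℤ
  rep : Q → F
  finite_range_rep : (Set.range rep).Finite
  coord_mul_rep (q : Q) : (∏ i, π (y i) ^ coord q i) * π (rep q) = q

namespace VirtualBasis

variable (B : VirtualBasis π ι) {χ : F →* Multiplicative ℝ} {L : List (ι × Bool)} {A : Set F}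

/-- The lift of `q` to a normal word times a representative. -/
noncomputable def normalForm (L : List (ι × Bool)) (q : Q) : F :=
  normalWord B.y L (B.coord q) * B.rep q

lemma map_normalForm (hL : L.Nodup) (hfull : ∀ p, p ∈ L) (q : Q) : π (B.normalForm L q) = q := by
  rw [normalForm, map_mul, map_normalWord π hL hfull, B.coord_mul_rep]

lemma coord_eq_add_of_prod_eq {q q' : Q} {x : F} {h : ι →₀ ℤ} (hq : q * π x = q')
    (hh : ∏ i, π (B.y i) ^ h i = π (B.rep q * x * (B.rep q')⁻¹)) :
    B.coord q' = B.coord q + h := by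
  refine B.injective ?_
  have hq' : (∏ i, π (B.y i) ^ B.coord q i) * (π (B.rep q) * π x) =
      (∏ i, π (B.y i) ^ B.coord q' i) * π (B.rep q') := by
    rw [B.coord_mul_rep, ← mul_assoc, B.coord_mul_rep, hq]
  simp only [Finsupp.add_apply, zpow_add, Finset.prod_mul_distrib, hh, map_mul, map_inv]
  rw [← mul_assoc, hq', mul_inv_cancel_right]

lemma exists_edge_correction (hA : A.Finite) :
    ∃ (Z : Set F) (c : ℕ), Z.Finite ∧ Z ⊆ π.ker ∧ ∀ q, ∀ x ∈ A, ∃ ζ ∈ Z, ∃ W : List (ι × Bool),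
      W.length ≤ c ∧ B.coord (q * π x) = B.coord q + expVec (FreeGroup.mk W) ∧
      B.rep q * x * (B.rep (q * π x))⁻¹ = ζ * FreeGroup.lift B.y (FreeGroup.mk W) := by
  let E : Set F := {b | (∃ r ∈ Set.range B.rep, ∃ x ∈ A, ∃ r' ∈ Set.range B.rep, r * x * r'⁻¹ = b) ∧
    ∃ W : List (ι × Bool), π b = π (FreeGroup.lift B.y (FreeGroup.mk W))}
  have hE : E.Finite := by
    refine ((B.finite_range_rep.prod (hA.prod B.finite_range_rep)).image
      fun p => p.1 * p.2.1 * p.2.2⁻¹).subset ?_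
    rintro _ ⟨⟨r, hr, x, hx, r', hr', rfl⟩, -⟩
    exact ⟨(r, x, r'), ⟨hr, hx, hr'⟩, rfl⟩
  choose! W hW using fun b (hb : b ∈ E) => hb.2
  obtain ⟨c, hc⟩ := (hE.image fun b => (W b).length).bddAbove
  refine ⟨(fun b => b * (FreeGroup.lift B.y (FreeGroup.mk (W b)))⁻¹) '' E, c, hE.image _, ?_,
    fun q x hx => ?_⟩
  · rintro _ ⟨b, hb, rfl⟩
    simp [MonoidHom.mem_ker, hW b hb]
  set b := B.rep q * x * (B.rep (q * π x))⁻¹ with b_def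
  have hb : b ∈ E := by
    refine ⟨⟨_, ⟨q, rfl⟩, x, hx, _, ⟨_, rfl⟩, rfl⟩, ?_⟩
    obtain ⟨u, hu, expVec_u⟩ := exists_expVec_eq (B.coord (q * π x) - B.coord q)
    obtain ⟨V, -, -, rfl⟩ := hu.exists_list
    refine ⟨V, ?_⟩
    rw [map_lift_eq_prod_expVec, expVec_u, b_def]
    simp only [Finsupp.sub_apply, zpow_sub, Finset.prod_mul_distrib, Finset.prod_inv_distrib,
      map_mul, map_inv]
    rw [mul_inv_eq_iff_eq_mul, mul_right_comm, eq_mul_inv_iff_mul_eq, B.coord_mul_rep,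
      mul_right_comm, mul_comm (π (B.rep q)), B.coord_mul_rep]
  exact ⟨_, ⟨b, hb, rfl⟩, W b, hc ⟨b, hb, rfl⟩,
    B.coord_eq_add_of_prod_eq rfl (by rw [← map_lift_eq_prod_expVec, ← hW b hb]), by simp⟩

lemma max_height_normalWord_le {c : ℝ} (hc : ∀ q, |height χ (B.rep q)| ≤ c) (q : Q) :
    max 0 (height χ (normalWord B.y L (B.coord q))) ≤
      max 0 (height χ (B.normalForm L q)) + c := by
  have rep_le := abs_le.1 (hc q)
  rw [normalForm, height_mul]
  grind

lemma exists_prodLE_edge (hL : IsHeightOrder χ (letter B.y) L) (hA : A.Finite) :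
    ∃ (Z : Set F) (c : ℕ), Z.Finite ∧ Z ⊆ π.ker ∧ ∀ q, ∀ x ∈ A,
      l1norm (B.coord (q * π x)) ≤ l1norm (B.coord q) + c ∧
      ProdLE (lowConjugates χ (letter B.y) L Z (l1norm (B.coord q) + c)
          (max 0 (height χ (B.normalForm L q)) + c))
        (B.normalForm L q * x * (B.normalForm L (q * π x))⁻¹) (c * (l1norm (B.coord q) + 1)) := by
  obtain ⟨Z, c₁, hZ, hZπ, edge⟩ := B.exists_edge_correction hA
  obtain ⟨c₂, hc₂⟩ := Finite.exists_le fun p => |height χ (letter B.y p)|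
  have := B.finite_range_rep.to_subtype
  obtain ⟨c₃, hc₃⟩ := Finite.exists_le fun r : Set.range B.rep => |height χ r|
  obtain ⟨c₄, hc₄⟩ := exists_nat_ge (c₁ * max 0 c₂ + c₃)
  refine ⟨Z ∪ letterCommutators B.y, c₁ * c₁ + c₁ + c₄ + 1, hZ.union (Set.finite_range _),
    Set.union_subset hZπ (letterCommutators_subset_ker π), fun q x hx => ?_⟩
  obtain ⟨ζ, hζ, W, hW, coord_eq, rep_eq⟩ := edge q x hx
  have W_le : W.length * max 0 c₂ ≤ c₁ * max 0 c₂ := by gcongr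
  have height_le : max 0 (height χ (normalWord B.y L (B.coord q))) + W.length * max 0 c₂ ≤
      max 0 (height χ (B.normalForm L q)) + (c₁ * c₁ + c₁ + c₄ + 1 : ℕ) := by
    have := B.max_height_normalWord_le (χ := χ) (L := L) (fun q => hc₃ ⟨B.rep q, q, rfl⟩) q
    push_cast
    nlinarith [Nat.cast_nonneg (α := ℝ) c₁]
  have head : MulAut.conj (normalWord B.y L (B.coord q)) ζ ∈ lowConjugates χ (letter B.y) L
      (Z ∪ letterCommutators B.y) (l1norm (B.coord q) + (c₁ * c₁ + c₁ + c₄ + 1))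
      (max 0 (height χ (B.normalForm L q)) + (c₁ * c₁ + c₁ + c₄ + 1 : ℕ)) := by
    refine ⟨ζ, Or.inl hζ, _, by rw [degree_signedExponents]; lia, ?_, rfl⟩
    refine (le_max_right 0 _).trans (le_trans ?_ height_le)
    exact le_add_of_nonneg_right (by positivity)
  have tail := (prodLE_normalWord_mul_lift hL (le_max_left 0 c₂)
    (fun p => (hc₂ p).trans (le_max_right _ _)) W (B.coord q)).mono_set
    (lowConjugates_mono (Z' := Z ∪ letterCommutators B.y) Set.subset_union_right
      (by lia : _ ≤ l1norm (B.coord q) + (c₁ * c₁ + c₁ + c₄ + 1)) height_le)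
  constructor
  · rw [coord_eq]
    exact (l1norm_add_le _ _).trans (Nat.add_le_add_left
      ((l1norm_expVec_le (prodLE_mk (D := Set.univ) fun _ _ => trivial)).trans (by lia)) _)
  convert ((ProdLE.of_mem head).mul tail).mono (n := (c₁ * c₁ + c₁ + c₄ + 1) *
    (l1norm (B.coord q) + 1)) ?_ using 1
  · rw [normalForm, normalForm, coord_eq, mul_assoc _ (B.rep q),
      eq_mul_of_mul_inv_eq rep_eq]
    simp [mul_assoc]
  · nlinarith [Nat.mul_le_mul_left c₁ hW, Nat.mul_le_mul_right (l1norm (B.coord q) + W.length) hW]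

lemma prodLE_walk {Z T : Set F} {c : ℕ} (edge : ∀ q, ∀ x, x ∈ T ∨ x⁻¹ ∈ T →
      l1norm (B.coord (q * π x)) ≤ l1norm (B.coord q) + c ∧
      ProdLE (lowConjugates χ (letter B.y) L Z (l1norm (B.coord q) + c)
          (max 0 (height χ (B.normalForm L q)) + c))
        (B.normalForm L q * x * (B.normalForm L (q * π x))⁻¹) (c * (l1norm (B.coord q) + 1)))
    {w : F} {n : ℕ} (hw : ProdLE T w n) {d : ℕ} (q : Q)
    (hd : IsEmpty ι ∨ l1norm (B.coord q) + c * n + c ≤ d) :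
    ProdLE (monomialConjugates (letter B.y) L Z d)
      (B.normalForm L q * w * (B.normalForm L (q * π w))⁻¹) (n * (c * (d + 1))) := by
  refine hw.induction (p := fun w n => ∀ q, (IsEmpty ι ∨ l1norm (B.coord q) + c * n + c ≤ d) →
    ProdLE (monomialConjugates (letter B.y) L Z d)
      (B.normalForm L q * w * (B.normalForm L (q * π w))⁻¹) (n * (c * (d + 1)))) ?_ ?_ q hd
  · intro n q _
    simpa using ProdLE.one
  · intro x w n hx ih q hd
    obtain ⟨norm_le, step⟩ := edge q x hx
    have head := step.mono_set (lowConjugates_subset_monomialConjugates (d' := d)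
      (hd.imp (fun (_ : IsEmpty ι) => inferInstance) fun hd => by nlinarith))
    have tail := ih (q * π x) (hd.imp_right fun hd => by nlinarith)
    have norm_le_d : l1norm (B.coord q) ≤ d := by
      obtain _ | hd := hd
      · simp [Subsingleton.elim (B.coord q) 0]
      · nlinarith
    convert (head.mono (Nat.mul_le_mul_left c (Nat.add_le_add_right norm_le_d 1))).mul tail using 1
    · simp [mul_assoc]
    · ring

lemma exists_prodLE_of_mem_ker (hL : L.Nodup) (hfull : ∀ p, p ∈ L) {T : Set F} (hT : T.Finite) :
    ∃ (Z : Set F) (C : ℕ), Z.Finite ∧ Z ⊆ π.ker ∧ ∀ w ∈ π.ker, ∀ n, ProdLE T w n →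
      ∀ d, IsEmpty ι ∨ C * (n + 1) ≤ d →
        ProdLE (monomialConjugates (letter B.y) L Z d) w (C * (n + 1) * (d + 1)) := by
  set T' := insert (B.normalForm L 1) T
  have hT' : T'.Finite := hT.insert _
  have order : IsHeightOrder (1 : F →* Multiplicative ℝ) (letter B.y) L :=
    ⟨hL, hfull, List.pairwise_of_forall fun _ _ => by simp [height]⟩
  obtain ⟨Z, c, hZ, hZπ, edge⟩ := B.exists_prodLE_edge order (hT'.union hT'.inv)
  refine ⟨Z, l1norm (B.coord 1) + 3 * c, hZ, hZπ, fun w hw n hwn d hd => ?_⟩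
  have base : ProdLE T' (B.normalForm L 1) 1 := ProdLE.of_mem (Set.mem_insert _ _)
  have walk := B.prodLE_walk (T := T') edge
    ((base.inv.mul (hwn.mono_set (Set.subset_insert _ _))).mul base) 1 (hd.imp_right fun hd => by
      nlinarith [Nat.zero_le (l1norm (B.coord 1) * n), Nat.zero_le (c * n)])
  rw [map_mul, map_mul, MonoidHom.mem_ker.1 hw, map_inv, mul_one, inv_mul_cancel, mul_one] at walk
  convert walk.mono (n := (l1norm (B.coord 1) + 3 * c) * (n + 1) * (d + 1)) ?_ using 1
  · group
  · rw [← mul_assoc]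
    exact Nat.mul_le_mul_right _ (by nlinarith [Nat.zero_le (l1norm (B.coord 1) * n)])

end VirtualBasis

lemma exists_virtualBasis {k : ℕ} (hπ : Surjective π) (hk : HasTFRank Q k) :
    Nonempty (VirtualBasis π (Fin k)) := by
  obtain ⟨H, hH, ⟨e⟩⟩ := hk
  have : Finite (Q ⧸ H) := Nat.finite_of_card_ne_zero hH
  have mul_out_inv_mem (q : Q) : q * ((q : Q ⧸ H).out)⁻¹ ∈ H := by
    rw [mul_comm, ← QuotientGroup.eq, QuotientGroup.out_eq']
  have prod_eq (h : Fin k →₀ ℤ) :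
      ∏ i, ((e.symm (.ofAdd (Pi.single i 1)) : H) : Q) ^ h i = e.symm (.ofAdd ⇑h) := by
    simp only [← Subgroup.coe_zpow, ← map_zpow, ← Subgroup.val_finsetProd, ← map_prod,
      ← ofAdd_zsmul, ← ofAdd_sum]
    congr 3
    ext j
    simp [Finset.sum_apply, Pi.single_apply]
  choose σ hσ using hπ
  exact ⟨{
    y i := σ (e.symm (.ofAdd (Pi.single i 1)) : H)
    injective a b hab := by
      simpa only [hσ, prod_eq, SetLike.coe_eq_coe, EmbeddingLike.apply_eq_iff_eq,
        DFunLike.coe_fn_eq] using hab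
    coord q := Finsupp.equivFunOnFinite.symm (e ⟨_, mul_out_inv_mem q⟩).toAdd
    rep q := σ (q : Q ⧸ H).out
    finite_range_rep := (Set.finite_range fun z : Q ⧸ H => σ z.out).subset
      (Set.range_subset_iff.2 fun q => ⟨q, rfl⟩)
    coord_mul_rep q := by simp only [hσ]; rw [prod_eq]; simp }⟩

end VirtualBasis

/-! ### Holonomy of labelled Cayley graphs -/

section NonCommuting

universe u

/-- The action of the group `B` on the fibre of `A × B` over `a` by left multiplication; the other
fibres are fixed. -/
def fiberMul (A : Type*) {B : Type*} [DecidableEq A] [Group B] (a : A) :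
    B →* Equiv.Perm (A × B) where
  toFun b := Equiv.Perm.prodExtendRight a (Equiv.mulLeft b)
  map_one' := by
    ext ⟨a', b⟩ : 1
    by_cases h : a' = a
    · simp [h]
    · simp [Equiv.Perm.prodExtendRight_apply_ne _ h]
  map_mul' b b' := by
    ext ⟨a', b⟩ : 1
    by_cases h : a' = a
    · simp [h]
    · simp [Equiv.Perm.prodExtendRight_apply_ne _ h]

lemma not_commute_fiberMul {A B : Type*} [DecidableEq A] [DecidableEq B] [Group A] [Group B]
    {a : A} {b : B} (ha : a ≠ 1) (hb : b ≠ 1) :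
    ¬ Commute ((Equiv.prodComm B A).permCongrHom (fiberMul B 1 a)) (fiberMul A 1 b) := by
  intro h
  have := congrArg (fun σ : Equiv.Perm (A × B) => σ (1, 1)) h.eq
  simp [fiberMul, Equiv.permCongrHom, Equiv.Perm.prodExtendRight_apply_ne, ha, hb] at this

lemma exists_monoidHom_not_commute {K : Type u} [Group K] (M₁ M₂ : Subgroup K) [M₁.Normal]
    [M₂.Normal] : ∃ (P : Type u) (_ : Group P) (a₁ a₂ : K →* P), M₁ ≤ a₁.ker ∧ M₂ ≤ a₂.ker ∧
      ∀ f ∉ M₁, ∀ g ∉ M₂, ¬ Commute (a₁ f) (a₂ g) := by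
  classical
  refine ⟨Equiv.Perm ((K ⧸ M₁) × (K ⧸ M₂)), inferInstance,
    ((Equiv.prodComm (K ⧸ M₂) (K ⧸ M₁)).permCongrHom.toMonoidHom.comp (fiberMul _ 1)).comp
      (QuotientGroup.mk' M₁), (fiberMul _ 1).comp (QuotientGroup.mk' M₂),
    fun f hf => ?_, fun f hf => ?_, fun f hf g hg => not_commute_fiberMul
      (mt (QuotientGroup.eq_one_iff f).1 hf) (mt (QuotientGroup.eq_one_iff g).1 hg)⟩
  · rw [MonoidHom.mem_ker, MonoidHom.comp_apply, QuotientGroup.mk'_apply,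
      (QuotientGroup.eq_one_iff f).2 hf, map_one]
  · rw [MonoidHom.mem_ker, MonoidHom.comp_apply, QuotientGroup.mk'_apply,
      (QuotientGroup.eq_one_iff f).2 hf, map_one]

end NonCommuting

section Holonomy

open scoped commutatorElement

variable {X Q P : Type*} [Group Q] [Group P] {π : FreeGroup X →* Q} {T T' : Set Q} {q : Q}
  {w w' : FreeGroup X}

/-- The path labelled by `w` which starts at `q` in the Cayley graph of `Q` uses, up to
backtracking, only edges with both endpoints in `T`. -/
inductive PathIn (π : FreeGroup X →* Q) (T : Set Q) : Q → FreeGroup X → Prop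
  | one (q : Q) : PathIn π T q 1
  | of {q : Q} {x : X} : q ∈ T → q * π (FreeGroup.of x) ∈ T → PathIn π T q (FreeGroup.of x)
  | mul {q : Q} {w w' : FreeGroup X} :
      PathIn π T q w → PathIn π T (q * π w) w' → PathIn π T q (w * w')
  | inv {q : Q} {w : FreeGroup X} : PathIn π T q w → PathIn π T (q * π w) w⁻¹

namespace PathIn

lemma mono (hT : T ⊆ T') (h : PathIn π T q w) : PathIn π T' q w := by
  induction h with
  | one q => exact .one q
  | of hq hqx => exact .of (hT hq) (hT hqx)
  | mul _ _ hw hw' => exact hw.mul hw'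
  | inv _ hw => exact hw.inv

lemma inv' (h : PathIn π T (q * (π w)⁻¹) w) : PathIn π T q w⁻¹ := by
  simpa using h.inv

lemma conj {f : FreeGroup X} (hf : PathIn π T 1 f) (hw : PathIn π T (π f) w) (h : w ∈ π.ker) :
    PathIn π T 1 (MulAut.conj f w) := by
  rw [MulAut.conj_apply]
  refine (hf.mul (by simpa using hw)).mul ?_
  simpa [MonoidHom.mem_ker.1 h] using hf.inv

end PathIn

/-- The permutation representation of the free group on `Q × P` obtained from a labelling `φ` of
the edges of the Cayley graph of `Q` by elements of `P`. -/
def holonomyRep (π : FreeGroup X →* Q) (φ : Q → X → P) : FreeGroup X →* Equiv.Perm (Q × P) :=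
  FreeGroup.lift fun x =>
    { toFun p := (p.1 * (π (FreeGroup.of x))⁻¹, φ (p.1 * (π (FreeGroup.of x))⁻¹) x * p.2)
      invFun p := (p.1 * π (FreeGroup.of x), (φ p.1 x)⁻¹ * p.2)
      left_inv p := by simp
      right_inv p := by simp }

/-- The product of the labels `φ` along the path labelled by `w` starting at `q` is `g`. -/
def HasHolonomy (π : FreeGroup X →* Q) (φ : Q → X → P) (q : Q) (w : FreeGroup X) (g : P) : Prop :=
  ∀ p, holonomyRep π φ w (q * π w, p) = (q, g * p)

namespace HasHolonomy

variable {φ : Q → X → P} {g g' : P}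

lemma one (q : Q) : HasHolonomy π φ q 1 1 := fun p => by simp

lemma of (q : Q) (x : X) : HasHolonomy π φ q (FreeGroup.of x) (φ q x) := fun p => by
  simp [holonomyRep]

lemma mul (h : HasHolonomy π φ q w g) (h' : HasHolonomy π φ (q * π w) w' g') :
    HasHolonomy π φ q (w * w') (g * g') := fun p => by
  rw [map_mul, map_mul, Equiv.Perm.mul_apply, ← mul_assoc, h', h, mul_assoc]

lemma inv (h : HasHolonomy π φ q w g) : HasHolonomy π φ (q * π w) w⁻¹ g⁻¹ := fun p => by
  rw [map_inv, map_inv, Equiv.Perm.inv_eq_iff_eq, h, mul_inv_cancel_right, mul_inv_cancel_left]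

lemma commute (h : HasHolonomy π φ q w g) (h' : HasHolonomy π φ q w' g') (hw : w ∈ π.ker)
    (hw' : w' ∈ π.ker) (hcomm : ⁅w, w'⁆ ∈ (holonomyRep π φ).ker) : Commute g g' := by
  rw [MonoidHom.mem_ker] at hw hw'
  have comm : holonomyRep π φ (w * w') = holonomyRep π φ (w' * w) := by
    rwa [MonoidHom.mem_ker, map_commutatorElement, commutatorElement_eq_one_iff_mul_comm,
      ← map_mul, ← map_mul] at hcomm
  have left := h.mul (w' := w') (g' := g') (by simpa [hw] using h') 1
  have right := h'.mul (w' := w) (g' := g) (by simpa [hw'] using h) 1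
  rw [comm, show π (w * w') = π (w' * w) by simp [hw, hw'], right] at left
  exact show g * g' = g' * g by simpa using (Prod.ext_iff.1 left).2.symm

end HasHolonomy

section Edge

variable {s : Q → FreeGroup X} (hs : ∀ q, π (s q) = q)

/-- The element of the kernel of `π` measuring how far the section `s` is from being compatible
with right multiplication by `w`. -/
def edge (q : Q) (w : FreeGroup X) : π.ker :=
  ⟨s q * w * (s (q * π w))⁻¹, by simp [MonoidHom.mem_ker, hs]⟩

lemma coe_edge_of_mem_ker (q : Q) (hw : w ∈ π.ker) :
    (edge hs q w : FreeGroup X) = MulAut.conj (s q) w := by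
  simp [edge, MonoidHom.mem_ker.1 hw]

lemma PathIn.hasHolonomy {φ : Q → X → P} {a : π.ker →* P}
    (hφ : ∀ q x, q ∈ T → q * π (FreeGroup.of x) ∈ T → φ q x = a (edge hs q (FreeGroup.of x)))
    (h : PathIn π T q w) : HasHolonomy π φ q w (a (edge hs q w)) := by
  induction h with
  | one q =>
    rw [show edge hs q 1 = 1 from Subtype.ext (by simp [edge]), map_one]
    exact HasHolonomy.one q
  | @of q x hq hqx => exact hφ q x hq hqx ▸ HasHolonomy.of q x
  | @mul q w w' _ _ hw hw' =>
    convert hw.mul hw' using 1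
    rw [← map_mul]
    congr 1
    ext
    simp [edge, mul_assoc]
  | @inv q w _ hw =>
    convert hw.inv using 1
    rw [← map_inv]
    congr 1
    ext
    simp [edge, mul_assoc]

end Edge

variable {s₁ s₂ : Q → FreeGroup X} {T₁ T₂ : Set Q} {R : Set (FreeGroup X)}

lemma commute_of_hasHolonomy {φ : Q → X → P} (hs₁ : ∀ q, π (s₁ q) = q) (hs₂ : ∀ q, π (s₂ q) = q)
    {a₁ a₂ : π.ker →* P}
    (hφ₁ : ∀ q x, q ∈ T₁ → q * π (FreeGroup.of x) ∈ T₁ → φ q x = a₁ (edge hs₁ q (FreeGroup.of x)))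
    (hφ₂ : ∀ q x, q ∈ T₂ → q * π (FreeGroup.of x) ∈ T₂ → φ q x = a₂ (edge hs₂ q (FreeGroup.of x)))
    (hRπ : R ⊆ π.ker)
    (hR : ∀ r ∈ R, ∀ q, PathIn π T₁ q r ∧ a₁ (edge hs₁ q r) = 1 ∨
      PathIn π T₂ q r ∧ a₂ (edge hs₂ q r) = 1)
    {v w : FreeGroup X} (hv : v ∈ π.ker) (hw : w ∈ π.ker) (hvT : PathIn π T₁ 1 v)
    (hwT : PathIn π T₂ 1 w) (hvw : ⁅v, w⁆ ∈ Subgroup.normalClosure R) :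
    Commute (a₁ (edge hs₁ 1 v)) (a₂ (edge hs₂ 1 w)) := by
  have relators : Subgroup.normalClosure R ≤ (holonomyRep π φ).ker := by
    refine Subgroup.normalClosure_le_normal fun r hr => ?_
    rw [SetLike.mem_coe, MonoidHom.mem_ker]
    ext1 ⟨q, p⟩
    have trivial_holonomy : HasHolonomy π φ q r 1 := by
      obtain ⟨hT, ha⟩ | ⟨hT, ha⟩ := hR r hr q
      · exact ha ▸ hT.hasHolonomy hs₁ hφ₁
      · exact ha ▸ hT.hasHolonomy hs₂ hφ₂
    simpa [MonoidHom.mem_ker.1 (hRπ hr)] using trivial_holonomy p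
  exact (hvT.hasHolonomy hs₁ hφ₁).commute (hwT.hasHolonomy hs₂ hφ₂) hv hw (relators hvw)

variable {H₁ H₂ : Subgroup (FreeGroup X)}

lemma normal_subgroupOf_ker {F Q : Type*} [Group F] [Group Q] {π : F →* Q} {H : Subgroup F}
    (hH : ⁅π.ker, π.ker⁆ ≤ H) : (H.subgroupOf π.ker).Normal := by
  refine ⟨fun a ha g => ?_⟩
  have := mul_mem (hH (Subgroup.commutator_mem_commutator g.2 a.2)) ha
  simpa [Subgroup.mem_subgroupOf, commutatorElement_def] using this

lemma conj_mem_of_map_eq {F Q : Type*} [Group F] [Group Q] {π : F →* Q} {H : Subgroup F}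
    (hH : ⁅π.ker, π.ker⁆ ≤ H) {f g w : F} (hfg : π f = π g) (hw : w ∈ π.ker)
    (h : MulAut.conj f w ∈ H) : MulAut.conj g w ∈ H := by
  have hgf : g * f⁻¹ ∈ π.ker := by simp [MonoidHom.mem_ker, hfg]
  have := mul_mem (hH (Subgroup.commutator_mem_commutator hgf (π.normal_ker.conj_mem w hw f))) h
  simpa [commutatorElement_def, mul_assoc] using this

/-- Gluing the labellings of the edges in `T₁` and in `T₂` by two non-commuting quotients of the
kernel of `π` makes the free group act with all relators in `R` trivial. -/
lemma mem_or_mem_of_pathIn (hs₁ : ∀ q, π (s₁ q) = q) (hs₂ : ∀ q, π (s₂ q) = q)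
    (hRπ : R ⊆ π.ker) (hcomm : ⁅π.ker, π.ker⁆ ≤ Subgroup.normalClosure R)
    (hH₁ : Subgroup.normalClosure R ≤ H₁) (hH₂ : Subgroup.normalClosure R ≤ H₂)
    (overlap : ∀ q ∈ T₁ ∩ T₂, ∀ x,
      (edge hs₁ q (FreeGroup.of x) : FreeGroup X) ∈ H₁ ∧
      (edge hs₂ q (FreeGroup.of x) : FreeGroup X) ∈ H₂)
    (hR : ∀ r ∈ R, ∀ q, PathIn π T₁ q r ∨ PathIn π T₂ q r)
    {v w : FreeGroup X} (hv : v ∈ π.ker) (hw : w ∈ π.ker) (hvT : PathIn π T₁ 1 v)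
    (hwT : PathIn π T₂ 1 w) : v ∈ H₁ ∨ w ∈ H₂ := by
  classical
  have := normal_subgroupOf_ker (hcomm.trans hH₁)
  have := normal_subgroupOf_ker (hcomm.trans hH₂)
  obtain ⟨P, _, a₁, a₂, ha₁, ha₂, not_commute⟩ :=
    exists_monoidHom_not_commute (H₁.subgroupOf π.ker) (H₂.subgroupOf π.ker)
  let φ (q : Q) (x : X) : P := if q ∈ T₁ ∧ q * π (FreeGroup.of x) ∈ T₁
    then a₁ (edge hs₁ q (FreeGroup.of x)) else a₂ (edge hs₂ q (FreeGroup.of x))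
  have hφ₂ (q x) (hq : q ∈ T₂) (_ : q * π (FreeGroup.of x) ∈ T₂) :
      φ q x = a₂ (edge hs₂ q (FreeGroup.of x)) := by
    by_cases hT : q ∈ T₁ ∧ q * π (FreeGroup.of x) ∈ T₁
    · rw [show φ q x = _ from if_pos hT, ha₁ (overlap q ⟨hT.1, hq⟩ x).1,
        ha₂ (overlap q ⟨hT.1, hq⟩ x).2]
    · exact if_neg hT
  have relator_edge {s : Q → FreeGroup X} (hs : ∀ q, π (s q) = q) (q r) (hr : r ∈ R) :
      (edge hs q r : FreeGroup X) ∈ Subgroup.normalClosure R :=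
    coe_edge_of_mem_ker hs q (hRπ hr) ▸ Subgroup.normalClosure_normal.conj_mem r
      (Subgroup.subset_normalClosure hr) (s q)
  have mem_of_edge_mem {s : Q → FreeGroup X} (hs : ∀ q, π (s q) = q) {H : Subgroup (FreeGroup X)}
      (hH : Subgroup.normalClosure R ≤ H) {w} (hw : w ∈ π.ker)
      (h : (edge hs 1 w : FreeGroup X) ∈ H) : w ∈ H := by
    rw [coe_edge_of_mem_ker hs 1 hw] at h
    simpa using conj_mem_of_map_eq (hcomm.trans hH) ((hs 1).trans (map_one π).symm) hw h
  by_contra! hvw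
  refine not_commute _ (mt (mem_of_edge_mem hs₁ hH₁ hv) hvw.1) _
    (mt (mem_of_edge_mem hs₂ hH₂ hw) hvw.2) (commute_of_hasHolonomy (φ := φ) hs₁ hs₂
      (fun q x hq hqx => if_pos ⟨hq, hqx⟩) hφ₂ hRπ (fun r hr q => ?_) hv hw hvT hwT
      (hcomm (Subgroup.commutator_mem_commutator hv hw)))
  exact (hR r hr q).imp (fun h => ⟨h, ha₁ (hH₁ (relator_edge hs₁ q r hr))⟩)
    fun h => ⟨h, ha₂ (hH₂ (relator_edge hs₂ q r hr))⟩

end Holonomy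

/-! ### Tameness -/

section ConjClosure

variable {F : Type*} [Group F] {S Z : Set F} {P P' : Set F} {χ : F →* Multiplicative ℝ}

/-- The subgroup generated by the conjugates of the elements of `S` by the elements of `P`. -/
def conjClosure (S P : Set F) : Subgroup F :=
  Subgroup.closure {a | ∃ s ∈ S, ∃ f ∈ P, a = MulAut.conj f s}

lemma conjClosure_mono (h : P ⊆ P') : conjClosure S P ≤ conjClosure S P' :=
  Subgroup.closure_mono fun _ ⟨s, hs, f, hf, ha⟩ => ⟨s, hs, f, h hf, ha⟩

lemma conj_mem_conjClosure {g w : F} (hg : ∀ f ∈ P, g * f ∈ P') (hw : w ∈ conjClosure S P) :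
    MulAut.conj g w ∈ conjClosure S P' := by
  suffices conjClosure S P ≤ (conjClosure S P').comap (MulAut.conj g).toMonoidHom from this hw
  refine (Subgroup.closure_le _).2 ?_
  rintro _ ⟨s, hs, f, hf, rfl⟩
  exact Subgroup.subset_closure ⟨s, hs, g * f, hg f hf, by simp⟩

lemma conjClosure_height_mono {d d' : ℝ} (h : d ≤ d') :
    conjClosure S {f | height χ f ≤ d} ≤ conjClosure S {f | height χ f ≤ d'} :=
  conjClosure_mono fun _ hf => hf.out.trans h

lemma exists_mem_conjClosure_height_le {w : F} (hw : w ∈ conjClosure S Set.univ) :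
    ∃ d : ℝ, w ∈ conjClosure S {f | height χ f ≤ d} := by
  induction hw using Subgroup.closure_induction with
  | mem a ha =>
    obtain ⟨s, hs, f, -, rfl⟩ := ha
    exact ⟨height χ f, Subgroup.subset_closure ⟨s, hs, f, le_refl (height χ f), rfl⟩⟩
  | one => exact ⟨0, one_mem _⟩
  | mul a b _ _ ha hb =>
    obtain ⟨d, ha⟩ := ha
    obtain ⟨d', hb⟩ := hb
    exact ⟨max d d', mul_mem (conjClosure_height_mono (le_max_left d d') ha)
      (conjClosure_height_mono (le_max_right d d') hb)⟩
  | inv a _ ha => exact ha.imp fun _ => inv_mem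

lemma exists_subset_conjClosure_height_le (hZ : Z.Finite)
    (h : Z ⊆ conjClosure S Set.univ) : ∃ d : ℝ, Z ⊆ conjClosure S {f | height χ f ≤ d} := by
  choose! d hd using fun w (hw : w ∈ Z) => exists_mem_conjClosure_height_le (χ := χ) (h hw)
  obtain ⟨d', hd'⟩ := (hZ.image d).bddAbove
  exact ⟨d', fun w hw =>
    conjClosure_height_mono (hd' (Set.mem_image_of_mem d hw)) (hd w hw)⟩

/-- Modulo `N`, each element of `S` is a product of conjugates of elements of `S` by elements of
positive height. -/
def Ascends (χ : F →* Multiplicative ℝ) (S : Set F) (N : Subgroup F) : Prop :=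
  ∀ s ∈ S, ∃ w ∈ conjClosure S {f | 0 < height χ f}, s * w⁻¹ ∈ N

@[simp] lemma height_inv_hom (f : F) : height χ⁻¹ f = -height χ f := rfl

lemma exists_height_pos {f : F} (hf : height χ f ≠ 0) : 0 < height χ f ∨ 0 < height χ f⁻¹ := by
  simpa using hf.symm.lt_or_gt

lemma exists_lt_height (hχ : ∃ f, height χ f ≠ 0) (d : ℝ) : ∃ t, d < height χ t := by
  obtain ⟨f, hf⟩ : ∃ f, 0 < height χ f :=
    hχ.elim fun f hf => (exists_height_pos hf).elim (fun h => ⟨f, h⟩) fun h => ⟨f⁻¹, h⟩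
  obtain ⟨n, hn⟩ := Archimedean.arch (d + 1) hf
  exact ⟨f ^ n, by rw [height_pow, ← nsmul_eq_mul]; linarith⟩

variable {K N : Subgroup F}

lemma ascends_inv_of_le_sup [K.Normal] [N.Normal] (hχ : ∃ f, height χ f ≠ 0) (hSK : S ⊆ K) {d : ℝ}
    (h : K ≤ conjClosure S {f | height χ f ≤ d} ⊔ N) : Ascends χ⁻¹ S N := by
  intro s hs
  obtain ⟨t, ht⟩ := exists_lt_height hχ d
  obtain ⟨c, hc, n, hn, hcn⟩ := Subgroup.mem_sup_of_normal_right.1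
    (h (Subgroup.Normal.conj_mem inferInstance s (hSK hs) t))
  refine ⟨MulAut.conj t⁻¹ c, conj_mem_conjClosure (fun f hf => ?_) hc, ?_⟩
  · have : height χ f ≤ d := hf
    simp only [Set.mem_ofPred_eq, height_inv_hom, height_mul, height_inv]
    linarith
  · have conj_eq : s * (MulAut.conj t⁻¹ c)⁻¹ = MulAut.conj (t⁻¹ * c) n := by
      rw [show s = MulAut.conj t⁻¹ (c * n) by rw [hcn]; simp [mul_assoc]]
      simp [mul_assoc]
    exact conj_eq ▸ Subgroup.Normal.conj_mem inferInstance n hn _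

open scoped commutatorElement in
lemma ascends_of_mem (hSK : S ⊆ K) (hcomm : ⁅K, K⁆ ≤ N) {κ : F} (hκ : κ ∈ K)
    (h : 0 < height χ κ) : Ascends χ S N := fun s hs =>
  ⟨MulAut.conj κ s, Subgroup.subset_closure ⟨s, hs, κ, h, rfl⟩, by
    simpa [commutatorElement_def, mul_assoc] using
      hcomm (Subgroup.commutator_mem_commutator (hSK hs) hκ)⟩

variable {Q ι : Type*} [CommGroup Q] [Fintype ι] {π : F →* Q}

lemma VirtualBasis.exists_section (B : VirtualBasis π ι) (χ : F →* Multiplicative ℝ)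
    (hgen : π.ker ≤ conjClosure S Set.univ) {A : Set F} (hA : A.Finite) :
    ∃ s : Q → F, (∀ q, π (s q) = q) ∧ ∀ d : ℝ, ∃ d' : ℝ, ∀ q, height χ (s q) ≤ d → ∀ x ∈ A,
      s q * x * (s (q * π x))⁻¹ ∈ conjClosure S {f | height χ f ≤ d'} := by
  obtain ⟨L, hL⟩ := exists_isHeightOrder χ (letter B.y)
  obtain ⟨Z, c, hZ, hZπ, edge⟩ := B.exists_prodLE_edge hL hA
  obtain ⟨e, he⟩ := exists_subset_conjClosure_height_le (χ := χ) hZ (hZπ.trans hgen)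
  refine ⟨B.normalForm L, B.map_normalForm hL.nodup hL.mem, fun d => ⟨max 0 d + c + e,
    fun q hq x hx => (edge q x hx).2.mem_subgroup ?_⟩⟩
  rintro _ ⟨ζ, hζ, μ, -, hμ, rfl⟩
  refine conj_mem_conjClosure (fun f hf => ?_) (he hζ)
  rw [Set.mem_ofPred_eq, height_mul]
  exact add_le_add (hμ.trans (by gcongr)) hf

end ConjClosure

section Paths

variable {X Q : Type*} [CommGroup Q] {π : FreeGroup X →* Q} {ω : Q →* Multiplicative ℝ}

lemma exists_pathIn (π : FreeGroup X →* Q) (ω : Q →* Multiplicative ℝ) (w : FreeGroup X) :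
    ∃ d : ℝ, ∀ q, PathIn π {q' | |height ω q' - height ω q| ≤ d} q w := by
  induction w using FreeGroup.induction_on with
  | C1 => exact ⟨0, fun q => .one q⟩
  | of x => exact ⟨|height ω (π (FreeGroup.of x))|, fun q => .of (by simp) (by simp)⟩
  | inv_of x hx =>
    obtain ⟨d, hx⟩ := hx
    refine ⟨d + |height ω (π (FreeGroup.of x))|, fun q => ((hx _).mono fun q' hq' => ?_).inv'⟩
    exact (abs_sub_le _ (height ω (q * (π (FreeGroup.of x))⁻¹)) _).trans
      (add_le_add hq' (by simp))
  | mul v w hv hw =>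
    obtain ⟨d, hv⟩ := hv
    obtain ⟨d', hw⟩ := hw
    refine ⟨max d (d' + |height ω (π v)|), fun q => ((hv q).mono ?_).mul ((hw _).mono ?_)⟩
    · exact fun q' hq' => hq'.out.trans (le_max_left d _)
    · intro q' hq'
      refine le_trans ?_ (le_max_right d _)
      exact (abs_sub_le _ (height ω (q * π v)) _).trans (add_le_add hq' (by simp))

lemma exists_forall_pathIn (π : FreeGroup X →* Q) (ω : Q →* Multiplicative ℝ)
    {W : Set (FreeGroup X)} (hW : W.Finite) : ∃ d : ℝ, 0 ≤ d ∧ ∀ w ∈ W, ∀ q,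
      PathIn π {q' | |height ω q' - height ω q| ≤ d} q w := by
  choose d hd using exists_pathIn π ω
  obtain ⟨d', hd'⟩ := (hW.image d).bddAbove
  exact ⟨max 0 d', le_max_left _ _, fun w hw q => (hd w q).mono fun _ hq =>
    hq.out.trans (le_max_of_le_right (hd' (Set.mem_image_of_mem d hw)))⟩

lemma exists_pow_pathIn (hω : ∃ f, height ω (π f) ≠ 0) : ∃ t : FreeGroup X,
    0 < height ω (π t) ∧ ∀ (n : ℕ) q, 0 ≤ height ω q → PathIn π {q | 0 ≤ height ω q} q (t ^ n) := by
  obtain ⟨x, hx⟩ : ∃ x, height ω (π (FreeGroup.of x)) ≠ 0 := by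
    by_contra! h
    have : ω.comp π = 1 := FreeGroup.ext_hom _ _ fun x => h x
    exact hω.elim fun f hf => hf (DFunLike.congr_fun this f)
  obtain ⟨t, ht, step⟩ : ∃ t : FreeGroup X, 0 < height ω (π t) ∧ ∀ q, 0 ≤ height ω q →
      PathIn π {q | 0 ≤ height ω q} q t := by
    obtain h | h := exists_height_pos hx
    · exact ⟨FreeGroup.of x, h, fun q hq => .of hq (by simpa using add_nonneg hq h.le)⟩
    · refine ⟨(FreeGroup.of x)⁻¹, by simpa using h, fun q hq => .inv' (.of ?_ (by simpa using hq))⟩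
      simpa using add_nonneg hq h.le
  refine ⟨t, ht, fun n => ?_⟩
  induction n with
  | zero => exact fun q _ => by simpa using PathIn.one q
  | succ n ih =>
    intro q hq
    rw [pow_succ']
    exact (step q hq).mul (ih _ (by simpa using add_nonneg hq ht.le))

lemma exists_pathIn_nonneg (hω : ∃ f, height ω (π f) ≠ 0) {g : FreeGroup X}
    (hg : 0 ≤ height ω (π g)) :
    ∃ g', π g' = π g ∧ PathIn π {q | 0 ≤ height ω q} 1 g' := by
  obtain ⟨t, ht, path⟩ := exists_pow_pathIn hω
  obtain ⟨d, hd⟩ := exists_pathIn π ω g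
  obtain ⟨n, hn⟩ := Archimedean.arch d ht
  rw [nsmul_eq_mul] at hn
  refine ⟨t ^ n * g * (t ^ n)⁻¹, by simp, ((path n 1 (by simp)).mul ((hd _).mono ?_)).mul ?_⟩
  · intro q hq
    have := (abs_le.1 hq.out).1
    simp only [one_mul, map_pow, height_pow] at this
    exact show 0 ≤ height ω q by linarith
  · convert (path n (π g) hg).inv using 1
    simp [mul_comm]

end Paths

section Tame

open scoped commutatorElement

variable {X Q ι : Type*} [Finite X] [CommGroup Q] [Fintype ι] {π : FreeGroup X →* Q}
  {R S : Set (FreeGroup X)}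

/-- If the conjugates by elements of bounded height do not generate the kernel modulo `N`, some
element outside of the subgroup they generate is carried by a half-space. -/
lemma VirtualBasis.ascends_or_exists_pathIn (B : VirtualBasis π ι) {ω : Q →* Multiplicative ℝ}
    {N : Subgroup (FreeGroup X)} [N.Normal] (hcomm : ⁅π.ker, π.ker⁆ ≤ N) (hSπ : S ⊆ π.ker)
    (hgen : π.ker ≤ conjClosure S Set.univ) (hω : ∃ f, height ω (π f) ≠ 0) {d : ℝ} (hd : 0 ≤ d)
    (hpath : ∀ s ∈ S, ∀ q, PathIn π {q' | |height ω q' - height ω q| ≤ d} q s) :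
    Ascends (ω.comp π)⁻¹ S N ∨ ∃ (σ : Q → FreeGroup X) (hσ : ∀ q, π (σ q) = q)
      (H : Subgroup (FreeGroup X)), N ≤ H ∧
      (∀ q, height ω q ≤ d → ∀ x, (edge hσ q (FreeGroup.of x) : FreeGroup X) ∈ H) ∧
      ∃ b ∈ π.ker, b ∉ H ∧ PathIn π {q | -d ≤ height ω q} 1 b := by
  obtain ⟨σ, hσ, edge_mem⟩ := B.exists_section (ω.comp π) hgen (Set.finite_range FreeGroup.of)
  obtain ⟨d', hd'⟩ := edge_mem d
  set H := conjClosure S {f | height (ω.comp π) f ≤ max 0 d'} ⊔ N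
  by_cases hH : π.ker ≤ H
  · exact .inl (ascends_inv_of_le_sup hω hSπ hH)
  obtain ⟨s, hs, g, hg, hgs⟩ : ∃ s ∈ S, ∃ g, 0 ≤ height ω (π g) ∧ MulAut.conj g s ∉ H := by
    by_contra! h
    refine hH (hgen.trans ((Subgroup.closure_le _).2 ?_))
    rintro _ ⟨s, hs, g, -, rfl⟩
    obtain hg | hg := le_total 0 (height ω (π g))
    · exact h s hs g hg
    · exact Subgroup.mem_sup_left
        (Subgroup.subset_closure ⟨s, hs, g, show _ ≤ _ from le_max_of_le_left hg, rfl⟩)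
  obtain ⟨g', hg', path⟩ := exists_pathIn_nonneg hω hg
  refine .inr ⟨σ, hσ, H, le_sup_right,
    fun q hq x => Subgroup.mem_sup_left (conjClosure_height_mono (le_max_right 0 d')
      (hd' q (by rwa [height, MonoidHom.comp_apply, hσ]) _ ⟨x, rfl⟩)),
    MulAut.conj g' s, π.normal_ker.conj_mem s (hSπ hs) g', ?_, ?_⟩
  · exact mt (conj_mem_of_map_eq (hcomm.trans le_sup_right) hg' (hSπ hs)) hgs
  · refine (path.mono fun q hq => ?_).conj ((hpath s hs _).mono fun q hq => ?_) (hSπ hs)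
    · exact (neg_nonpos.2 hd).trans hq
    · rw [hg'] at hq
      have := (abs_le.1 hq.out).1
      exact show -d ≤ height ω q by linarith

lemma VirtualBasis.ascends_comp_or (B : VirtualBasis π ι) (hR : R.Finite) (hS : S.Finite)
    (hRπ : R ⊆ π.ker) (hcomm : ⁅π.ker, π.ker⁆ ≤ Subgroup.normalClosure R) (hSπ : S ⊆ π.ker)
    (hgen : π.ker ≤ conjClosure S Set.univ) {ω : Q →* Multiplicative ℝ}
    (hω : ∃ f, height ω (π f) ≠ 0) :
    Ascends (ω.comp π) S (Subgroup.normalClosure R) ∨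
      Ascends (ω.comp π)⁻¹ S (Subgroup.normalClosure R) := by
  obtain ⟨d, hd, path⟩ := exists_forall_pathIn π ω (hR.union hS)
  have path_inv {w} (hw : w ∈ R ∪ S) (q) :
      PathIn π {q' | |height ω⁻¹ q' - height ω⁻¹ q| ≤ d} q w := by
    simpa only [height_inv_hom, neg_sub_neg, abs_sub_comm] using path w hw q
  obtain down | ⟨σ₁, hσ₁, H₁, hH₁, edge₁, v, hv, hvH, hvT⟩ :=
    B.ascends_or_exists_pathIn hcomm hSπ hgen hω hd fun s hs => path s (.inr hs)
  · exact .inr down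
  obtain up | ⟨σ₂, hσ₂, H₂, hH₂, edge₂, w, hw, hwH, hwT⟩ :=
    B.ascends_or_exists_pathIn (ω := ω⁻¹) hcomm hSπ hgen (by simpa using hω) hd
      fun s hs => path_inv (.inr hs)
  · exact .inl (by simpa [MonoidHom.inv_comp] using up)
  refine absurd (mem_or_mem_of_pathIn (T₁ := {q | -d ≤ height ω q}) (T₂ := {q | height ω q ≤ d})
    hσ₁ hσ₂ hRπ hcomm hH₁ hH₂ (fun q hq x => ⟨edge₁ q hq.2 x, edge₂ q (neg_le.1 hq.1) x⟩)
    (fun r hr q => ?_) hv hw hvT (hwT.mono fun q hq => by simpa using hq)) (by tauto)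
  refine (le_total 0 (height ω q)).imp (fun hq => ?_) fun hq => ?_
  all_goals
    refine (path r (.inl hr) q).mono fun q' hq' => ?_
    have := abs_le.1 hq'.out
    rw [Set.mem_ofPred_eq]
    linarith

/-- The theorem of Bieri and Strebel that the kernel is tame. -/
theorem VirtualBasis.ascends_or_ascends_inv (B : VirtualBasis π ι) (hπ : Surjective π)
    (hR : R.Finite) (hS : S.Finite) (hRπ : R ⊆ π.ker)
    (hcomm : ⁅π.ker, π.ker⁆ ≤ Subgroup.normalClosure R) (hSπ : S ⊆ π.ker)
    (hgen : π.ker ≤ conjClosure S Set.univ) {χ : FreeGroup X →* Multiplicative ℝ}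
    (hχ : ∃ f, height χ f ≠ 0) :
    Ascends χ S (Subgroup.normalClosure R) ∨ Ascends χ⁻¹ S (Subgroup.normalClosure R) := by
  by_cases hker : π.ker ≤ χ.ker
  · obtain ⟨ω, rfl⟩ : ∃ ω : Q →* Multiplicative ℝ, ω.comp π = χ :=
      ⟨_, MonoidHom.liftOfRightInverse_comp π (surjInv hπ) (rightInverse_surjInv hπ) ⟨χ, hker⟩⟩
    exact B.ascends_comp_or hR hS hRπ hcomm hSπ hgen hχ
  obtain ⟨κ, hκ, hκχ⟩ := SetLike.not_le_iff_exists.1 hker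
  obtain h | h := exists_height_pos (χ := χ) (f := κ) hκχ
  · exact .inl (ascends_of_mem hSπ hcomm hκ h)
  · exact .inl (ascends_of_mem hSπ hcomm (inv_mem hκ) h)

end Tame

/-! ### Compactness of the sphere of directions -/

section Directions

open Filter
open scoped commutatorElement

section Bounds

variable {F ι : Type*} [Group F] [Fintype ι] {R S : Set F} {y : ι → F} {L : List ι} {v v' : ι → ℝ}
  {t t' : ℕ}

lemma map_orderedWord {Q : Type*} [CommGroup Q] (φ : F →* Q) (hL : L.Nodup) (hfull : ∀ i, i ∈ L)
    (u : ι →₀ ℤ) : φ (orderedWord y L u) = ∏ i, φ (y i) ^ u i := by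
  classical
  rw [orderedWord, map_list_prod, List.map_map,
    ← Finset.eq_univ_iff_forall.2 fun i => List.mem_toFinset.2 (hfull i), List.prod_toFinset _ hL]
  simp [Function.comp_def]

lemma advancedConjugates_mono {A A' : ℤ} {ε ε' : ℝ} (hA : A ≤ A') (hε : ε' ≤ ε) :
    advancedConjugates y L S A ε v ⊆ advancedConjugates y L S A' ε' v :=
  fun _ ⟨s, hs, q, hq, hvq, h⟩ => ⟨s, hs, q, hq.trans hA, hε.trans hvq, h⟩

/-- Tameness in the direction `v` with all bounds controlled by the single parameter `t`. -/
def AdvancesAt (R : Set F) (y : ι → F) (L : List ι) (S : Set F) (t : ℕ) (v : ι → ℝ) : Prop :=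
  Advances R y L S t (1 / (t + 1)) t v

lemma AdvancesAt.mono (h : AdvancesAt R y L S t v) (ht : t ≤ t') : AdvancesAt R y L S t' v := by
  intro s hs
  obtain ⟨w, hw, hsw⟩ := h s hs
  exact ⟨w, (hw.mono_set (advancedConjugates_mono (by exact_mod_cast ht) (by gcongr))).mono ht,
    hsw.mono ht⟩

lemma sum_mul_sub_le {δ : ℝ} (hv : ∀ i, |v i - v' i| ≤ δ) (q : ι →₀ ℤ) :
    ∑ i, v i * q i - ∑ i, v' i * q i ≤ δ * sqNorm q := by
  have abs_le_sq (i) : |(q i : ℝ)| ≤ (q i : ℝ) ^ 2 := by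
    exact_mod_cast (sq_abs (q i)).symm ▸ Int.le_self_sq |q i|
  rw [← Finset.sum_sub_distrib, sqNorm]
  push_cast
  rw [Finset.mul_sum]
  refine Finset.sum_le_sum fun i _ => ?_
  calc v i * q i - v' i * q i = (v i - v' i) * q i := (sub_mul ..).symm
    _ ≤ |v i - v' i| * |(q i : ℝ)| := (le_abs_self _).trans (abs_mul _ _).le
    _ ≤ δ * (q i : ℝ) ^ 2 :=
      mul_le_mul (hv i) (abs_le_sq i) (abs_nonneg _) ((abs_nonneg _).trans (hv i))

lemma AdvancesAt.of_abs_sub_le (h : AdvancesAt R y L S t v)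
    (hv : ∀ i, |v i - v' i| ≤ 1 / (2 * (t + 1) ^ 2)) : AdvancesAt R y L S (2 * t + 1) v' := by
  intro s hs
  obtain ⟨w, hw, hsw⟩ := h s hs
  refine ⟨w, (hw.mono_set ?_).mono (by lia), hsw.mono (by lia)⟩
  rintro a ⟨s, hs, q, hq, hvq, rfl⟩
  refine ⟨s, hs, q, hq.trans (by push_cast; lia), ?_, rfl⟩
  have half : 1 / (2 * ((t : ℝ) + 1) ^ 2) * sqNorm q ≤ 1 / ((t : ℝ) + 1) / 2 := by
    have hq' : (sqNorm q : ℝ) ≤ t + 1 := by exact_mod_cast hq.trans (by lia)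
    calc 1 / (2 * ((t : ℝ) + 1) ^ 2) * sqNorm q ≤ 1 / (2 * ((t : ℝ) + 1) ^ 2) * (t + 1) := by gcongr
      _ = 1 / ((t : ℝ) + 1) / 2 := by field_simp
  have bound_eq : 1 / (((2 * t + 1 : ℕ) : ℝ) + 1) = 1 / (t + 1) - 1 / (t + 1) / 2 := by
    push_cast
    field_simp
    ring
  rw [bound_eq]
  linarith [sum_mul_sub_le hv q]

lemma exists_eventually_prodLE_advancedConjugates {w : F}
    (hw : w ∈ Subgroup.closure {a | ∃ s ∈ S, ∃ q : ι →₀ ℤ, 0 < ∑ i, v i * q i ∧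
      a = MulAut.conj (orderedWord y L q) s}) :
    ∃ n, ∀ᶠ t : ℕ in atTop, ProdLE (advancedConjugates y L S t (1 / (t + 1)) v) w n := by
  induction hw using Subgroup.closure_induction with
  | mem a ha =>
    obtain ⟨s, hs, q, hq, rfl⟩ := ha
    refine ⟨1, ?_⟩
    filter_upwards [eventually_ge_atTop (sqNorm q).toNat,
      (tendsto_one_div_add_atTop_nhds_zero_nat (𝕜 := ℝ)).eventually (eventually_le_nhds hq)]
      with t ht hε
    exact .of_mem ⟨s, hs, q, Int.toNat_le.1 ht, hε, rfl⟩
  | one => exact ⟨0, .of_forall fun _ => .one⟩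
  | mul a b _ _ ha hb =>
    obtain ⟨m, ha⟩ := ha
    obtain ⟨n, hb⟩ := hb
    exact ⟨m + n, (ha.and hb).mono fun t h => h.1.mul h.2⟩
  | inv a _ ha => exact ha.imp fun n h => h.mono fun t h => h.inv

lemma isCompact_setOf_sum_sq_eq_one : IsCompact {v : ι → ℝ | ∑ i, v i ^ 2 = 1} := by
  refine Metric.isCompact_of_isClosed_isBounded (isClosed_eq (by fun_prop) (by fun_prop))
    ((Metric.isBounded_iff_subset_closedBall 0).2 ⟨1, fun v hv => ?_⟩)
  rw [mem_closedBall_zero_iff, pi_norm_le_iff_of_nonneg zero_le_one]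
  intro i
  rw [Real.norm_eq_abs, ← sq_le_one_iff_abs_le_one, ← hv.out]
  exact Finset.single_le_sum (f := fun i => v i ^ 2) (fun i _ => sq_nonneg _) (Finset.mem_univ i)

lemma exists_forall_advancesAt {Ω : Set (ι → ℝ)} (hΩ : IsCompact Ω)
    (h : ∀ v ∈ Ω, ∃ t, AdvancesAt R y L S t v ∨ AdvancesAt R y L S t fun i => -v i) :
    ∃ t, ∀ v ∈ Ω, AdvancesAt R y L S t v ∨ AdvancesAt R y L S t fun i => -v i := by
  have mono {t t'} (ht : t ≤ t') {v : ι → ℝ}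
      (h : AdvancesAt R y L S t v ∨ AdvancesAt R y L S t fun i => -v i) :
      AdvancesAt R y L S t' v ∨ AdvancesAt R y L S t' fun i => -v i :=
    h.imp (·.mono ht) (·.mono ht)
  refine hΩ.induction_on (p := fun Ω => ∃ t, ∀ v ∈ Ω,
    AdvancesAt R y L S t v ∨ AdvancesAt R y L S t fun i => -v i) ⟨0, by simp⟩ ?_ ?_ ?_
  · exact fun Ω Ω' hΩ ⟨t, ht⟩ => ⟨t, fun v hv => ht v (hΩ hv)⟩
  · rintro Ω Ω' ⟨t, ht⟩ ⟨t', ht'⟩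
    exact ⟨max t t', fun v hv => hv.elim (fun hv => mono (le_max_left _ _) (ht v hv))
      fun hv => mono (le_max_right _ _) (ht' v hv)⟩
  · intro v hv
    obtain ⟨t, ht⟩ := h v hv
    refine ⟨Metric.closedBall v (1 / (2 * (t + 1) ^ 2)), mem_nhdsWithin_of_mem_nhds
      (Metric.closedBall_mem_nhds _ (by positivity)), 2 * t + 1, fun v' hv' => ?_⟩
    have near : ∀ i, |v i - v' i| ≤ 1 / (2 * ((t : ℝ) + 1) ^ 2) := by
      rw [Metric.mem_closedBall', dist_pi_le_iff (by positivity)] at hv'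
      exact hv'
    exact ht.imp (·.of_abs_sub_le near)
      (·.of_abs_sub_le fun i => by rw [neg_sub_neg, abs_sub_comm]; exact near i)

end Bounds

variable {X Q : Type*} [CommGroup Q] {π : FreeGroup X →* Q} {R S : Set (FreeGroup X)}
  {L : List X} {v : X → ℝ}

/-- The character of the free group with values `v` on the generators. -/
def character (v : X → ℝ) : FreeGroup X →* Multiplicative ℝ :=
  FreeGroup.lift fun x => Multiplicative.ofAdd (v x)

lemma height_character [Fintype X] (v : X → ℝ) (f : FreeGroup X) :
    height (character v) f = ∑ x, v x * expVec f x := by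
  have := map_lift_eq_prod_expVec (character v) FreeGroup.of f
  rw [FreeGroup.lift_of_eq_id, MonoidHom.id_apply] at this
  rw [height, this, toAdd_prod]
  simp [character, mul_comm]

lemma character_neg (v : X → ℝ) : (character fun x => -v x) = (character v)⁻¹ := by
  ext x
  simp [character]

lemma map_orderedWord_expVec [Finite X] (hL : L.Nodup) (hfull : ∀ x, x ∈ L) (f : FreeGroup X) :
    π (orderedWord FreeGroup.of L (expVec f)) = π f := by
  have := Fintype.ofFinite X
  rw [map_orderedWord π hL hfull, ← map_lift_eq_prod_expVec, FreeGroup.lift_of_eq_id,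
    MonoidHom.id_apply]

lemma Ascends.eventually_advancesAt [Fintype X]
    (h : Ascends (character v) S (Subgroup.normalClosure R))
    (hL : L.Nodup) (hfull : ∀ x, x ∈ L) (hS : S.Finite) (hSπ : S ⊆ π.ker)
    (hcomm : ⁅π.ker, π.ker⁆ ≤ Subgroup.normalClosure R) :
    ∀ᶠ t in atTop, AdvancesAt R FreeGroup.of L S t v := by
  refine hS.eventually_all.2 fun s hs => ?_
  obtain ⟨w, hw, hsw⟩ := h s hs
  set H := Subgroup.closure {a | ∃ s ∈ S, ∃ q : X →₀ ℤ, 0 < ∑ x, v x * q x ∧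
    a = MulAut.conj (orderedWord FreeGroup.of L q) s}
  have conjClosure_le : conjClosure S {f | 0 < height (character v) f} ≤
      H ⊔ Subgroup.normalClosure R := by
    refine (Subgroup.closure_le _).2 ?_
    rintro _ ⟨s, hs, f, hf, rfl⟩
    refine conj_mem_of_map_eq (hcomm.trans le_sup_right) (map_orderedWord_expVec hL hfull f)
      (hSπ hs) (Subgroup.mem_sup_left (Subgroup.subset_closure ⟨s, hs, expVec f, ?_, rfl⟩))
    rwa [← height_character]
  have hsH : s ∈ H ⊔ Subgroup.normalClosure R := by
    simpa using mul_mem (Subgroup.mem_sup_right hsw) (conjClosure_le hw)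
  obtain ⟨a, ha, r, hr, rfl⟩ := Subgroup.mem_sup_of_normal_right.1 hsH
  obtain ⟨m, hm⟩ := exists_eventually_prodLE_advancedConjugates ha
  obtain ⟨n, hn⟩ := exists_areaLe (Subgroup.Normal.conj_mem inferInstance r hr a)
  filter_upwards [hm, eventually_ge_atTop m, eventually_ge_atTop n] with t ht hmt hnt
  exact ⟨a, ht.mono hmt, hn.mono hnt⟩

theorem VirtualBasis.exists_commArea_pow [Finite X] {ι : Type*} [Fintype ι]
    (B : VirtualBasis π ι)
    (hπ : Surjective π) (hR : R.Finite) (hS : S.Finite) (hRπ : R ⊆ π.ker)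
    (hcomm : ⁅π.ker, π.ker⁆ ≤ Subgroup.normalClosure R) (hSπ : S ⊆ π.ker)
    (hgen : π.ker ≤ conjClosure S Set.univ)
    (hy : letterCommutators (FreeGroup.of : X → FreeGroup X) ⊆ S) :
    ∃ C : ℕ, ∀ n f, ProdLE (Set.range FreeGroup.of) f n → ∀ s ∈ S, ∀ s' ∈ S,
      CommArea R s (MulAut.conj f s') (C ^ (n + 1) ^ 2) := by
  have := Fintype.ofFinite X
  have hL : (Finset.univ : Finset X).toList.Nodup := Finset.nodup_toList _
  have hfull (x : X) : x ∈ (Finset.univ : Finset X).toList := by simp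
  have advances {v : X → ℝ} (h : Ascends (character v) S (Subgroup.normalClosure R)) :=
    (h.eventually_advancesAt hL hfull hS hSπ hcomm).exists
  obtain ⟨t, ht⟩ := exists_forall_advancesAt (R := R) (y := FreeGroup.of) (S := S)
    (L := (Finset.univ : Finset X).toList) isCompact_setOf_sum_sq_eq_one fun v hv => by
    have character_ne : ∃ f, height (character v) f ≠ 0 := by
      by_contra! h
      have v_eq (x : X) : v x = 0 := by simpa [height, character] using h (FreeGroup.of x)
      simp [v_eq] at hv
    obtain h | h := B.ascends_or_ascends_inv hπ hR hS hRπ hcomm hSπ hgen character_ne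
    · exact (advances h).imp fun _ => .inl
    · exact (advances ((character_neg v).symm ▸ h)).imp fun _ => .inr
  refine _root_.exists_commArea_pow hS (fun s hs s' hs' f => ?_) hy hL hfull ht (by positivity)
  exact exists_areaLe (hcomm (Subgroup.commutator_mem_commutator (hSπ hs)
    (π.normal_ker.conj_mem s' (hSπ hs') f)))

end Directions

/-! ### Gröbner bases over the integers -/

section Groebner

universe u v

variable {ι : Type u} {σ : Type v} {κ : Type*}

/-- Multiplication by the monomial `ν` on the monomials `(μ, s)`, standing for `X ^ μ • e s`, of the
free `ℤ[X i | i ∈ ι]`-module with basis `e s`, `s ∈ σ`. -/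
noncomputable def shift (ν : ι →₀ ℕ) (j : (ι →₀ ℕ) × σ) : (ι →₀ ℕ) × σ := (ν + j.1, j.2)

lemma shift_injective (ν : ι →₀ ℕ) : Injective (shift ν : (ι →₀ ℕ) × σ → (ι →₀ ℕ) × σ) :=
  (add_right_injective ν).prodMap injective_id

lemma degree_shift (ν : ι →₀ ℕ) (j : (ι →₀ ℕ) × σ) :
    (shift ν j).1.degree = ν.degree + j.1.degree :=
  map_add Finsupp.degree ν j.1

/-- The key `r` orders the monomials of a free module compatibly with multiplication and refining
the degree. -/
structure IsTermOrder [LinearOrder κ] (r : (ι →₀ ℕ) × σ → κ) : Prop where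
  injective : Injective r
  shift_lt : ∀ ν a b, r a < r b → r (shift ν a) < r (shift ν b)
  degree_le : ∀ a b, r a ≤ r b → a.1.degree ≤ b.1.degree

lemma exists_isTermOrder (ι : Type u) (σ : Type v) [Finite ι] [Finite σ] :
    ∃ (κ : Type u) (_ : LinearOrder κ) (r : (ι →₀ ℕ) × σ → κ), IsTermOrder r := by
  let _ : LinearOrder ι := LinearOrder.lift' (Finite.equivFin ι) (Finite.equivFin ι).injective
  let position := Finite.equivFin σ
  refine ⟨(MonomialOrder.degLex (σ := ι)).syn ×ₗ Fin (Nat.card σ), inferInstance,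
    fun j => toLex (MonomialOrder.degLex.toSyn j.1, position j.2), ?_, ?_, ?_⟩
  · exact toLex.injective.comp (MonomialOrder.degLex.toSyn.injective.prodMap position.injective)
  · intro ν a b hab
    simpa only [Prod.Lex.toLex_lt_toLex, shift, map_add, add_lt_add_iff_left, add_right_inj]
      using hab
  · intro a b hab
    have hle : MonomialOrder.degLex.toSyn a.1 ≤ MonomialOrder.degLex.toSyn b.1 :=
      (Prod.Lex.toLex_le_toLex.1 hab).elim le_of_lt fun h => h.1.le
    exact (Finsupp.DegLex.le_iff.1 (MonomialOrder.degLex_le_iff.1 hle)).elim le_of_lt (·.1.le)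

/-- `j` is the leading monomial of `m` for the order given by the key `r`. -/
def IsLeading {J : Type*} [LE κ] (r : J → κ) (m : J →₀ ℤ) (j : J) : Prop :=
  m j ≠ 0 ∧ ∀ j', m j' ≠ 0 → r j' ≤ r j

section Leading

variable {J : Type*} [LinearOrder κ] {r : J → κ} {m m' : J →₀ ℤ} {j : J}

lemma exists_isLeading (r : J → κ) (hm : m ≠ 0) : ∃ j, IsLeading r m j := by
  obtain ⟨j, hj, hmax⟩ := m.support.exists_max_image r (Finsupp.support_nonempty_iff.2 hm)
  exact ⟨j, Finsupp.mem_support_iff.1 hj, fun j' hj' => hmax j' (Finsupp.mem_support_iff.2 hj')⟩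

lemma IsLeading.le_of_sub_smul_ne_zero (h : IsLeading r m j) (h' : IsLeading r m' j) (q : ℤ)
    {j' : J} (hj' : (m - q • m') j' ≠ 0) : r j' ≤ r j := by
  by_cases hm : m j' = 0
  · exact h'.2 j' fun hm' => hj' (by simp [hm, hm'])
  · exact h.2 j' hm

/-- Euclid's algorithm: otherwise subtracting a multiple of `m` from `m'` would leave a smaller
leading coefficient. -/
lemma IsLeading.dvd_of_forall_natAbs_le {M : AddSubgroup (J →₀ ℤ)} (hm : m ∈ M)
    (h : IsLeading r m j) (hmin : ∀ m' ∈ M, IsLeading r m' j → (m j).natAbs ≤ (m' j).natAbs)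
    (hm' : m' ∈ M) (h' : IsLeading r m' j) : m j ∣ m' j := by
  by_contra not_dvd
  have apply_eq : (m' - (m' j / m j) • m) j = m' j % m j := by
    simp [Int.emod_def, mul_comm]
  have remainder_isLeading : IsLeading r (m' - (m' j / m j) • m) j :=
    ⟨by rwa [apply_eq, Ne, ← Int.dvd_iff_emod_eq_zero],
      fun _ => h'.le_of_sub_smul_ne_zero h _⟩
  have := hmin _ (M.sub_mem hm' (M.zsmul_mem hm _)) remainder_isLeading
  rw [apply_eq] at this
  have := Int.abs_eq_natAbs (m j) ▸ Int.emod_lt_abs (m' j) h.1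
  have := Int.emod_nonneg (m' j) h.1
  lia

end Leading

/-- Dickson's lemma. -/
lemma exists_finite_subset_forall_exists_le {α β : Type*} [PartialOrder β] [WellQuasiOrderedLE β]
    (f : α → β) (A : Set α) : ∃ B ⊆ A, B.Finite ∧ ∀ a ∈ A, ∃ b ∈ B, f b ≤ f a := by
  obtain ⟨B, hBA, hB, hmin⟩ : ∃ B ⊆ A, B.Finite ∧ ∀ a ∈ A, ∃ c ∈ f '' B, c ≤ f a := by
    refine (Set.exists_subset_image_finite_and
      (p := fun C => ∀ a ∈ A, ∃ c ∈ C, c ≤ f a)).1 ⟨{c | Minimal (· ∈ f '' A) c},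
      fun c hc => hc.out.1,
      WellQuasiOrderedLE.finite_of_isAntichain fun b hb c hc hbc hle =>
        hbc (hc.out.eq_of_le hb.out.1 hle), fun a ha => ?_⟩
    obtain ⟨c, hc, hmin⟩ := exists_minimal_le_of_wellFoundedLT _ _ (Set.mem_image_of_mem f ha)
    exact ⟨c, hmin, hc⟩
  exact ⟨B, hBA, hB, fun a ha => Set.exists_mem_image.1 (hmin a ha)⟩

section Basis

variable [LinearOrder κ] {r : (ι →₀ ℕ) × σ → κ} {M : AddSubgroup ((ι →₀ ℕ) × σ →₀ ℤ)}
  {T : Set ((ι →₀ ℕ) × σ →₀ ℤ)} {m : (ι →₀ ℕ) × σ →₀ ℤ} {j : (ι →₀ ℕ) × σ}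

lemma IsLeading.mapDomain_shift (hr : IsTermOrder r) (h : IsLeading r m j) (ν : ι →₀ ℕ) :
    IsLeading r (m.mapDomain (shift ν)) (shift ν j) := by
  classical
  refine ⟨by rw [Finsupp.mapDomain_apply (shift_injective ν)]; exact h.1, fun j' hj' => ?_⟩
  obtain ⟨a, ha, rfl⟩ := Finset.mem_image.1
    (Finsupp.mapDomain_support (Finsupp.mem_support_iff.2 hj'))
  obtain hlt | heq := (h.2 a (Finsupp.mem_support_iff.1 ha)).lt_or_eq
  · exact (hr.shift_lt ν _ _ hlt).le
  · rw [hr.injective heq]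

/-- `T` is a strong Gröbner basis of `M`: leading terms in `M` are multiples of leading terms of
members of `T`, coefficients included. -/
def IsStrongBasis (r : (ι →₀ ℕ) × σ → κ) (M : AddSubgroup ((ι →₀ ℕ) × σ →₀ ℤ))
    (T : Set ((ι →₀ ℕ) × σ →₀ ℤ)) : Prop :=
  T ⊆ M ∧ ∀ m ∈ M, ∀ j, IsLeading r m j →
    ∃ b ∈ T, ∃ ν j₀, IsLeading r b j₀ ∧ shift ν j₀ = j ∧ b j₀ ∣ m j

lemma exists_isStrongBasis [Finite ι] [Finite σ] (hr : IsTermOrder r)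
    (hM : ∀ ν, ∀ m ∈ M, m.mapDomain (shift ν) ∈ M) : ∃ T, T.Finite ∧ IsStrongBasis r M T := by
  choose B hBA hB hmin using fun s : σ => exists_finite_subset_forall_exists_le
    (fun p : ((ι →₀ ℕ) × σ →₀ ℤ) × (ι →₀ ℕ) => (p.2, (p.1 (p.2, s)).natAbs))
    {p | p.1 ∈ M ∧ IsLeading r p.1 (p.2, s)}
  refine ⟨⋃ s, Prod.fst '' B s, Set.finite_iUnion fun s => (hB s).image _, ?_, ?_⟩
  · refine Set.iUnion_subset fun s => ?_
    rintro _ ⟨p, hp, rfl⟩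
    exact (hBA s hp).1
  rintro m hm ⟨μ, s⟩ hj
  obtain ⟨m₀, ⟨hm₀, h₀⟩, hmin₀⟩ := exists_minimalFor_of_wellFoundedLT
    (fun m : (ι →₀ ℕ) × σ →₀ ℤ => m ∈ M ∧ IsLeading r m (μ, s)) (fun m => (m (μ, s)).natAbs)
    ⟨m, hm, hj⟩
  obtain ⟨⟨b, ρ⟩, hb, hle, hcoeff⟩ := hmin s (m₀, μ) ⟨hm₀, h₀⟩
  obtain ⟨hbM, hlead⟩ := hBA s hb
  have shift_eq : shift (μ - ρ) (ρ, s) = (μ, s) := by simp [shift, tsub_add_cancel_of_le hle]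
  refine ⟨b, Set.mem_iUnion.2 ⟨s, _, hb, rfl⟩, μ - ρ, (ρ, s), hlead, shift_eq, ?_⟩
  have apply_eq : b.mapDomain (shift (μ - ρ)) (μ, s) = b (ρ, s) := by
    rw [← shift_eq, Finsupp.mapDomain_apply (shift_injective _)]
  rw [← apply_eq]
  refine IsLeading.dvd_of_forall_natAbs_le (r := r) (hM _ b hbM)
    (shift_eq ▸ hlead.mapDomain_shift hr _) (fun m' hm' h' => ?_) hm hj
  rw [apply_eq]
  exact hcoeff.trans ((le_total _ _).elim id fun h => hmin₀ ⟨hm', h'⟩ h)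

/-- The combination of the monomial multiples of the members of `T` with coefficients `c`. -/
noncomputable def shiftCombination (T : Set ((ι →₀ ℕ) × σ →₀ ℤ)) :
    ((ι →₀ ℕ) × T →₀ ℤ) →ₗ[ℤ] ((ι →₀ ℕ) × σ →₀ ℤ) :=
  Finsupp.linearCombination ℤ fun p => (p.2 : (ι →₀ ℕ) × σ →₀ ℤ).mapDomain (shift p.1)

lemma IsStrongBasis.exists_division_step (hr : IsTermOrder r)
    (hT : IsStrongBasis r M T) (hm : m ∈ M) (hj : IsLeading r m j) :
    ∃ (b : T) (ν : ι →₀ ℕ) (q : ℤ), ν.degree ≤ j.1.degree ∧ q.natAbs ≤ l1norm m ∧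
      ∀ j', (m - q • b.1.mapDomain (shift ν)) j' ≠ 0 → r j' < r j := by
  obtain ⟨b, hb, ν, j₀, hlead, rfl, q, hq⟩ := hT.2 m hm j hj
  refine ⟨⟨b, hb⟩, ν, q, by rw [degree_shift]; exact Nat.le_add_right _ _, ?_, fun j' hj' => ?_⟩
  · refine le_trans ?_ (natAbs_apply_le_l1norm m (shift ν j₀))
    rw [hq, Int.natAbs_mul]
    exact Nat.le_mul_of_pos_left _ (Int.natAbs_pos.2 hlead.1)
  · refine (hj.le_of_sub_smul_ne_zero (hlead.mapDomain_shift hr ν) q hj').lt_of_ne fun heq => hj' ?_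
    rw [hr.injective heq]
    simp [Finsupp.mapDomain_apply (shift_injective ν), hq, mul_comm]

lemma l1norm_sub_smul_mapDomain_shift_le {b : (ι →₀ ℕ) × σ →₀ ℤ} {q : ℤ} {K : ℕ}
    (hq : q.natAbs ≤ l1norm m) (hb : l1norm b ≤ K) (ν : ι →₀ ℕ) :
    l1norm (m - q • b.mapDomain (shift ν)) ≤ (1 + K) * l1norm m :=
  calc l1norm (m - q • b.mapDomain (shift ν)) ≤ l1norm m + q.natAbs * l1norm b := by
        rw [sub_eq_add_neg, ← neg_smul, ← l1norm_mapDomain (shift_injective ν) b,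
          ← Int.natAbs_neg q]
        exact (l1norm_add_le _ _).trans (Nat.add_le_add_left (l1norm_smul_le _ _) _)
    _ ≤ l1norm m + l1norm m * K := by gcongr
    _ = (1 + K) * l1norm m := by ring

lemma IsStrongBasis.exists_shiftCombination_eq (hr : IsTermOrder r)
    (hM : ∀ ν, ∀ m ∈ M, m.mapDomain (shift ν) ∈ M) (hT : IsStrongBasis r M T) {K : ℕ}
    (hK : ∀ b ∈ T, l1norm b ≤ K) {d : ℕ} (U : Finset ((ι →₀ ℕ) × σ))
    (hU : ∀ a b, r a ≤ r b → b ∈ U → a ∈ U) (hd : ∀ j ∈ U, j.1.degree ≤ d) (hm : m ∈ M)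
    (hsupp : ∀ j, m j ≠ 0 → j ∈ U) :
    ∃ c : (ι →₀ ℕ) × T →₀ ℤ, l1norm c ≤ (2 + K) ^ U.card * l1norm m ∧ shiftCombination T c = m ∧
      ∀ p ∈ c.support, p.1.degree ≤ d := by
  classical
  induction U using Finset.strongInduction generalizing m with
  | H U ih =>
  obtain rfl | hne := eq_or_ne m 0
  · exact ⟨0, by simp, by simp, by simp⟩
  obtain ⟨j, hj⟩ := exists_isLeading r hne
  have hjU := hsupp j hj.1
  obtain ⟨b, ν, q, hν, hq, hlt⟩ := hT.exists_division_step hr hm hj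
  set V := U.filter (r · < r j)
  have hVU : V ⊂ U := Finset.filter_ssubset.2 ⟨j, hjU, lt_irrefl _⟩
  obtain ⟨c, hc, hcm, hcd⟩ := ih V hVU
    (fun a b hab hb => Finset.mem_filter.2
      ⟨hU a b hab (Finset.mem_of_mem_filter b hb), hab.trans_lt (Finset.mem_filter.1 hb).2⟩)
    (fun j' hj' => hd j' (hVU.subset hj'))
    (M.sub_mem hm (M.zsmul_mem (hM ν b.1 (hT.1 b.2)) q))
    (fun j' hj' => Finset.mem_filter.2 ⟨hU j' j (hlt j' hj').le hjU, hlt j' hj'⟩)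
  refine ⟨Finsupp.single (ν, b) q + c, ?_, ?_, fun p hp => ?_⟩
  · calc l1norm (Finsupp.single (ν, b) q + c)
        ≤ l1norm m + (2 + K) ^ V.card * ((1 + K) * l1norm m) := by
          refine (l1norm_add_le _ _).trans (add_le_add (by rwa [l1norm_single]) (hc.trans ?_))
          gcongr
          exact l1norm_sub_smul_mapDomain_shift_le hq (hK b b.2) ν
      _ ≤ (2 + K) ^ V.card * l1norm m + (2 + K) ^ V.card * ((1 + K) * l1norm m) := by
          gcongr
          exact Nat.le_mul_of_pos_left _ (by positivity)
      _ = (2 + K) ^ (V.card + 1) * l1norm m := by ring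
      _ ≤ (2 + K) ^ U.card * l1norm m := by
          gcongr
          · lia
          · exact Finset.card_lt_card hVU
  · rw [map_add, hcm, shiftCombination, Finsupp.linearCombination_single]
    abel
  · obtain hp | hp := Finset.mem_union.1 (Finsupp.support_add hp)
    · rw [Finset.mem_singleton.1 (Finsupp.support_single_subset hp)]
      exact hν.trans (hd j hjU)
    · exact hcd p hp

end Basis

lemma exists_finset_degree_le [Fintype ι] [Fintype σ] (d : ℕ) :
    ∃ U : Finset ((ι →₀ ℕ) × σ), (∀ j, j ∈ U ↔ j.1.degree ≤ d) ∧
      U.card ≤ Fintype.card σ * (d + 1) ^ Fintype.card ι := by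
  classical
  let U := (Finsupp.finite_of_degree_le (σ := ι) d).toFinset ×ˢ (Finset.univ : Finset σ)
  refine ⟨U, fun j => by simp [U], ?_⟩
  have card_le : (Finsupp.finite_of_degree_le (σ := ι) d).toFinset.card ≤
      (Fintype.piFinset fun _ : ι => Finset.range (d + 1)).card := by
    refine Finset.card_le_card_of_injOn (fun μ => ⇑μ) (fun μ hμ => ?_) DFunLike.coe_injective.injOn
    refine Fintype.mem_piFinset.2 fun i => Finset.mem_range_succ_iff.2 ?_
    exact (Finsupp.le_degree i μ).trans ((Set.Finite.mem_toFinset _).1 (Finset.mem_coe.1 hμ)).out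
  rw [Finset.card_product, Finset.card_univ, mul_comm]
  exact Nat.mul_le_mul_left _ (by simpa using card_le)

/-- Divide by a strong Gröbner basis; there is one division step per monomial of degree at most `d`,
and each multiplies the norm by a bounded factor. -/
theorem exists_finite_basis_l1norm_le [Fintype ι] [Fintype σ]
    {M : AddSubgroup ((ι →₀ ℕ) × σ →₀ ℤ)} (hM : ∀ ν, ∀ m ∈ M, m.mapDomain (shift ν) ∈ M) :
    ∃ (T : Set ((ι →₀ ℕ) × σ →₀ ℤ)) (K : ℕ), T.Finite ∧ T ⊆ M ∧ ∀ d, ∀ m ∈ M,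
      (∀ j ∈ m.support, j.1.degree ≤ d) → ∃ c : (ι →₀ ℕ) × T →₀ ℤ,
        l1norm c ≤ K ^ (Fintype.card σ * (d + 1) ^ Fintype.card ι) * l1norm m ∧
        shiftCombination T c = m ∧ ∀ p ∈ c.support, p.1.degree ≤ d := by
  obtain ⟨κ, _, r, hr⟩ := exists_isTermOrder ι σ
  obtain ⟨T, hTfin, hT⟩ := exists_isStrongBasis hr hM
  obtain ⟨K, hK⟩ := (hTfin.image l1norm).bddAbove
  refine ⟨T, 2 + K, hTfin, hT.1, fun d m hm hmd => ?_⟩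
  obtain ⟨U, hU, hcard⟩ := exists_finset_degree_le (ι := ι) (σ := σ) d
  obtain ⟨c, hc, hcm⟩ := hT.exists_shiftCombination_eq hr hM (fun b hb => hK ⟨b, hb, rfl⟩) U
    (fun a b hab hb => (hU a).2 ((hr.degree_le a b hab).trans ((hU b).1 hb)))
    (fun j hj => (hU j).1 hj) hm fun j hj => (hU j).2 (hmd j (Finsupp.mem_support_iff.2 hj))
  exact ⟨c, hc.trans (Nat.mul_le_mul_right _ (Nat.pow_le_pow_right (by lia) hcard)), hcm⟩

end Groebner

/-! ### Exponential growth rates -/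

/-- The growth rate `f d = 2 ^ O(dᵖ)`, with `d + 1` in place of `d` so that `f 0` is not
constrained. -/
def HasExpGrowth (p : ℕ) (f : ℕ → ℕ) : Prop := ∃ c, ∀ d, f d ≤ 2 ^ (c * (d + 1) ^ p)

namespace HasExpGrowth

variable {p : ℕ} {f g e : ℕ → ℕ}

lemma mono (hg : HasExpGrowth p g) (h : ∀ d, f d ≤ g d) : HasExpGrowth p f :=
  hg.imp fun _ hc d => (h d).trans (hc d)

lemma mul (hf : HasExpGrowth p f) (hg : HasExpGrowth p g) : HasExpGrowth p fun d => f d * g d := by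
  obtain ⟨a, ha⟩ := hf
  obtain ⟨b, hb⟩ := hg
  exact ⟨a + b, fun d => (Nat.mul_le_mul (ha d) (hb d)).trans_eq (by rw [← pow_add, add_mul])⟩

lemma pow (K : ℕ) {q a : ℕ} (hq : q ≤ p) (he : ∀ d, e d ≤ a * (d + 1) ^ q) :
    HasExpGrowth p fun d => K ^ e d := by
  refine ⟨K * a, fun d => ?_⟩
  calc K ^ e d ≤ (2 ^ K) ^ e d := Nat.pow_le_pow_left Nat.lt_two_pow_self.le _
    _ = 2 ^ (K * e d) := (pow_mul _ _ _).symm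
    _ ≤ 2 ^ (K * a * (d + 1) ^ p) := by
      rw [mul_assoc]
      gcongr
      · simp
      · exact (he d).trans (by gcongr; simp)

lemma const (K : ℕ) : HasExpGrowth p fun _ => K := by
  simpa using pow K (e := fun _ => 1) (a := 1) (Nat.zero_le p) (by simp)

lemma add (hf : HasExpGrowth p f) (hg : HasExpGrowth p g) : HasExpGrowth p fun d => f d + g d := by
  obtain ⟨a, ha⟩ := hf
  obtain ⟨b, hb⟩ := hg
  refine ((const 2).mul (mul ⟨a, fun _ => le_rfl⟩ ⟨b, fun _ => le_rfl⟩)).mono fun d => ?_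
  nlinarith [ha d, hb d, Nat.one_le_two_pow (n := a * (d + 1) ^ p),
    Nat.one_le_two_pow (n := b * (d + 1) ^ p)]

lemma of_le_linear {a : ℕ} (hp : p ≠ 0) (he : ∀ d, e d ≤ a * (d + 1)) : HasExpGrowth p e :=
  (pow 2 (e := e) (q := 1) (by lia) (by simpa using he)).mono fun _ => Nat.lt_two_pow_self.le

lemma comp {a : ℕ} (hf : HasExpGrowth p f) (he : ∀ d, e d + 1 ≤ a * (d + 1)) :
    HasExpGrowth p fun d => f (e d) := by
  obtain ⟨c, hc⟩ := hf
  refine ⟨c * a ^ p, fun d => (hc _).trans ?_⟩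
  rw [mul_assoc, ← mul_pow]
  gcongr
  · simp
  · exact he d

end HasExpGrowth

/-! ### The module of relations between shifted letters -/

section RelationModule

open FreeGroup (lift)

variable {F J ι σ : Type*} [Group F] {R : Set F}

/-- The abelianized relations between the elements `g j` modulo `R`: the exponent vectors of the
words in the letters `j` that represent the identity. -/
def relationModule (R : Set F) (g : J → F) : AddSubgroup (J →₀ ℤ) where
  carrier := {m | ∃ u, expVec u = m ∧ lift g u ∈ Subgroup.normalClosure R}
  zero_mem' := ⟨1, by simp, by simp⟩
  add_mem' := by
    rintro _ _ ⟨u, rfl, hu⟩ ⟨v, rfl, hv⟩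
    exact ⟨u * v, by simp, by simpa using mul_mem hu hv⟩
  neg_mem' := by
    rintro _ ⟨u, rfl, hu⟩
    exact ⟨u⁻¹, by simp, by simpa using hu⟩

lemma exists_prodLE_of_degree (deg : J → ℕ) (u : FreeGroup J) :
    ∃ d, ProdLE (FreeGroup.of '' {j | deg j ≤ d}) u d := by
  induction u using FreeGroup.induction_on with
  | C1 => exact ⟨0, .one⟩
  | of j => exact ⟨deg j + 1, (ProdLE.of_mem (Set.mem_image_of_mem _ (by simp))).mono (by simp)⟩
  | inv_of j ih => exact ih.imp fun _ h => h.inv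
  | mul u v hu hv =>
    obtain ⟨a, ha⟩ := hu
    obtain ⟨b, hb⟩ := hv
    refine ⟨a + b, (ha.mono_set ?_).mul (hb.mono_set ?_)⟩ <;>
      exact Set.image_mono fun j hj => hj.out.trans (by simp)

lemma exists_relator_word {g : J → F} (deg : J → ℕ) {T : Set (J →₀ ℤ)} (hT : T.Finite)
    (hTM : T ⊆ relationModule R g) :
    ∃ E, ∀ b : T, ∃ u, expVec u = b ∧ ProdLE (FreeGroup.of '' {j | deg j ≤ E}) u E ∧
      AreaLe R (lift g u) E := by
  have := hT.to_subtype
  choose u expVec_u lift_u using fun b : T => hTM b.2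
  choose d hd using fun b => exists_prodLE_of_degree deg (u b)
  obtain ⟨D, hD⟩ := Finite.exists_le d
  obtain ⟨N, hN⟩ := exists_forall_areaLe lift_u
  refine ⟨D + N, fun b => ⟨u b, expVec_u b, ?_, (hN b).mono (by simp)⟩⟩
  exact ((hd b).mono_set (Set.image_mono fun j hj => hj.out.trans ((hD b).trans (by simp)))).mono
    ((hD b).trans (by simp))

variable {g : (ι →₀ ℕ) × σ → F} {h : (ι →₀ ℕ) → F} {B : ℕ → ℕ} {d n a : ℕ}

/-- Conjugation by `h ν` realizes the shift by `ν` on the commuting family `g`, both up to area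
`B d` in degree at most `d`. -/
structure IsShiftSystem (R : Set F) (g : (ι →₀ ℕ) × σ → F) (h : (ι →₀ ℕ) → F) (B : ℕ → ℕ) :
    Prop where
  commArea {d : ℕ} {j j' : (ι →₀ ℕ) × σ} (hj : j.1.degree ≤ d) (hj' : j'.1.degree ≤ d) :
    CommArea R (g j) (g j') (B d)
  eqArea {d : ℕ} {ν : ι →₀ ℕ} {j : (ι →₀ ℕ) × σ} (hν : ν.degree ≤ d) (hj : j.1.degree ≤ d) :
    EqArea R (g (shift ν j)) (MulAut.conj (h ν) (g j)) (B d)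

namespace IsShiftSystem

lemma areaLe_lift_map_shift (H : IsShiftSystem R g h B) {ν : ι →₀ ℕ} (hν : ν.degree ≤ d)
    {u : FreeGroup ((ι →₀ ℕ) × σ)} (hu : ProdLE (FreeGroup.of '' {j | j.1.degree ≤ d}) u n)
    (ha : AreaLe R (lift g u) a) :
    AreaLe R (lift g (FreeGroup.map (shift ν) u)) (n * B d + a) := by
  refine EqArea.areaLe (.of_prodLE hu (φ := (lift g).comp (FreeGroup.map (shift ν)))
    (ψ := (MulAut.conj (h ν)).toMonoidHom.comp (lift g)) ?_) (ha.conj (h ν))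
  rintro _ ⟨j, hj, rfl⟩
  simpa using H.eqArea hν hj

lemma mapDomain_shift_mem (H : IsShiftSystem R g h B) (ν : ι →₀ ℕ) {m : (ι →₀ ℕ) × σ →₀ ℤ}
    (hm : m ∈ relationModule R g) : m.mapDomain (shift ν) ∈ relationModule R g := by
  obtain ⟨u, rfl, hu⟩ := hm
  obtain ⟨d, hd⟩ := exists_prodLE_of_degree (fun j => j.1.degree) u
  obtain ⟨a, ha⟩ := exists_areaLe hu
  refine ⟨FreeGroup.map (shift ν) u, expVec_map _ _, ?_⟩
  exact (H.areaLe_lift_map_shift (d := d + ν.degree) (by simp)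
    (hd.mono_set (Set.image_mono fun j hj => hj.out.trans (by simp))) ha).mem_normalClosure

variable {T : Set ((ι →₀ ℕ) × σ →₀ ℤ)} {E : ℕ}

lemma exists_word_of_shiftCombination (H : IsShiftSystem R g h B)
    (hT : ∀ b : T, ∃ u, expVec u = b ∧
      ProdLE (FreeGroup.of '' {j : (ι →₀ ℕ) × σ | j.1.degree ≤ E}) u E ∧ AreaLe R (lift g u) E)
    (c : (ι →₀ ℕ) × T →₀ ℤ) (hc : ∀ p ∈ c.support, p.1.degree ≤ d) :
    ∃ u, expVec u = shiftCombination T c ∧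
      ProdLE (FreeGroup.of '' {j : (ι →₀ ℕ) × σ | j.1.degree ≤ d + E}) u (l1norm c * E) ∧
      AreaLe R (lift g u) (l1norm c * (E * B (d + E) + E)) := by
  choose u expVec_u prodLE_u areaLe_u using hT
  obtain ⟨v, hv, rfl⟩ := exists_expVec_eq c
  refine ⟨lift (fun p => FreeGroup.map (shift p.1) (u p.2)) v, ?_, ?_, ?_⟩
  · simp [expVec_lift, expVec_map, expVec_u, shiftCombination]
  · refine hv.map_of_forall (lift _) ?_
    rintro _ ⟨p, hp, rfl⟩
    rw [FreeGroup.lift_apply_of]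
    refine (prodLE_u p.2).map (FreeGroup.map _) ?_
    rintro _ ⟨j, hj, rfl⟩
    refine ⟨shift p.1 j, ?_, by simp⟩
    simpa only [Set.mem_ofPred_eq, degree_shift] using Nat.add_le_add (hc p hp) hj
  · refine AreaLe.of_prodLE hv ((lift g).comp (lift _)) ?_
    rintro _ ⟨p, hp, rfl⟩
    rw [MonoidHom.comp_apply, FreeGroup.lift_apply_of]
    exact H.areaLe_lift_map_shift ((hc p hp).trans (by simp))
      ((prodLE_u p.2).mono_set (Set.image_mono fun j hj => hj.out.trans (by simp)))
      (areaLe_u p.2)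

/-- Modulo a bounded combination of basis relations, a relation is a word with vanishing exponents,
which is trivial by commutation alone. -/
theorem exists_areaLe [Fintype ι] [Finite σ] (H : IsShiftSystem R g h B) {p : ℕ}
    (hp : Fintype.card ι ≤ p) (hB : HasExpGrowth p B) :
    ∃ f, HasExpGrowth p f ∧ ∀ d n w, w ∈ Subgroup.normalClosure R →
      ProdLE (g '' {j | j.1.degree ≤ d}) w n → AreaLe R w (f d * n ^ 2) := by
  have := Fintype.ofFinite σ
  obtain ⟨T, K, hT, hTM, hdivision⟩ :=
    exists_finite_basis_l1norm_le fun ν _ => H.mapDomain_shift_mem ν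
  obtain ⟨E, hE⟩ := exists_relator_word (fun j => j.1.degree) hT hTM
  let k (d : ℕ) := K ^ (Fintype.card σ * (d + 1) ^ Fintype.card ι)
  refine ⟨fun d => (1 + k d * E) ^ 2 * B (d + E) + k d * (E * B (d + E) + E), ?_,
    fun d n w hw hwn => ?_⟩
  · have hk : HasExpGrowth p k := .pow K hp fun _ => le_rfl
    have hkE := (HasExpGrowth.const 1).add (hk.mul (.const E))
    have hBE : HasExpGrowth p fun d => B (d + E) := hB.comp (a := E + 1) fun d => by lia
    simp only [pow_two]
    exact ((hkE.mul hkE).mul hBE).add (hk.mul (((HasExpGrowth.const E).mul hBE).add (.const E)))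
  obtain ⟨u, hu, rfl⟩ := hwn.exists_lift_eq
  obtain ⟨c, hc, hcu, hcd⟩ := hdivision d (expVec u) ⟨u, rfl, hw⟩ 
    fun j hj => mem_of_mem_support_expVec hu hj
  obtain ⟨v, hvc, hv, areaLe_v⟩ := H.exists_word_of_shiftCombination hE c hcd
  have hcn : l1norm c ≤ k d * n := hc.trans (by gcongr; exact l1norm_expVec_le hu)
  have areaLe_mul_inv : AreaLe R (lift g (u * v⁻¹))
      ((n + l1norm c * E) * (n + l1norm c * E) * B (d + E)) := by
    refine areaLe_lift_of_expVec_eq_zero (D := {j | j.1.degree ≤ d + E})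
      (fun i hi j hj => H.commArea hi hj) ?_ (by simp [hvc, hcu])
    exact (hu.mono_set (Set.image_mono fun j hj => hj.out.trans (by simp))).mul hv.inv
  have areaLe_mul := areaLe_mul_inv.mul areaLe_v
  rw [← map_mul, inv_mul_cancel_right] at areaLe_mul
  refine areaLe_mul.mono ?_
  calc (n + l1norm c * E) * (n + l1norm c * E) * B (d + E) + l1norm c * (E * B (d + E) + E)
      ≤ (n + k d * n * E) * (n + k d * n * E) * B (d + E) + k d * n * (E * B (d + E) + E) := by
        gcongr
    _ = (1 + k d * E) ^ 2 * B (d + E) * n ^ 2 + k d * (E * B (d + E) + E) * n := by ring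
    _ ≤ (1 + k d * E) ^ 2 * B (d + E) * n ^ 2 + k d * (E * B (d + E) + E) * n ^ 2 := by
        gcongr
        exact Nat.le_self_pow two_ne_zero n
    _ = _ := (add_mul _ _ _).symm

end IsShiftSystem

end RelationModule

/-! ### Areas of words in the kernel -/

section MonomialConjugates

variable {F ι : Type*} [Group F] {Y : ι → F} {L : List ι} {Z T : Set F} {c d : ℕ}

lemma prodLE_monomialWord [Finite ι] (hL : L.Nodup) (μ : ι →₀ ℕ) :
    ProdLE (Set.range Y) (monomialWord Y L μ) μ.degree := by
  classical
  have := Fintype.ofFinite ι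
  have prodLE_sum : ProdLE (Set.range Y) (monomialWord Y L μ) (L.map μ).sum := by
    induction L with
    | nil => exact .one
    | cons i L ih =>
      rw [monomialWord_cons, List.map_cons, List.sum_cons]
      exact (ProdLE.pow (Set.mem_range_self i) _).mul (ih hL.of_cons)
  refine prodLE_sum.mono ?_
  rw [← List.sum_toFinset _ hL, Finsupp.degree_eq_sum]
  exact Finset.sum_le_sum_of_subset (Finset.subset_univ _)

lemma exists_prodLE_monomialWord [Finite ι] (hL : L.Nodup)
    (hY : ∀ i, Y i ∈ Subgroup.closure T) :
    ∃ c, ∀ μ, ProdLE T (monomialWord Y L μ) (c * μ.degree) := by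
  have := Fintype.ofFinite ι
  choose n hn using fun i => ProdLE.exists_of_mem_closure (hY i)
  obtain ⟨c, hc⟩ := Finite.exists_le n
  refine ⟨c, fun μ => mul_comm c _ ▸ (prodLE_monomialWord hL μ).map_of_forall (.id F) ?_⟩
  rintro _ ⟨i, rfl⟩
  exact (hn i).mono (hc i)

/-- The conjugate of `ζ ∈ Z` by the monomial word with exponents `μ`. -/
def monomialConjugate (Y : ι → F) (L : List ι) (Z : Set F) (j : (ι →₀ ℕ) × Z) : F :=
  MulAut.conj (monomialWord Y L j.1) j.2

lemma image_monomialConjugate :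
    monomialConjugate Y L Z '' {j | j.1.degree ≤ d} = monomialConjugates Y L Z d := by
  ext a
  constructor
  · rintro ⟨⟨μ, ζ⟩, hμ, rfl⟩
    exact ⟨ζ, ζ.2, μ, hμ, rfl⟩
  · rintro ⟨ζ, hζ, μ, hμ, rfl⟩
    exact ⟨(μ, ⟨ζ, hζ⟩), hμ, rfl⟩

variable {R : Set F} {b : ℕ → ℕ} {j j' : (ι →₀ ℕ) × Z}

lemma commArea_monomialConjugate (hc : ∀ μ, ProdLE T (monomialWord Y L μ) (c * μ.degree))
    (hcomm : ∀ n f, ProdLE T f n → ∀ s ∈ Z, ∀ s' ∈ Z, CommArea R s (MulAut.conj f s') (b n))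
    (hj : j.1.degree ≤ d) (hj' : j'.1.degree ≤ d) :
    CommArea R (monomialConjugate Y L Z j) (monomialConjugate Y L Z j') (b (2 * c * d)) := by
  have length_le : c * j.1.degree + c * j'.1.degree ≤ 2 * c * d := by
    linarith [Nat.mul_le_mul_left c hj, Nat.mul_le_mul_left c hj']
  rw [← CommArea.conj_iff (monomialWord Y L j.1)⁻¹]
  convert hcomm _ _ (((hc j.1).inv.mul (hc j'.1)).mono length_le) _ j.2.2 _ j'.2.2 using 1
  · simp [monomialConjugate, mul_assoc]
  · simp [monomialConjugate, mul_assoc]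

variable {Q : Type*} [CommGroup Q] [Finite ι] {π : F →* Q} {C p : ℕ}

lemma eqArea_monomialConjugate_shift (hL : L.Nodup) (hfull : ∀ i, i ∈ L)
    (hc : ∀ μ, ProdLE T (monomialWord Y L μ) (c * μ.degree))
    (hker : ∀ w ∈ π.ker, ∀ n, ProdLE T w n → ∀ d, C * (n + 1) ≤ d →
      ProdLE (monomialConjugates Y L Z d) w (C * (n + 1) * (d + 1)))
    (hcomm : ∀ n f, ProdLE T f n → ∀ s ∈ Z, ∀ s' ∈ Z, CommArea R s (MulAut.conj f s') (b n))
    {ν : ι →₀ ℕ} (hν : ν.degree ≤ d) (hj : j.1.degree ≤ d) {D : ℕ}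
    (hD : C * (4 * c * d + 1) ≤ D) (hdD : 2 * d ≤ D) :
    EqArea R (monomialConjugate Y L Z (shift ν j))
      (MulAut.conj (monomialWord Y L ν) (monomialConjugate Y L Z j))
      (C * (4 * c * d + 1) * (D + 1) * b (2 * c * D)) := by
  have := Fintype.ofFinite ι
  set κ := monomialWord Y L ν * monomialWord Y L j.1 * (monomialWord Y L (ν + j.1))⁻¹ with hκ
  have κ_mem : κ ∈ π.ker := by
    simp [hκ, MonoidHom.mem_ker, map_monomialWord π hL hfull, pow_add, Finset.prod_mul_distrib]
  have prodLE_κ : ProdLE T κ (4 * c * d) := by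
    refine (((hc ν).mul (hc j.1)).mul (hc (ν + j.1)).inv).mono ?_
    rw [map_add]
    nlinarith [Nat.mul_le_mul_left c hν, Nat.mul_le_mul_left c hj]
  have commArea_κ : CommArea R κ (monomialConjugate Y L Z (shift ν j))
      (C * (4 * c * d + 1) * (D + 1) * b (2 * c * D)) := by
    refine CommArea.of_prodLE_left (hker κ κ_mem _ prodLE_κ D hD) (.id F) ?_
    rw [← image_monomialConjugate]
    rintro _ ⟨i, hi, rfl⟩
    exact commArea_monomialConjugate hc hcomm hi (by rw [degree_shift]; lia)
  have conj_eq : MulAut.conj (monomialWord Y L ν) (monomialConjugate Y L Z j) =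
      MulAut.conj κ (monomialConjugate Y L Z (shift ν j)) := by
    simp [hκ, monomialConjugate, shift, mul_assoc]
  exact conj_eq ▸ (commArea_iff_eqArea.1 commArea_κ).symm

lemma exists_isShiftSystem (hL : L.Nodup) (hfull : ∀ i, i ∈ L)
    (hY : ∀ i, Y i ∈ Subgroup.closure T)
    (hker : ∀ w ∈ π.ker, ∀ n, ProdLE T w n → ∀ d, C * (n + 1) ≤ d →
      ProdLE (monomialConjugates Y L Z d) w (C * (n + 1) * (d + 1)))
    (hcomm : ∀ n f, ProdLE T f n → ∀ s ∈ Z, ∀ s' ∈ Z, CommArea R s (MulAut.conj f s') (b n))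
    (hp : p ≠ 0) (hb : HasExpGrowth p b) :
    ∃ B, HasExpGrowth p B ∧ IsShiftSystem R (monomialConjugate Y L Z) (monomialWord Y L) B := by
  obtain ⟨c, hc⟩ := exists_prodLE_monomialWord hL hY
  let D (d : ℕ) := C * (4 * c * d + 1) + 2 * d
  have D_le (d : ℕ) : D d + 1 ≤ (C * (4 * c + 1) + 3) * (d + 1) := by
    simp only [D]; nlinarith [Nat.zero_le (C * c), Nat.zero_le (C * d)]
  refine ⟨fun d => b (2 * c * d) + C * (4 * c * d + 1) * (D d + 1) * b (2 * c * D d),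
    .add (hb.comp (a := 2 * c + 1) fun d => by nlinarith) (.mul (.mul ?_ ?_) ?_), ?_, ?_⟩
  · exact .of_le_linear (a := C * (4 * c + 1)) hp fun d => by
      nlinarith [Nat.zero_le (C * c), Nat.zero_le (C * d)]
  · exact .of_le_linear hp D_le
  · exact hb.comp (a := (2 * c + 1) * (C * (4 * c + 1) + 3)) fun d => by nlinarith [D_le d]
  · exact fun hj hj' => (commArea_monomialConjugate hc hcomm hj hj').mono (by simp)
  · exact fun hν hj => (eqArea_monomialConjugate_shift hL hfull hc hker hcomm hν hj
      (Nat.le_add_right _ _) (Nat.le_add_left _ _)).mono (by simp [D])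

end MonomialConjugates

/-- The bound depends on the degree `d` of the conjugates into which `w` is decomposed; when `ι` is
empty there is only the degree `0`. -/
theorem VirtualBasis.exists_areaLe {X Q ι : Type*} [Finite X] [CommGroup Q] [Fintype ι]
    {π : FreeGroup X →* Q} {R : Set (FreeGroup X)} (B : VirtualBasis π ι) (hπ : Surjective π)
    (hR : R.Finite) (hRπ : R ⊆ π.ker) (hcomm : ⁅π.ker, π.ker⁆ ≤ Subgroup.normalClosure R) {p : ℕ}
    (hp : 2 ≤ p) (hιp : 2 * Fintype.card ι ≤ p) :
    ∃ c f, HasExpGrowth p f ∧ ∀ n d w, w ∈ Subgroup.normalClosure R →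
      ProdLE (Set.range FreeGroup.of) w n → IsEmpty ι ∨ c * (n + 1) ≤ d →
        AreaLe R w (f d * (n + 1) ^ 2) := by
  have hL : (Finset.univ : Finset (ι × Bool)).toList.Nodup := Finset.nodup_toList _
  have hfull (q : ι × Bool) : q ∈ (Finset.univ : Finset (ι × Bool)).toList := by simp
  obtain ⟨Z, C, hZ, hZπ, hker⟩ :=
    B.exists_prodLE_of_mem_ker hL hfull (Set.finite_range (FreeGroup.of (α := X)))
  have := hZ.to_subtype
  have mem_closure (w : FreeGroup X) : w ∈ Subgroup.closure (Set.range FreeGroup.of) := by simp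
  let S := Z ∪ letterCommutators (FreeGroup.of : X → FreeGroup X)
  have ker_le : π.ker ≤ conjClosure S Set.univ := fun w hw => by
    obtain ⟨n, hn⟩ := ProdLE.exists_of_mem_closure (mem_closure w)
    refine (hker w hw n hn _ (.inr le_rfl)).mem_subgroup ?_
    rintro _ ⟨ζ, hζ, μ, -, rfl⟩
    exact Subgroup.subset_closure ⟨ζ, .inl hζ, _, trivial, rfl⟩
  obtain ⟨K, hK⟩ := B.exists_commArea_pow (S := S) hπ hR (hZ.union (Set.finite_range _)) hRπ hcomm
    (Set.union_subset hZπ (letterCommutators_subset_ker π)) ker_le Set.subset_union_right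
  obtain ⟨A, hA, system⟩ := exists_isShiftSystem (Z := Z) (b := fun n => K ^ (n + 1) ^ 2) hL hfull
    (fun q => mem_closure _) (fun w hw n hn d hd => hker w hw n hn d (.inr hd))
    (fun n f hf s hs s' hs' => hK n f hf s (.inl hs) s' (.inl hs')) (by lia)
    (.pow K (a := 1) hp fun d => by simp)
  obtain ⟨f, hf, area_le⟩ := system.exists_areaLe (by simpa [mul_comm] using hιp) hA
  have linear : HasExpGrowth p fun d => C * (d + 1) := .of_le_linear (by lia) fun d => le_rfl
  refine ⟨C, fun d => f d * (C * (d + 1) * (C * (d + 1))), hf.mul (linear.mul linear), ?_⟩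
  intro n d w hw hwn hd
  have prodLE_w := hker w (Subgroup.normalClosure_le_normal hRπ hw) n hwn d hd
  rw [← image_monomialConjugate] at prodLE_w
  exact (area_le d _ w hw prodLE_w).mono (Eq.le (by ring))

/-! ### Dehn functions -/

section DehnFunction

variable {δ f : ℕ → ℕ}

lemma prodLE_of_freeNorm_le {X : Type*} {w : FreeGroup X} {n : ℕ} (h : freeNorm w ≤ n) :
    ProdLE (Set.range FreeGroup.of) w n := by
  let := Classical.decEq X
  rw [← Set.image_univ, ← FreeGroup.mk_toWord (x := w)]
  exact (prodLE_mk fun _ _ => Set.mem_univ _).mono h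

lemma dominates_sq {c : ℕ} (h : ∀ n, δ n ≤ c * (n + 1) ^ 2) : Dominates δ fun n => n ^ 2 := by
  refine ⟨2 * c + 1, by lia, fun n => (h n).trans ?_⟩
  have sq_le : n ^ 2 ≤ ((2 * c + 1) * n) ^ 2 :=
    Nat.pow_le_pow_left (Nat.le_mul_of_pos_left n (by lia)) 2
  nlinarith [Nat.mul_le_mul_left (2 * c + 1) sq_le]

lemma HasExpGrowth.dominates {p : ℕ} (hδ : HasExpGrowth p δ) (hp : p ≠ 0) :
    Dominates δ fun n => 2 ^ n ^ p := by
  obtain ⟨a, ha⟩ := hδ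
  set C := 2 * a + δ 0 + 1 with hC
  refine ⟨C, by lia, fun n => ?_⟩
  rcases n.eq_zero_or_pos with rfl | hn
  · lia
  have exponent_le : a * (n + 1) ^ p ≤ (C * n) ^ p := by
    calc a * (n + 1) ^ p ≤ a ^ p * (n + 1) ^ p := by gcongr; exact Nat.le_self_pow hp a
      _ = (a * (n + 1)) ^ p := (mul_pow _ _ _).symm
      _ ≤ (C * n) ^ p := Nat.pow_le_pow_left (by nlinarith [Nat.zero_le (δ 0 * n)]) p
  calc δ n ≤ 2 ^ (a * (n + 1) ^ p) := ha n
    _ ≤ 2 ^ (C * n) ^ p := Nat.pow_le_pow_right two_pos exponent_le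
    _ ≤ C * 2 ^ (C * n) ^ p := Nat.le_mul_of_pos_left _ (by lia)
    _ ≤ C * 2 ^ (C * n) ^ p + C * n + C := by lia

lemma IsDehnFunctionOf.exists_le {X Q : Type*} [Finite X] [CommGroup Q] {π : FreeGroup X →* Q}
    {R : Set (FreeGroup X)} (hδ : IsDehnFunctionOf R δ) (hπ : Surjective π) (hR : R.Finite)
    (hRπ : R ⊆ π.ker) (hcomm : ⁅π.ker, π.ker⁆ ≤ Subgroup.normalClosure R) {k p : ℕ}
    (hk : HasTFRank Q k) (hp : 2 ≤ p) (hkp : 2 * k ≤ p) :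
    ∃ c f, HasExpGrowth p f ∧ ∀ n d, k = 0 ∨ c * (n + 1) ≤ d → δ n ≤ f d * (n + 1) ^ 2 := by
  obtain ⟨B⟩ := exists_virtualBasis hπ hk
  obtain ⟨c, f, hf, area_le⟩ := B.exists_areaLe hπ hR hRπ hcomm hp (by simpa using hkp)
  refine ⟨c, f, hf, fun n d hd => (hδ n).2 fun w hw hn => ?_⟩
  refine area_le n d w hw (prodLE_of_freeNorm_le hn) (hd.imp_left ?_)
  rintro rfl
  infer_instance

lemma IsDehnFunctionOf.dominates {X Q : Type*} [Finite X] [CommGroup Q] {π : FreeGroup X →* Q}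
    {R : Set (FreeGroup X)} (hδ : IsDehnFunctionOf R δ) (hπ : Surjective π) (hR : R.Finite)
    (hRπ : R ⊆ π.ker) (hcomm : ⁅π.ker, π.ker⁆ ≤ Subgroup.normalClosure R) {k : ℕ}
    (hk : HasTFRank Q k) :
    (k = 0 → Dominates δ fun n => n ^ 2) ∧ (0 < k → Dominates δ fun n => 2 ^ n ^ (2 * k)) := by
  constructor <;> intro h
  · obtain ⟨c, f, -, δ_le⟩ := hδ.exists_le hπ hR hRπ hcomm hk le_rfl (by lia)
    exact dominates_sq fun n => δ_le n 0 (.inl h)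
  · obtain ⟨c, f, hf, δ_le⟩ := hδ.exists_le hπ hR hRπ hcomm hk (by lia) le_rfl
    have linear : HasExpGrowth (2 * k) fun n => n + 1 :=
      .of_le_linear (a := 1) (by lia) fun n => by simp
    refine HasExpGrowth.dominates ?_ (by lia)
    exact ((hf.comp (e := fun n => c * (n + 1)) (a := c + 1) fun n => by lia).mul
      (linear.mul linear)).mono fun n => pow_two (n + 1) ▸ δ_le n _ (.inr le_rfl)

theorem dehn_upper_bound_metabelian_general {X : Type*} [Finite X] {R : Set (FreeGroup X)}
    (hR : R.Finite) (hδ : IsDehnFunctionOf R δ)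
    {A : Subgroup (FreeGroup X ⧸ Subgroup.normalClosure R)} [A.Normal]
    (hA : ∀ x y, x ∈ A → y ∈ A → x * y = y * x) {k : ℕ} (hk : QuotientRankProp A k) :
    (k = 0 → Dominates δ fun n => n ^ 2) ∧ (0 < k → Dominates δ fun n => 2 ^ n ^ (2 * k)) := by
  let _ : CommGroup ((FreeGroup X ⧸ Subgroup.normalClosure R) ⧸ A) := { mul_comm := hk.1 }
  let ρ := QuotientGroup.mk' (Subgroup.normalClosure R)
  let π := (QuotientGroup.mk' A).comp ρ
  have hπ : Surjective π := (QuotientGroup.mk'_surjective A).comp (QuotientGroup.mk'_surjective _)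
  have ker_ρ : ρ.ker = Subgroup.normalClosure R := QuotientGroup.ker_mk' _
  have ker_π : π.ker = A.comap ρ := by rw [← MonoidHom.comap_ker, QuotientGroup.ker_mk']
  have hRπ : R ⊆ π.ker := fun r hr => by
    simp [ker_π, MonoidHom.mem_ker.1 (ker_ρ.ge (Subgroup.subset_normalClosure hr))]
  have commutator_le : ⁅π.ker, π.ker⁆ ≤ ρ.ker := by
    rw [ker_π, Subgroup.commutator_le]
    intro x hx y hy
    rw [MonoidHom.mem_ker, map_commutatorElement, commutatorElement_eq_one_iff_mul_comm]
    exact hA _ _ hx hy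
  exact hδ.dominates hπ hR hRπ (commutator_le.trans_eq ker_ρ) hk.2

end DehnFunction

/-- Upper bound for the Dehn function of a finitely presented
metabelian group in terms of the minimal torsion-free rank `k`. -/
theorem dehn_upper_bound_metabelian {X : Type} [Finite X]
    (R : Set (FreeGroup X)) (hR : R.Finite)
    (hmeta : IsMetabelian (FreeGroup X ⧸ Subgroup.normalClosure R))
    (δ : ℕ → ℕ) (hδ : IsDehnFunctionOf R δ)
    (k : ℕ) (hk : IsLeast (abelianRankSet (FreeGroup X ⧸ Subgroup.normalClosure R)) k) :
    (k = 0 → Dominates δ fun n => n ^ 2) ∧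
    (0 < k → Dominates δ fun n => 2 ^ n ^ (2 * k)) := by
  obtain ⟨A, hA, commutes, rank_eq⟩ := hk.1
  exact dehn_upper_bound_metabelian_general hR hδ commutes rank_eq
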